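/- Under Assumptions A1, A2 and A3, almost surely ∫_{ℝ^d} |q_n(x) − f(x)| dx → 0 as n → ∞; that is, the policy densities converge to the target density in total variation (L¹) almost surely. -/

import Mathlib

open MeasureTheory Filter Metric
open scoped Topology ENNReal NNReal

noncomputable def kb {d : ℕ} (K : EuclideanSpace ℝ (Fin d) → ℝ) (b : ℝ)
    (x : EuclideanSpace ℝ (Fin d)) : ℝ :=
  (b ^ d)⁻¹ * K (b⁻¹ • x)

def natFilt {Ω : Type*} {d : ℕ} (X : ℕ → Ω → EuclideanSpace ℝ (Fin d)) (n : ℕ) :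
    MeasurableSpace Ω :=
  ⨆ i ∈ Finset.Icc 1 n, MeasurableSpace.comap (X i) inferInstance

/-- Step-size schedule after an initial shift. -/
structure Sched (d : ℕ) (η : ℝ) (γ b lam : ℕ → ℝ) : Prop where
  hd : 1 ≤ d
  η0 : 0 < η
  η1 : η < 1
  gpos : ∀ n, 0 < γ n
  gle : ∀ n, γ n ≤ 1 / 2
  gstep : ∀ n, γ n * (1 - γ (n + 1)) ≤ γ (n + 1)
  g0 : Tendsto γ atTop (𝓝 0)
  bpos : ∀ n, 0 < b n
  ble : ∀ n, b n ≤ 1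
  banti : Antitone b
  b0 : Tendsto b atTop (𝓝 0)
  lpos : ∀ n, 0 < lam n
  lle : ∀ n, lam n ≤ 1 / 2
  lanti : Antitone lam
  l0 : Tendsto lam atTop (𝓝 0)
  gl : Tendsto (fun n => γ n / lam n) atTop (𝓝 0)
  gn : ∃ C > (0:ℝ), ∀ n : ℕ, 1 ≤ n → 1 ≤ C * (n * γ n)
  poly : ∃ C > (0:ℝ), ∀ n : ℕ, 1 ≤ n → 1 ≤ C * (n * (lam n * b n ^ d))
  rate1 : 1 / 2 ≤ η → Tendsto
      (fun n : ℕ => (n : ℝ) * γ n ^ 2 * Real.log n / (lam n * b n ^ d)) atTop (𝓝 0)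
  rate2 : η < 1 / 2 → Tendsto
      (fun n : ℕ => (n : ℝ) * γ n ^ 2 * Real.log n
        / (lam n ^ (2 * (1 - η)) * b n ^ (2 * (d : ℝ) * (1 - η)))) atTop (𝓝 0)

/-- Target, initial density and kernel. -/
structure Targ (d : ℕ) (f q0 K : EuclideanSpace ℝ (Fin d) → ℝ)
    (c Cf CK : ℝ) (LK : ℝ≥0) : Prop where
  f0 : ∀ x, 0 ≤ f x
  fint : Integrable f
  f1 : (∫ x, f x) = 1
  fC : ∀ x, f x ≤ Cf
  fc : Continuous f
  q00 : ∀ x, 0 ≤ q0 x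
  q0int : Integrable q0
  q01 : (∫ x, q0 x) = 1
  q0c : Continuous q0
  c0 : 0 < c
  cf : ∀ x, c * f x ≤ q0 x
  K0 : ∀ x, 0 ≤ K x
  Kint : Integrable K
  K1 : (∫ x, K x) = 1
  KC : ∀ x, K x ≤ CK
  KL : LipschitzWith LK K
  Kp : 0 < K 0

/-- Products of `1 - γ`. -/
noncomputable def pp (γ : ℕ → ℝ) (n : ℕ) : ℝ := ∏ k ∈ Finset.range n, (1 - γ (k + 1))

lemma pp_succ (γ : ℕ → ℝ) (n : ℕ) : pp γ (n + 1) = pp γ n * (1 - γ (n + 1)) := by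
  simp [pp, Finset.prod_range_succ]

lemma Sched.pp_pos {d : ℕ} {η : ℝ} {γ b lam : ℕ → ℝ} (S : Sched d η γ b lam) (n : ℕ) : 0 < pp γ n := by
  unfold pp
  apply Finset.prod_pos
  intro k _
  linarith [S.gle (k + 1)]

lemma Sched.pp_ratio {d : ℕ} {η : ℝ} {γ b lam : ℕ → ℝ} (S : Sched d η γ b lam) {k n : ℕ} (h : k ≤ n) : pp γ n * γ k ≤ γ n * pp γ k := by
  induction n, h using Nat.le_induction with
  | base => linarith [mul_comm (pp γ k) (γ k)]
  | succ n hn ih =>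
    rw [pp_succ]
    have h1 : 0 ≤ 1 - γ (n + 1) := by linarith [S.gle (n + 1)]
    have := mul_le_mul_of_nonneg_right ih h1
    have h2 := mul_le_mul_of_nonneg_right (S.gstep n) (S.pp_pos k).le
    nlinarith

lemma Sched.pp_le {d : ℕ} {η : ℝ} {γ b lam : ℕ → ℝ} (S : Sched d η γ b lam) (n : ℕ) : pp γ n ≤ (γ 0)⁻¹ * γ n := by
  have := S.pp_ratio (Nat.zero_le n)
  have h0 := S.gpos 0
  rw [inv_mul_eq_div, le_div_iff₀ h0]
  simpa [pp] using this

lemma Sched.pp_tendsto {d : ℕ} {η : ℝ} {γ b lam : ℕ → ℝ} (S : Sched d η γ b lam) : Tendsto (pp γ) atTop (𝓝 0) := by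
  refine squeeze_zero (fun n => (S.pp_pos n).le) S.pp_le ?_
  simpa using S.g0.const_mul (γ 0)⁻¹

lemma Sched.pp_anti {d : ℕ} {η : ℝ} {γ b lam : ℕ → ℝ} (S : Sched d η γ b lam) : Antitone (pp γ) := by
  apply antitone_nat_of_succ_le
  intro n
  rw [pp_succ]
  have := S.pp_pos n
  nlinarith [S.gpos (n + 1)]

lemma Sched.ppl {d : ℕ} {η : ℝ} {γ b lam : ℕ → ℝ} (S : Sched d η γ b lam) : Tendsto (fun n => pp γ n / lam n) atTop (𝓝 0) := by
  refine squeeze_zero (fun n => div_nonneg (S.pp_pos n).le (S.lpos n).le)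
    (g := fun n => (γ 0)⁻¹ * (γ n / lam n)) ?_ ?_
  · intro n
    rw [← mul_div_assoc]
    exact div_le_div_of_nonneg_right (S.pp_le n) (S.lpos n).le
  · simpa using S.gl.const_mul (γ 0)⁻¹

/-- Slower products are controlled by `pp`. -/
lemma Sched.slow {d : ℕ} {η : ℝ} {γ b lam : ℕ → ℝ} (S : Sched d η γ b lam) {θ : ℝ} (h0 : 0 < θ) (h1 : θ ≤ 1) {k n : ℕ} (h : k ≤ n) :
    ∏ j ∈ Finset.Ico k n, (1 - θ * γ (j + 1)) ≤ (pp γ n / pp γ k) ^ (θ / 2) := by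
  induction n, h using Nat.le_induction with
  | base => simp [(S.pp_pos k).ne']
  | succ n hn ih =>
    rw [Finset.prod_Ico_succ_top hn, pp_succ]
    have hg := S.gpos (n + 1)
    have hg2 := S.gle (n + 1)
    have e1 : pp γ n * (1 - γ (n + 1)) / pp γ k = (pp γ n / pp γ k) * (1 - γ (n + 1)) := by ring
    rw [e1, Real.mul_rpow (div_nonneg (S.pp_pos n).le (S.pp_pos k).le) (by linarith)]
    apply mul_le_mul ih _ (by nlinarith)
      (Real.rpow_nonneg (div_nonneg (S.pp_pos n).le (S.pp_pos k).le) _)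
    have hlog : -(2 * γ (n + 1)) ≤ Real.log (1 - γ (n + 1)) := by
      have := Real.one_sub_inv_le_log_of_pos (show (0:ℝ) < 1 - γ (n + 1) by linarith)
      refine le_trans ?_ this
      have h3 : (1 - γ (n + 1))⁻¹ ≤ 1 + 2 * γ (n + 1) := by
        rw [inv_le_iff_one_le_mul₀ (by linarith)]
        nlinarith
      linarith
    rw [Real.rpow_def_of_pos (by linarith)]
    have := Real.add_one_le_exp (Real.log (1 - γ (n + 1)) * (θ / 2))
    nlinarith


/-- noise recursion -/
noncomputable def nz (γ : ℕ → ℝ) (ξ : ℕ → ℝ) : ℕ → ℝ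
  | 0 => 0
  | n + 1 => (1 - γ (n + 1)) * nz γ ξ n + γ (n + 1) * ξ (n + 1)

/-- a recursion `a (n+1) ≤ (1-γ) a n + γ B` forces `limsup a ≤ B`. -/
lemma Sched.limsup_le {d : ℕ} {η : ℝ} {γ b lam : ℕ → ℝ} (S : Sched d η γ b lam)
    (a : ℕ → ℝ) (B : ℝ) (n0 : ℕ)
    (h : ∀ n ≥ n0, a (n + 1) ≤ (1 - γ (n + 1)) * a n + γ (n + 1) * B) (ε : ℝ) (hε : 0 < ε) :
    ∀ᶠ n in atTop, a n ≤ B + ε := by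
  have key : ∀ n ≥ n0, a n ≤ B + pp γ n * (|a n0 - B| / pp γ n0) := by
    intro n hn
    induction n, hn using Nat.le_induction with
    | base =>
      rw [mul_div_cancel₀ _ (S.pp_pos n0).ne']
      linarith [le_abs_self (a n0 - B)]
    | succ n hn ih =>
      have h1 : 0 ≤ 1 - γ (n + 1) := by linarith [S.gle (n + 1)]
      have := mul_le_mul_of_nonneg_left ih h1
      rw [pp_succ]
      linarith [h n hn]
  have ht : Tendsto (fun n => pp γ n * (|a n0 - B| / pp γ n0)) atTop (𝓝 0) := by
    simpa using S.pp_tendsto.mul_const (|a n0 - B| / pp γ n0)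
  filter_upwards [ht.eventually (gt_mem_nhds hε), eventually_ge_atTop n0] with n h1 h2
  linarith [key n h2]

/-- lower version, with the explicit `pp` error -/
lemma Sched.lower {d : ℕ} {η : ℝ} {γ b lam : ℕ → ℝ} (S : Sched d η γ b lam)
    (a : ℕ → ℝ) (B C : ℝ) (k m : ℕ) (hkm : k ≤ m) (h0 : -C ≤ a k) (hB : 0 ≤ B)
    (h : ∀ n, k ≤ n → n < m → (1 - γ (n + 1)) * a n + γ (n + 1) * B ≤ a (n + 1)) :
    B - pp γ m * ((B + C) / pp γ k) ≤ a m := by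
  induction m, hkm using Nat.le_induction with
  | base => rw [mul_div_cancel₀ _ (S.pp_pos k).ne']; linarith
  | succ n hn ih =>
    have ih := ih (fun j h1 h2 => h j h1 (by omega))
    have h1 : 0 ≤ 1 - γ (n + 1) := by linarith [S.gle (n + 1)]
    have := mul_le_mul_of_nonneg_left ih h1
    rw [pp_succ]
    linarith [h n hn (by omega)]

/-- one escape step -/
lemma escape_step {η : ℝ} (η0 : 0 < η) (η1 : η < 1) {g c4 κ ρ : ℝ} (hg : 0 < g) (hg2 : g ≤ 1 / 2)
    (hc4 : 0 < c4) (hκ : 0 < κ) (hfl : g * c4 ≤ κ ^ η) (hρ : 0 ≤ ρ) (hρ1 : ρ ≤ 1)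
    (hκρ : (c4 * (1 - ρ)) ^ (1 / η) ≤ κ) :
    (c4 * (1 - (1 - η / 2 * g) * ρ)) ^ (1 / η) ≤ (1 - g) * κ + g * (c4 * κ ^ (1 - η)) := by
  have hu : 0 < κ ^ η := Real.rpow_pos_of_pos hκ _
  have hηg : η / 2 * g ≤ 1 := by nlinarith
  have hηg0 : 0 ≤ η / 2 * g := by positivity
  have hR0 : 0 ≤ 1 - (1 - η / 2 * g) * ρ := by nlinarith
  have hR1 : 1 - (1 - η / 2 * g) * ρ ≤ 1 := by nlinarith
  have hκ1 : κ ^ (1 - η) = κ / κ ^ η := by rw [Real.rpow_sub hκ, Real.rpow_one]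
  by_cases hc : c4 ≤ κ ^ η
  · -- big case
    have hκ0 : c4 ^ (1 / η) ≤ κ := by
      calc c4 ^ (1 / η) ≤ (κ ^ η) ^ (1 / η) := Real.rpow_le_rpow hc4.le hc (by positivity)
        _ = κ := by rw [← Real.rpow_mul hκ.le, mul_one_div_cancel η0.ne', Real.rpow_one]
    have hk0pos : 0 < c4 ^ (1 / η) := Real.rpow_pos_of_pos hc4 _
    have e : c4 * (c4 ^ (1 / η)) ^ (1 - η) = c4 ^ (1 / η) := by
      rw [← Real.rpow_mul hc4.le]
      nth_rewrite 1 [← Real.rpow_one c4]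
      rw [← Real.rpow_add hc4]
      congr 1
      field_simp
      ring
    calc (c4 * (1 - (1 - η / 2 * g) * ρ)) ^ (1 / η) ≤ c4 ^ (1 / η) := by
          apply Real.rpow_le_rpow (by positivity) _ (by positivity)
          nlinarith
      _ = (1 - g) * c4 ^ (1 / η) + g * (c4 * (c4 ^ (1 / η)) ^ (1 - η)) := by rw [e]; ring
      _ ≤ _ := by
          have : (c4 ^ (1 / η)) ^ (1 - η) ≤ κ ^ (1 - η) :=
            Real.rpow_le_rpow hk0pos.le hκ0 (by linarith)
          have := mul_le_mul_of_nonneg_left this hc4.le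
          have := mul_le_mul_of_nonneg_left this hg.le
          have := mul_le_mul_of_nonneg_left hκ0 (show (0:ℝ) ≤ 1 - g by linarith)
          linarith
  · push Not at hc
    set u := κ ^ η with hudef
    set t := g * (c4 / u - 1) with ht
    have ht0 : 0 ≤ t := by
      have : 1 ≤ c4 / u := by rw [le_div_iff₀ hu]; linarith
      have : 0 ≤ c4 / u - 1 := by linarith
      positivity
    have ht1 : t ≤ 1 := by
      have : g * (c4 / u) ≤ 1 := by rw [← mul_div_assoc, div_le_one hu]; exact hfl
      rw [ht]; nlinarith
    have e1 : (1 - g) * κ + g * (c4 * κ ^ (1 - η)) = κ * (1 + t) := by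
      rw [hκ1, ht]; field_simp; ring
    have hpow : 1 + η / 2 * t ≤ (1 + t) ^ η := by
      rw [Real.rpow_def_of_pos (by linarith)]
      have h1 := Real.add_one_le_exp (Real.log (1 + t) * η)
      have h2 := Real.one_sub_inv_le_log_of_pos (show (0:ℝ) < 1 + t by linarith)
      have h3 : t / 2 ≤ 1 - (1 + t)⁻¹ := by
        have : 1 - (1 + t)⁻¹ = t / (1 + t) := by field_simp; ring
        rw [this]
        apply div_le_div_of_nonneg_left ht0 <;> linarith
      nlinarith
    have hul : c4 * (1 - ρ) ≤ u := by
      have h5 : 0 ≤ c4 * (1 - ρ) := mul_nonneg hc4.le (by linarith)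
      calc c4 * (1 - ρ) = ((c4 * (1 - ρ)) ^ (1 / η)) ^ η := by
            rw [← Real.rpow_mul h5, one_div_mul_cancel η0.ne', Real.rpow_one]
        _ ≤ u := Real.rpow_le_rpow (Real.rpow_nonneg h5 _) hκρ η0.le
    have hu' : c4 * (1 - (1 - η / 2 * g) * ρ) ≤ (κ * (1 + t)) ^ η := by
      rw [Real.mul_rpow hκ.le (by linarith)]
      calc c4 * (1 - (1 - η / 2 * g) * ρ) ≤ u * (1 + η / 2 * t) := by
            have : u * t = g * (c4 - u) := by rw [ht]; field_simp
            have h6 : u * (1 + η / 2 * t) = u + η / 2 * (g * (c4 - u)) := by rw [← this]; ring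
            rw [h6]; nlinarith
        _ ≤ _ := mul_le_mul_of_nonneg_left hpow hu.le
    rw [e1]
    calc _ ≤ ((κ * (1 + t)) ^ η) ^ (1 / η) :=
          Real.rpow_le_rpow (by positivity) hu' (by positivity)
      _ = κ * (1 + t) := by
          rw [← Real.rpow_mul (by positivity), mul_one_div_cancel η0.ne', Real.rpow_one]


section kernel
variable {d : ℕ}

lemma Targ.kb_nonneg {f q0 K : EuclideanSpace ℝ (Fin d) → ℝ} {c Cf CK : ℝ} {LK : ℝ≥0}
    (T : Targ d f q0 K c Cf CK LK) {b : ℝ} (hb : 0 < b) (x : EuclideanSpace ℝ (Fin d)) :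
    0 ≤ kb K b x := by
  unfold kb
  exact mul_nonneg (by positivity) (T.K0 _)

lemma Targ.kb_le {f q0 K : EuclideanSpace ℝ (Fin d) → ℝ} {c Cf CK : ℝ} {LK : ℝ≥0}
    (T : Targ d f q0 K c Cf CK LK) {b : ℝ} (hb : 0 < b) (x : EuclideanSpace ℝ (Fin d)) :
    kb K b x ≤ CK * (b ^ d)⁻¹ := by
  unfold kb
  rw [mul_comm CK]
  exact mul_le_mul_of_nonneg_left (T.KC _) (by positivity)

lemma Targ.CK0 {f q0 K : EuclideanSpace ℝ (Fin d) → ℝ} {c Cf CK : ℝ} {LK : ℝ≥0}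
    (T : Targ d f q0 K c Cf CK LK) : 0 < CK := T.Kp.trans_le (T.KC 0)

lemma Targ.kb_cont {f q0 K : EuclideanSpace ℝ (Fin d) → ℝ} {c Cf CK : ℝ} {LK : ℝ≥0}
    (T : Targ d f q0 K c Cf CK LK) (b : ℝ) : Continuous (kb K b) := by
  unfold kb
  have := T.KL.continuous
  fun_prop

lemma Targ.kb_lip {f q0 K : EuclideanSpace ℝ (Fin d) → ℝ} {c Cf CK : ℝ} {LK : ℝ≥0}
    (T : Targ d f q0 K c Cf CK LK) {b : ℝ} (hb : 0 < b) (x y : EuclideanSpace ℝ (Fin d)) :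
    |kb K b x - kb K b y| ≤ LK * (b ^ d)⁻¹ * b⁻¹ * ‖x - y‖ := by
  unfold kb
  rw [← mul_sub, abs_mul, abs_of_pos (show 0 < (b ^ d)⁻¹ by positivity)]
  have := T.KL.dist_le_mul (b⁻¹ • x) (b⁻¹ • y)
  rw [Real.dist_eq, dist_eq_norm, ← smul_sub, norm_smul, Real.norm_of_nonneg (by positivity)] at this
  calc _ ≤ (b ^ d)⁻¹ * (LK * (b⁻¹ * ‖x - y‖)) := mul_le_mul_of_nonneg_left this (by positivity)
    _ = _ := by ring

lemma kb_integral (h : EuclideanSpace ℝ (Fin d) → ℝ) {b : ℝ} (hb : 0 < b) :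
    ∫ x, kb h b x = ∫ x, h x := by
  unfold kb
  rw [integral_const_mul, Measure.integral_comp_inv_smul_of_nonneg _ _ hb.le]
  rw [finrank_euclideanSpace_fin, smul_eq_mul, ← mul_assoc, inv_mul_cancel₀ (by positivity), one_mul]

lemma kb_integrable {h : EuclideanSpace ℝ (Fin d) → ℝ} (hh : Integrable h) {b : ℝ} (hb : 0 < b) :
    Integrable (kb h b) := by
  unfold kb
  exact (hh.comp_smul (inv_ne_zero hb.ne')).const_mul _

lemma kb_integrable' {h : EuclideanSpace ℝ (Fin d) → ℝ} (hh : Integrable h) {b : ℝ} (hb : 0 < b)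
    (x : EuclideanSpace ℝ (Fin d)) : Integrable (fun y => kb h b (x - y)) :=
  (kb_integrable hh hb).comp_sub_left x

lemma kb_integral' (h : EuclideanSpace ℝ (Fin d) → ℝ) {b : ℝ} (hb : 0 < b)
    (x : EuclideanSpace ℝ (Fin d)) : ∫ y, kb h b (x - y) = ∫ y, h y := by
  rw [← kb_integral h hb]
  exact integral_sub_left_eq_self (kb h b) volume x

lemma Targ.ball_lower {f q0 K : EuclideanSpace ℝ (Fin d) → ℝ} {c Cf CK : ℝ} {LK : ℝ≥0}
    (T : Targ d f q0 K c Cf CK LK) : ∃ cK > (0:ℝ), ∃ s0 > (0:ℝ), ∀ b : ℝ, 0 < b →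
      ∀ (x0 : EuclideanSpace ℝ (Fin d)) (r : ℝ), 0 < r → s0 * b ≤ r →
      ∀ x ∈ closedBall x0 r, cK ≤ ∫ y in closedBall x0 r, kb K b (x - y) := by
  have hK := T.Kp
  set s0 : ℝ := K 0 / (2 * (LK + 1)) with hs0
  have hs0p : 0 < s0 := by positivity
  have hKlow : ∀ z, ‖z‖ ≤ s0 → K 0 / 2 ≤ K z := by
    intro z hz
    have h1 := T.KL.dist_le_mul z 0
    rw [Real.dist_eq, dist_zero_right] at h1
    have h2 : (LK : ℝ) * ‖z‖ ≤ K 0 / 2 := by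
      calc (LK : ℝ) * ‖z‖ ≤ (LK + 1) * s0 := by
            apply mul_le_mul (by linarith) hz (norm_nonneg _) (by positivity)
        _ = K 0 / 2 := by rw [hs0]; field_simp
    linarith [neg_abs_le (K z - K 0)]
  set v : ℝ := volume.real (ball (0 : EuclideanSpace ℝ (Fin d)) (s0 / 2)) with hv
  have hvp : 0 < v := by
    rw [hv, Measure.real]
    exact ENNReal.toReal_pos (measure_ball_pos _ _ (by positivity)).ne' measure_ball_lt_top.ne
  refine ⟨K 0 / 2 * v, by positivity, s0, hs0p, ?_⟩
  intro b hb x0 r hr hbr x hx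
  set t : ℝ := s0 * b / (2 * r) with ht
  have ht0 : 0 < t := by positivity
  have ht1 : t ≤ 1 := by rw [ht, div_le_one (by positivity)]; linarith
  have htr : t * r = s0 * b / 2 := by rw [ht]; field_simp
  set z := x + t • (x0 - x) with hz
  rw [mem_closedBall, dist_eq_norm] at hx
  have hzx : ‖z - x‖ ≤ s0 * b / 2 := by
    have : z - x = t • (x0 - x) := by rw [hz]; abel
    rw [this, norm_smul, Real.norm_of_nonneg ht0.le, norm_sub_rev, ← htr]
    exact mul_le_mul_of_nonneg_left hx ht0.le
  have hzx0 : ‖z - x0‖ ≤ r - s0 * b / 2 := by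
    have : z - x0 = (1 - t) • (x - x0) := by rw [hz]; module
    rw [this, norm_smul, Real.norm_of_nonneg (by linarith), ← htr]
    nlinarith
  have hsub : ball z (b * (s0 / 2)) ⊆ closedBall x0 r := by
    intro y hy
    rw [mem_ball, dist_eq_norm] at hy
    rw [mem_closedBall, dist_eq_norm]
    calc ‖y - x0‖ ≤ ‖y - z‖ + ‖z - x0‖ := norm_sub_le_norm_sub_add_norm_sub _ _ _
      _ ≤ r := by linarith
  have hi := (kb_integrable' T.Kint hb x)
  calc K 0 / 2 * v = ∫ y in ball z (b * (s0 / 2)), (b ^ d)⁻¹ * (K 0 / 2) := by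
        rw [setIntegral_const, smul_eq_mul, Measure.real, Measure.addHaar_ball_mul_of_pos _ _ hb]
        rw [finrank_euclideanSpace_fin, ENNReal.toReal_mul, ENNReal.toReal_ofReal (by positivity)]
        change _ = b ^ d * v * _
        field_simp
    _ ≤ ∫ y in ball z (b * (s0 / 2)), kb K b (x - y) := by
        apply setIntegral_mono_on (integrableOn_const measure_ball_lt_top.ne) hi.integrableOn measurableSet_ball
        intro y hy
        unfold kb
        apply mul_le_mul_of_nonneg_left _ (by positivity)
        apply hKlow
        rw [norm_smul, Real.norm_of_nonneg (by positivity), inv_mul_le_iff₀ hb]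
        rw [mem_ball, dist_eq_norm] at hy
        rw [norm_sub_rev]
        calc ‖y - x‖ ≤ ‖y - z‖ + ‖z - x‖ := norm_sub_le_norm_sub_add_norm_sub _ _ _
          _ ≤ _ := by linarith
    _ ≤ _ := setIntegral_mono_set hi.integrableOn
        (Eventually.of_forall fun y => T.kb_nonneg hb _) (LE.le.eventuallyLE hsub)

lemma Targ.conc {f q0 K : EuclideanSpace ℝ (Fin d) → ℝ} {c Cf CK : ℝ} {LK : ℝ≥0}
    (T : Targ d f q0 K c Cf CK LK) {b : ℕ → ℝ} (hb : ∀ n, 0 < b n) (hb0 : Tendsto b atTop (𝓝 0))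
    {r : ℝ} (hr : 0 < r) {ε : ℝ} (hε : 0 < ε) :
    ∀ᶠ n in atTop, ∀ x : EuclideanSpace ℝ (Fin d),
      1 - ε ≤ ∫ y in closedBall x r, kb K (b n) (x - y) := by
  have key : ∀ n, ∀ x : EuclideanSpace ℝ (Fin d), ∫ y in closedBall x r, kb K (b n) (x - y)
      = ∫ y, (closedBall 0 (r / b n)).indicator K y := by
    intro n x
    rw [← integral_indicator measurableSet_closedBall,
      ← kb_integral' (Set.indicator (closedBall 0 (r / b n)) K) (hb n) x]
    congr 1
    ext y
    unfold kb
    have : y ∈ closedBall x r ↔ (b n)⁻¹ • (x - y) ∈ closedBall (0 : EuclideanSpace ℝ (Fin d)) (r / b n) := by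
      rw [mem_closedBall, dist_eq_norm, mem_closedBall, dist_zero_right, norm_smul,
        Real.norm_of_nonneg (by have := hb n; positivity), norm_sub_rev, inv_mul_eq_div,
        div_le_div_iff_of_pos_right (hb n)]
    by_cases h : y ∈ closedBall x r
    · rw [Set.indicator_of_mem h, Set.indicator_of_mem (this.1 h)]
    · rw [Set.indicator_of_notMem h, Set.indicator_of_notMem (fun h' => h (this.2 h'))]; simp
  have hlim : Tendsto (fun n => ∫ y, (closedBall (0 : EuclideanSpace ℝ (Fin d)) (r / b n)).indicator K y)
      atTop (𝓝 (∫ y, K y)) := by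
    apply tendsto_integral_of_dominated_convergence K
    · intro n
      exact T.Kint.aestronglyMeasurable.indicator measurableSet_closedBall
    · exact T.Kint
    · intro n
      refine Eventually.of_forall fun y => ?_
      by_cases h : y ∈ closedBall (0 : EuclideanSpace ℝ (Fin d)) (r / b n)
      · rw [Set.indicator_of_mem h, Real.norm_of_nonneg (T.K0 y)]
      · rw [Set.indicator_of_notMem h]; simpa using T.K0 y
    · refine Eventually.of_forall fun y => ?_
      apply tendsto_const_nhds.congr'
      have h1 : ∀ᶠ n in atTop, b n < r / (‖y‖ + 1) := hb0.eventually (gt_mem_nhds (by positivity))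
      filter_upwards [h1] with n hn
      rw [Set.indicator_of_mem]
      rw [mem_closedBall, dist_zero_right, le_div_iff₀ (hb n)]
      rw [lt_div_iff₀ (by positivity)] at hn
      nlinarith [hb n]
  rw [T.K1] at hlim
  filter_upwards [hlim.eventually (lt_mem_nhds (show 1 - ε < 1 by linarith))] with n hn x
  rw [key]
  exact hn.le

end kernel

/-- truncated importance integrand -/
noncomputable def phi {d : ℕ} (f : EuclideanSpace ℝ (Fin d) → ℝ) (η a : ℝ)
    (q : EuclideanSpace ℝ (Fin d) → ℝ) (y : EuclideanSpace ℝ (Fin d)) : ℝ :=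
  (min (f y / q y) a) ^ η * q y

section phi
variable {d : ℕ} {f q : EuclideanSpace ℝ (Fin d) → ℝ} {η a : ℝ}

lemma phi_nonneg (hf : ∀ x, 0 ≤ f x) (hq : ∀ x, 0 ≤ q x) (ha : 0 ≤ a)
    (y : EuclideanSpace ℝ (Fin d)) : 0 ≤ phi f η a q y := by
  unfold phi
  exact mul_nonneg (Real.rpow_nonneg (le_min (div_nonneg (hf y) (hq y)) ha) _) (hq y)

lemma young {η u v : ℝ} (h0 : 0 < η) (h1 : η < 1) (hu : 0 ≤ u) (hv : 0 ≤ v) :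
    u ^ η * v ^ (1 - η) ≤ η * u + (1 - η) * v :=
  Real.geom_mean_le_arith_mean2_weighted h0.le (by linarith) hu hv (by ring)

lemma div_rpow_mul {η u v : ℝ} (hu : 0 ≤ u) (hv : 0 < v) :
    (u / v) ^ η * v = u ^ η * v ^ (1 - η) := by
  rw [Real.div_rpow hu hv.le, Real.rpow_sub hv, Real.rpow_one]
  ring

lemma phi_le (h0 : 0 < η) (h1 : η < 1) (hf : ∀ x, 0 ≤ f x) (hq : ∀ x, 0 ≤ q x) (ha : 0 ≤ a)
    (y : EuclideanSpace ℝ (Fin d)) : phi f η a q y ≤ η * f y + (1 - η) * q y := by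
  unfold phi
  rcases (hq y).eq_or_lt with h | h
  · rw [← h]; simp; exact mul_nonneg h0.le (hf y)
  · calc _ ≤ (f y / q y) ^ η * q y := by
          apply mul_le_mul_of_nonneg_right _ h.le
          exact Real.rpow_le_rpow (le_min (div_nonneg (hf y) h.le) ha) (min_le_left _ _) h0.le
      _ ≤ _ := by rw [div_rpow_mul (hf y) h]; exact young h0 h1 (hf y) h.le

lemma phi_eq (hq : 0 < q y) (hf : 0 ≤ f y) (h : f y ≤ a * q y) :
    phi f η a q y = f y ^ η * q y ^ (1 - η) := by
  unfold phi
  rw [min_eq_left ((div_le_iff₀ hq).2 h), div_rpow_mul hf hq]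

lemma phi_meas (hf : Measurable f) (hq : Measurable q) : Measurable (phi f η a q) := by
  unfold phi
  fun_prop

lemma phi_int (h0 : 0 < η) (h1 : η < 1) (hf : ∀ x, 0 ≤ f x) (hq : ∀ x, 0 ≤ q x) (ha : 0 ≤ a)
    (hfm : Measurable f) (hqm : Measurable q) (hfi : Integrable f) (hqi : Integrable q) :
    Integrable (phi f η a q) := by
  refine Integrable.mono' ((hfi.const_mul η).add (hqi.const_mul (1 - η)))
    (phi_meas hfm hqm).aestronglyMeasurable (Eventually.of_forall fun y => ?_)
  rw [Real.norm_of_nonneg (phi_nonneg hf hq ha y)]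
  exact phi_le h0 h1 hf hq ha y

lemma phi_int_le (h0 : 0 < η) (h1 : η < 1) (hf : ∀ x, 0 ≤ f x) (hq : ∀ x, 0 ≤ q x) (ha : 0 ≤ a)
    (hfm : Measurable f) (hqm : Measurable q) (hfi : Integrable f) (hqi : Integrable q)
    (hf1 : ∫ x, f x = 1) (hq1 : ∫ x, q x = 1) : ∫ y, phi f η a q y ≤ 1 := by
  calc ∫ y, phi f η a q y ≤ ∫ y, (η * f y + (1 - η) * q y) :=
        integral_mono (phi_int h0 h1 hf hq ha hfm hqm hfi hqi)
          ((hfi.const_mul η).add (hqi.const_mul (1 - η))) (phi_le h0 h1 hf hq ha)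
    _ = 1 := by
        rw [integral_add (hfi.const_mul η) (hqi.const_mul (1 - η)), integral_const_mul,
          integral_const_mul, hf1, hq1]; ring

lemma Targ.kphi_int {f q0 K : EuclideanSpace ℝ (Fin d) → ℝ} {c Cf CK : ℝ} {LK : ℝ≥0}
    (T : Targ d f q0 K c Cf CK LK) {b : ℝ} (hb : 0 < b) (x : EuclideanSpace ℝ (Fin d))
    {φ : EuclideanSpace ℝ (Fin d) → ℝ} (hφ : Integrable φ) :
    Integrable fun y => kb K b (x - y) * φ y := by
  refine hφ.bdd_mul (c := CK * (b ^ d)⁻¹) ?_ (Eventually.of_forall fun y => ?_)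
  · exact ((T.kb_cont b).comp (by fun_prop : Continuous fun y => x - y)).aestronglyMeasurable
  · rw [Real.norm_of_nonneg (T.kb_nonneg hb _)]; exact T.kb_le hb _

end phi


/-- noise part of `g` -/
noncomputable def Mn {d : ℕ} (η : ℝ) (γ b lam : ℕ → ℝ) (f K : EuclideanSpace ℝ (Fin d) → ℝ) (A : ℝ)
    (X : ℕ → EuclideanSpace ℝ (Fin d)) (w : ℕ → ℝ) (q : ℕ → EuclideanSpace ℝ (Fin d) → ℝ)
    (n : ℕ) (x : EuclideanSpace ℝ (Fin d)) : ℝ :=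
  nz γ (fun k => (min (w k) (A / lam k)) ^ η * kb K (b k) (x - X k)
    - ∫ y, kb K (b k) (x - y) * phi f η (A / lam k) (q (k - 1)) y) n

/-- noise part of the normalisation -/
noncomputable def Sn {d : ℕ} (η : ℝ) (γ lam : ℕ → ℝ) (f : EuclideanSpace ℝ (Fin d) → ℝ) (A : ℝ)
    (w : ℕ → ℝ) (q : ℕ → EuclideanSpace ℝ (Fin d) → ℝ) (n : ℕ) : ℝ :=
  nz γ (fun k => (min (w k) (A / lam k)) ^ η - ∫ y, phi f η (A / lam k) (q (k - 1)) y) n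

/-- everything we use about a trajectory -/
structure Traj {d : ℕ} (η : ℝ) (γ b lam : ℕ → ℝ) (f q0 K : EuclideanSpace ℝ (Fin d) → ℝ) (c : ℝ)
    (X : ℕ → EuclideanSpace ℝ (Fin d)) (w : ℕ → ℝ) (g q : ℕ → EuclideanSpace ℝ (Fin d) → ℝ) :
    Prop where
  hw : ∀ n, w (n + 1) = f (X (n + 1)) / q n (X (n + 1))
  hg : ∀ n x, g (n + 1) x = (1 - γ (n + 1)) * g n x
        + γ (n + 1) * w (n + 1) ^ η * kb K (b (n + 1)) (x - X (n + 1))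
  hq : ∀ n x, q n x = (1 - lam n) * (g n x / (∫ y, g n y)) + lam n * q0 x
  qnn : ∀ n x, 0 ≤ q n x
  q1 : ∀ n, ∫ x, q n x = 1
  gint : ∀ n, Integrable (g n)
  gcont : ∀ n, Continuous (g n)
  P1 : ∀ n, (∀ x, 0 < f x → g n x / (∫ y, g n y) ≤ 0) → ∀ x, 0 ≤ g n x / (∫ y, g n y)
  P2 : ¬ ∃ n0, ∀ n ≥ n0, (∀ x, lam n * q0 x ≤ q n x) ∧ w (n + 1) < 1 / 2
  hM : ∀ R : ℕ, ∀ δ > (0:ℝ), ∀ᶠ n in atTop, ∀ x, ‖x‖ ≤ R →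
    |Mn η γ b lam f K (2 / c) X w q n x| ≤ δ * lam n ^ (1 - η)
  hS : Tendsto (Sn η γ lam f (2 / c) w q) atTop (𝓝 0)

section det
variable {d : ℕ} {η : ℝ} {γ b lam : ℕ → ℝ} {f q0 K : EuclideanSpace ℝ (Fin d) → ℝ}
  {c Cf CK : ℝ} {LK : ℝ≥0}
  {X : ℕ → EuclideanSpace ℝ (Fin d)} {w : ℕ → ℝ} {g q : ℕ → EuclideanSpace ℝ (Fin d) → ℝ}

lemma Traj.w0 (P : Traj η γ b lam f q0 K c X w g q) (T : Targ d f q0 K c Cf CK LK) (n : ℕ) :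
    0 ≤ w (n + 1) := by
  rw [P.hw]; exact div_nonneg (T.f0 _) (P.qnn _ _)

lemma Traj.qint (P : Traj η γ b lam f q0 K c X w g q) (T : Targ d f q0 K c Cf CK LK) (n : ℕ) :
    Integrable (q n) := by
  have : q n = fun x => (1 - lam n) * (g n x / (∫ y, g n y)) + lam n * q0 x := by
    ext x; exact P.hq n x
  rw [this]
  exact (((P.gint n).div_const _).const_mul _).add (T.q0int.const_mul _)

lemma Traj.qcont (P : Traj η γ b lam f q0 K c X w g q) (T : Targ d f q0 K c Cf CK LK) (n : ℕ) :
    Continuous (q n) := by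
  have : q n = fun x => (1 - lam n) * (g n x / (∫ y, g n y)) + lam n * q0 x := by
    ext x; exact P.hq n x
  rw [this]
  have := P.gcont n
  have := T.q0c
  fun_prop

lemma Traj.Gne (S : Sched d η γ b lam) (P : Traj η γ b lam f q0 K c X w g q)
    (T : Targ d f q0 K c Cf CK LK) (n : ℕ) : (∫ y, g n y) ≠ 0 := by
  intro h
  have h1 := P.q1 n
  have : q n = fun x => lam n * q0 x := by
    ext x; rw [P.hq n x, h]; simp
  rw [this, integral_const_mul, T.q01] at h1
  linarith [S.lle n]

lemma Traj.Grec (S : Sched d η γ b lam) (P : Traj η γ b lam f q0 K c X w g q)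
    (T : Targ d f q0 K c Cf CK LK) (n : ℕ) :
    ∫ y, g (n + 1) y = (1 - γ (n + 1)) * (∫ y, g n y) + γ (n + 1) * w (n + 1) ^ η := by
  have : g (n + 1) = fun x => (1 - γ (n + 1)) * g n x
        + γ (n + 1) * w (n + 1) ^ η * kb K (b (n + 1)) (x - X (n + 1)) := by
    ext x; exact P.hg n x
  rw [this, integral_add ((P.gint n).const_mul _)
    (((kb_integrable T.Kint (S.bpos _)).comp_sub_right _).const_mul _), integral_const_mul,
    integral_const_mul, integral_sub_right_eq_self (kb K (b (n + 1))) (X (n + 1)),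
    kb_integral _ (S.bpos _), T.K1, mul_one]

lemma Sched.A0 (S : Sched d η γ b lam) (T : Targ d f q0 K c Cf CK LK) (n : ℕ) :
    0 ≤ 2 / c / lam n := by
  have := T.c0
  have := S.lpos n
  positivity

lemma Traj.phi0 (S : Sched d η γ b lam) (P : Traj η γ b lam f q0 K c X w g q)
    (T : Targ d f q0 K c Cf CK LK) (k n : ℕ) (y : EuclideanSpace ℝ (Fin d)) :
    0 ≤ phi f η (2 / c / lam k) (q n) y :=
  phi_nonneg T.f0 (P.qnn n) (S.A0 T k) y

lemma Traj.phii (S : Sched d η γ b lam) (P : Traj η γ b lam f q0 K c X w g q)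
    (T : Targ d f q0 K c Cf CK LK) (k n : ℕ) :
    Integrable (phi f η (2 / c / lam k) (q n)) :=
  phi_int S.η0 S.η1 T.f0 (P.qnn n) (S.A0 T k) T.fc.measurable (P.qcont T n).measurable T.fint
    (P.qint T n)

lemma Traj.Mrec (S : Sched d η γ b lam) (P : Traj η γ b lam f q0 K c X w g q)
    (T : Targ d f q0 K c Cf CK LK) (n : ℕ) (x : EuclideanSpace ℝ (Fin d)) :
    (1 - γ (n + 1)) * (g n x - Mn η γ b lam f K (2 / c) X w q n x)
      + γ (n + 1) * (∫ y, kb K (b (n + 1)) (x - y) * phi f η (2 / c / lam (n + 1)) (q n) y)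
      ≤ g (n + 1) x - Mn η γ b lam f K (2 / c) X w q (n + 1) x := by
  have e : Mn η γ b lam f K (2 / c) X w q (n + 1) x
    = (1 - γ (n + 1)) * Mn η γ b lam f K (2 / c) X w q n x + γ (n + 1) *
      ((min (w (n + 1)) (2 / c / lam (n + 1))) ^ η * kb K (b (n + 1)) (x - X (n + 1))
    - ∫ y, kb K (b (n + 1)) (x - y) * phi f η (2 / c / lam (n + 1)) (q n) y) := by
    simp [Mn, nz]
  rw [e, P.hg]
  have h1 : (min (w (n + 1)) (2 / c / lam (n + 1))) ^ η ≤ w (n + 1) ^ η :=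
    Real.rpow_le_rpow (le_min (P.w0 T n) (S.A0 T _)) (min_le_left _ _) S.η0.le
  have h2 := mul_le_mul_of_nonneg_right h1 (T.kb_nonneg (S.bpos (n + 1)) (x - X (n + 1)))
  have h3 := mul_le_mul_of_nonneg_left h2 (S.gpos (n + 1)).le
  linarith

/-- persistence of lower bounds -/
lemma Traj.gpers (S : Sched d η γ b lam) (P : Traj η γ b lam f q0 K c X w g q)
    (T : Targ d f q0 K c Cf CK LK) {k n : ℕ} (h : k ≤ n) (x : EuclideanSpace ℝ (Fin d)) :
    pp γ n / pp γ k * g k x ≤ g n x := by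
  induction n, h using Nat.le_induction with
  | base => rw [div_self (S.pp_pos k).ne', one_mul]
  | succ n hn ih =>
    rw [pp_succ, P.hg]
    have h1 : 0 ≤ 1 - γ (n + 1) := by linarith [S.gle (n + 1)]
    have h2 := mul_le_mul_of_nonneg_left ih h1
    have h3 : 0 ≤ γ (n + 1) * w (n + 1) ^ η * kb K (b (n + 1)) (x - X (n + 1)) :=
      mul_nonneg (mul_nonneg (S.gpos _).le (Real.rpow_nonneg (P.w0 T n) _))
        (T.kb_nonneg (S.bpos _) _)
    calc _ = (1 - γ (n + 1)) * (pp γ n / pp γ k * g k x) := by ring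
      _ ≤ _ := by linarith

lemma Traj.Gpers (S : Sched d η γ b lam) (P : Traj η γ b lam f q0 K c X w g q)
    (T : Targ d f q0 K c Cf CK LK) {k n : ℕ} (h : k ≤ n) :
    pp γ n / pp γ k * (∫ y, g k y) ≤ ∫ y, g n y := by
  rw [← integral_const_mul]
  exact integral_mono ((P.gint k).const_mul _) (P.gint n) (P.gpers S T h)

lemma Traj.D2 (S : Sched d η γ b lam) (P : Traj η γ b lam f q0 K c X w g q)
    (T : Targ d f q0 K c Cf CK LK) : ∃ n0, ∀ n ≥ n0, 0 < ∫ y, g n y := by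
  by_contra hcon
  push Not at hcon
  have hneg : ∀ n, (∫ y, g n y) < 0 := by
    intro n
    refine lt_of_le_of_ne ?_ (P.Gne S T n)
    by_contra h
    push Not at h
    obtain ⟨m, hm, hm2⟩ := hcon n
    have := P.Gpers S T hm
    have h2 : 0 < pp γ m / pp γ n * (∫ y, g n y) :=
      mul_pos (div_pos (S.pp_pos _) (S.pp_pos _)) h
    linarith
  set H : ℕ → ℝ := fun n => (∫ y, g n y) / pp γ n with hH
  have hHmono : Monotone H := by
    intro k n h
    have := P.Gpers S T h
    simp only [hH]
    rw [le_div_iff₀ (S.pp_pos n)]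
    calc _ = pp γ n / pp γ k * (∫ y, g k y) := by ring
      _ ≤ _ := this
  have hHb : ∀ n, H n ≤ 0 := fun n => div_nonpos_of_nonpos_of_nonneg (hneg n).le (S.pp_pos n).le
  obtain ⟨l, hl⟩ : ∃ l, Tendsto H atTop (𝓝 l) :=
    ⟨_, tendsto_atTop_ciSup hHmono ⟨0, by rintro _ ⟨n, rfl⟩; exact hHb n⟩⟩
  have hdiff : Tendsto (fun n => H (n + 1) - H n) atTop (𝓝 0) := by
    simpa using (hl.comp (tendsto_add_atTop_nat 1)).sub hl
  have hwle : ∀ n, γ 0 * w (n + 1) ^ η ≤ H (n + 1) - H n := by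
    intro n
    have h1 : H (n + 1) - H n = γ (n + 1) * w (n + 1) ^ η / pp γ (n + 1) := by
      simp only [hH]
      rw [P.Grec S T, pp_succ]
      have h2 := (S.pp_pos n).ne'
      have h3 : (1 - γ (n + 1)) ≠ 0 := by linarith [S.gle (n + 1)]
      field_simp
      ring
    rw [h1, le_div_iff₀ (S.pp_pos _)]
    have h4 := S.pp_ratio (Nat.zero_le (n + 1))
    have h5 : pp γ 0 = 1 := by simp [pp]
    rw [h5] at h4
    have := mul_le_mul_of_nonneg_right h4 (Real.rpow_nonneg (P.w0 T n) η)
    linarith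
  have hev : ∀ᶠ n in atTop, w (n + 1) < 1 / 2 := by
    have hp : 0 < γ 0 * (1 / 2 : ℝ) ^ η := mul_pos (S.gpos 0) (by positivity)
    filter_upwards [hdiff.eventually (gt_mem_nhds hp)] with n hn
    by_contra hc
    push Not at hc
    have := Real.rpow_le_rpow (by norm_num) hc S.η0.le
    have := mul_le_mul_of_nonneg_left this (S.gpos 0).le
    linarith [hwle n]
  have hg0 : ∀ n x, g n x ≤ 0 := by
    intro n x
    have hub : ∀ m ≥ n, g n x / pp γ n ≤ 2 * lam m * q0 x * (-H n) := by
      intro m hm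
      have h1 := P.gpers S T hm x
      have h2 := P.qnn m x
      rw [P.hq] at h2
      have hGm := hneg m
      have h3 : g m x ≤ 2 * lam m * q0 x * (-(∫ y, g m y)) := by
        have hl2 := S.lle m
        have hl0 := S.lpos m
        have hq := T.q00 x
        by_contra hc
        push Not at hc
        have h5 : 0 ≤ 2 * lam m * q0 x * (-(∫ y, g m y)) := by
          have : 0 ≤ -(∫ y, g m y) := by linarith
          positivity
        have h6 : g m x / (∫ y, g m y) < - (2 * lam m * q0 x) := by
          rw [div_lt_iff_of_neg hGm]; linarith
        have h7 : 0 ≤ 2 * lam m * q0 x := by positivity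
        nlinarith
      have h4 : g m x / pp γ m ≤ 2 * lam m * q0 x * (-H m) := by
        rw [div_le_iff₀ (S.pp_pos m)]
        simp only [hH]
        have := (S.pp_pos m).ne'
        calc _ ≤ _ := h3
          _ = _ := by field_simp
      calc g n x / pp γ n ≤ g m x / pp γ m := by
            rw [le_div_iff₀ (S.pp_pos m)]
            calc _ = pp γ m / pp γ n * g n x := by ring
              _ ≤ _ := h1
        _ ≤ _ := h4
        _ ≤ _ := by
            apply mul_le_mul_of_nonneg_left
            · linarith [hHmono hm]
            · have := S.lpos m
              have := T.q00 x
              positivity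
    have hlim : Tendsto (fun m => 2 * lam m * q0 x * (-H n)) atTop (𝓝 0) := by
      simpa using ((S.l0.const_mul 2).mul_const (q0 x)).mul_const (-H n)
    have h8 := ge_of_tendsto hlim (by filter_upwards [eventually_ge_atTop n] with m hm using hub m hm)
    rw [div_le_iff₀ (S.pp_pos n)] at h8
    linarith
  obtain ⟨n0, hn0⟩ := eventually_atTop.1 hev
  refine P.P2 ⟨n0, fun n hn => ⟨fun x => ?_, hn0 n hn⟩⟩
  rw [P.hq]
  have : 0 ≤ g n x / ∫ y, g n y := div_nonneg_of_nonpos (hg0 n x) (hneg n).le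
  have := mul_nonneg (show 0 ≤ 1 - lam n by linarith [S.lle n]) this
  linarith

lemma Targ.fpos_ball (T : Targ d f q0 K c Cf CK LK) {x0 : EuclideanSpace ℝ (Fin d)} {δ : ℝ}
    (h : δ < f x0) : ∃ r > 0, ∀ y ∈ closedBall x0 r, δ ≤ f y := by
  have := T.fc.continuousAt.eventually (lt_mem_nhds h)
  obtain ⟨r, hr, h2⟩ := Metric.eventually_nhds_iff_ball.1 this
  exact ⟨r / 2, by positivity, fun y hy => (h2 y (closedBall_subset_ball (by linarith) hy)).le⟩

lemma Traj.D3 (S : Sched d η γ b lam) (P : Traj η γ b lam f q0 K c X w g q)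
    (T : Targ d f q0 K c Cf CK LK) {n0 : ℕ} (hG : ∀ n ≥ n0, 0 < ∫ y, g n y) :
    ∃ x0 : EuclideanSpace ℝ (Fin d), ∃ r > 0, ∃ ε > 0, (∀ y ∈ closedBall x0 r, ε ≤ f y) ∧
      ∀ n ≥ n0, ∀ y ∈ closedBall x0 r, 0 ≤ g n y := by
  have hex : ∃ x, 0 < f x := by
    by_contra hc
    push Not at hc
    have : f = fun _ => 0 := by ext x; exact le_antisymm (hc x) (T.f0 x)
    have h1 := T.f1
    rw [this] at h1
    simp at h1
  have hpers : ∀ n ≥ n0, ∀ y, 0 ≤ g n0 y → 0 ≤ g n y := fun n hn y hy =>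
    le_trans (mul_nonneg (div_nonneg (S.pp_pos _).le (S.pp_pos _).le) hy) (P.gpers S T hn y)
  by_cases hcase : ∀ x, 0 < f x → g n0 x / (∫ y, g n0 y) ≤ 0
  · obtain ⟨x0, hx0⟩ := hex
    obtain ⟨r, hr, h⟩ := T.fpos_ball (show f x0 / 2 < f x0 by linarith)
    refine ⟨x0, r, hr, f x0 / 2, by positivity, h, fun n hn y _ => hpers n hn y ?_⟩
    have := P.P1 n0 hcase y
    by_contra hc
    push Not at hc
    have := div_neg_of_neg_of_pos hc (hG n0 le_rfl)
    linarith
  · push Not at hcase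
    obtain ⟨x0, hx0, hx1⟩ := hcase
    have hgp : 0 < g n0 x0 := by
      by_contra hc
      push Not at hc
      have := div_nonpos_of_nonpos_of_nonneg hc (hG n0 le_rfl).le
      linarith
    obtain ⟨r, hr, h⟩ := T.fpos_ball (show f x0 / 2 < f x0 by linarith)
    have := (P.gcont n0).continuousAt.eventually (lt_mem_nhds hgp)
    obtain ⟨r', hr', h2⟩ := Metric.eventually_nhds_iff_ball.1 this
    refine ⟨x0, min r (r' / 2), lt_min hr (by positivity), f x0 / 2, by positivity,
      fun y hy => h y (closedBall_subset_closedBall (min_le_left _ _) hy), fun n hn y hy => ?_⟩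
    refine hpers n hn y (h2 y ?_).le
    exact closedBall_subset_ball (by linarith) (closedBall_subset_closedBall (min_le_right _ _) hy)

lemma Traj.D4 (S : Sched d η γ b lam) (P : Traj η γ b lam f q0 K c X w g q)
    (T : Targ d f q0 K c Cf CK LK) {n0 : ℕ} (hG : ∀ n ≥ n0, 0 < ∫ y, g n y) :
    ∃ C > 0, ∀ n ≥ n0, ∀ x, -(C * pp γ n * q0 x) ≤ g n x := by
  have hG0 := hG n0 le_rfl
  have hp := S.pp_pos n0
  refine ⟨(∫ y, g n0 y) / pp γ n0, by positivity, fun n hn x => ?_⟩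
  refine le_trans ?_ (P.gpers S T hn x)
  have h2 := P.qnn n0 x
  rw [P.hq] at h2
  have hl2 := S.lle n0
  have hl0 := S.lpos n0
  have hq := T.q00 x
  have h3 : -(q0 x) ≤ g n0 x / (∫ y, g n0 y) := by
    by_contra hc
    push Not at hc
    nlinarith
  rw [le_div_iff₀ hG0] at h3
  have := mul_le_mul_of_nonneg_left h3 (show 0 ≤ pp γ n / pp γ n0 from
    div_nonneg (S.pp_pos _).le (S.pp_pos _).le)
  calc _ = pp γ n / pp γ n0 * (-q0 x * ∫ y, g n0 y) := by ring
    _ ≤ _ := this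

end det


section det2
variable {d : ℕ} {η : ℝ} {γ b lam : ℕ → ℝ} {f q0 K : EuclideanSpace ℝ (Fin d) → ℝ}
  {c Cf CK : ℝ} {LK : ℝ≥0}
  {X : ℕ → EuclideanSpace ℝ (Fin d)} {w : ℕ → ℝ} {g q : ℕ → EuclideanSpace ℝ (Fin d) → ℝ}

lemma Targ.conv_lower (T : Targ d f q0 K c Cf CK LK) {b : ℝ} (hb : 0 < b)
    (x : EuclideanSpace ℝ (Fin d)) {φ : EuclideanSpace ℝ (Fin d) → ℝ} (hφ0 : ∀ y, 0 ≤ φ y)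
    (hφ : Integrable φ) {s : Set (EuclideanSpace ℝ (Fin d))} (hs : MeasurableSet s) {v κ : ℝ}
    (hv : 0 ≤ v) (h : ∀ y ∈ s, v ≤ φ y) (hκ : κ ≤ ∫ y in s, kb K b (x - y)) :
    κ * v ≤ ∫ y, kb K b (x - y) * φ y := by
  have hi := T.kphi_int hb x hφ
  calc κ * v ≤ (∫ y in s, kb K b (x - y)) * v := mul_le_mul_of_nonneg_right hκ hv
    _ = ∫ y in s, kb K b (x - y) * v := by rw [integral_mul_const]
    _ ≤ ∫ y in s, kb K b (x - y) * φ y := by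
        apply setIntegral_mono_on ((kb_integrable' T.Kint hb x).mul_const v).integrableOn
          hi.integrableOn hs
        intro y hy
        exact mul_le_mul_of_nonneg_left (h y hy) (T.kb_nonneg hb _)
    _ ≤ _ := setIntegral_le_integral hi
        (Eventually.of_forall fun y => mul_nonneg (T.kb_nonneg hb _) (hφ0 y))

lemma Traj.phi_lower (S : Sched d η γ b lam) (_P : Traj η γ b lam f q0 K c X w g q)
    (T : Targ d f q0 K c Cf CK LK) {n : ℕ} {y : EuclideanSpace ℝ (Fin d)} {ε v : ℝ} (hε : 0 < ε)
    (hf : ε ≤ f y) (hq : c / 2 * lam n * f y ≤ q n y) (hv : 0 ≤ v) (hvq : v ≤ q n y) :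
    ε ^ η * v ^ (1 - η) ≤ phi f η (2 / c / lam (n + 1)) (q n) y := by
  have hc := T.c0
  have hl := S.lpos n
  have hl1 := S.lpos (n + 1)
  have hfp : 0 < f y := hε.trans_le hf
  have hqp : 0 < q n y := lt_of_lt_of_le (by positivity) hq
  rw [phi_eq hqp hfp.le]
  · apply mul_le_mul (Real.rpow_le_rpow hε.le hf S.η0.le)
      (Real.rpow_le_rpow hv hvq (by linarith [S.η1])) (Real.rpow_nonneg hv _)
      (Real.rpow_nonneg hfp.le _)
  · have h1 : lam (n + 1) ≤ lam n := S.lanti (Nat.le_succ n)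
    have h2 : c / 2 * lam (n + 1) * f y ≤ q n y := le_trans (by gcongr) hq
    have h3 := mul_le_mul_of_nonneg_left h2 (show 0 ≤ 2 / c / lam (n + 1) by positivity)
    calc f y = 2 / c / lam (n + 1) * (c / 2 * lam (n + 1) * f y) := by field_simp
      _ ≤ _ := h3

lemma Traj.step (S : Sched d η γ b lam) (P : Traj η γ b lam f q0 K c X w g q)
    (T : Targ d f q0 K c Cf CK LK) {n : ℕ} (x : EuclideanSpace ℝ (Fin d))
    {s : Set (EuclideanSpace ℝ (Fin d))} (hs : MeasurableSet s) {ε v κ : ℝ} (hε : 0 < ε)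
    (hv : 0 ≤ v) (hf : ∀ y ∈ s, ε ≤ f y) (hq : ∀ y ∈ s, c / 2 * lam n * f y ≤ q n y)
    (hvq : ∀ y ∈ s, v ≤ q n y) (hκ : κ ≤ ∫ y in s, kb K (b (n + 1)) (x - y)) :
    (1 - γ (n + 1)) * (g n x - Mn η γ b lam f K (2 / c) X w q n x)
      + γ (n + 1) * (κ * (ε ^ η * v ^ (1 - η)))
      ≤ g (n + 1) x - Mn η γ b lam f K (2 / c) X w q (n + 1) x := by
  refine le_trans ?_ (P.Mrec S T n x)
  have := T.conv_lower (S.bpos (n + 1)) x (P.phi0 S T (n + 1) n) (P.phii S T (n + 1) n) hs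
    (v := ε ^ η * v ^ (1 - η)) (by positivity)
    (fun y hy => P.phi_lower S T hε (hf y hy) (hq y hy) hv (hvq y hy)) hκ
  have := mul_le_mul_of_nonneg_left this (S.gpos (n + 1)).le
  linarith

lemma Traj.noise_ball (P : Traj η γ b lam f q0 K c X w g q)
    (x0 : EuclideanSpace ℝ (Fin d)) (r : ℝ) {δ : ℝ} (hδ : 0 < δ) :
    ∀ᶠ n in atTop, ∀ x ∈ closedBall x0 r,
    |Mn η γ b lam f K (2 / c) X w q n x| ≤ δ * lam n ^ (1 - η) := by
  obtain ⟨R, hR⟩ := exists_nat_ge (‖x0‖ + r)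
  filter_upwards [P.hM R δ hδ] with n hn x hx
  apply hn
  rw [mem_closedBall, dist_eq_norm] at hx
  have : ‖x‖ ≤ ‖x - x0‖ + ‖x0‖ := by
    calc ‖x‖ = ‖(x - x0) + x0‖ := by rw [sub_add_cancel]
      _ ≤ _ := norm_add_le _ _
  linarith

lemma Sched.lam_rpow (S : Sched d η γ b lam) (n : ℕ) {θ : ℝ} (h1 : θ ≤ 1) :
    lam n ≤ lam n ^ θ := by
  calc lam n = lam n ^ (1:ℝ) := (Real.rpow_one _).symm
    _ ≤ _ := Real.rpow_le_rpow_of_exponent_ge (S.lpos n) (by linarith [S.lle n]) h1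

/-- lower bound of `a` at a fixed time on a ball -/
lemma Traj.astart (S : Sched d η γ b lam) (P : Traj η γ b lam f q0 K c X w g q)
    (x0 : EuclideanSpace ℝ (Fin d)) (r : ℝ) :
    ∀ᶠ k in atTop, ∃ C : ℝ, 0 ≤ C ∧ ∀ x ∈ closedBall x0 r,
      -C ≤ g k x - Mn η γ b lam f K (2 / c) X w q k x := by
  filter_upwards [P.noise_ball x0 r one_pos] with k hk
  obtain ⟨C, hC⟩ := (isCompact_closedBall x0 r).exists_bound_of_continuousOn (P.gcont k).continuousOn
  have hl := Real.rpow_nonneg (S.lpos k).le (1 - η)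
  refine ⟨|C| + lam k ^ (1 - η), by positivity, fun x hx => ?_⟩
  have h1 := hC x hx
  rw [Real.norm_eq_abs] at h1
  have h2 := hk x hx
  linarith [neg_abs_le (g k x), le_abs_self (Mn η γ b lam f K (2 / c) X w q k x), le_abs_self C]

lemma Traj.phase1 (S : Sched d η γ b lam) (P : Traj η γ b lam f q0 K c X w g q)
    (T : Targ d f q0 K c Cf CK LK) {x0 : EuclideanSpace ℝ (Fin d)} {r ε : ℝ} (hr : 0 < r)
    (hε : 0 < ε) (hf : ∀ y ∈ closedBall x0 r, ε ≤ f y)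
    (hq : ∀ᶠ n in atTop, ∀ y ∈ closedBall x0 r, c / 2 * lam n * f y ≤ q n y) :
    ∃ c3 > 0, ∀ᶠ m in atTop, ∀ x ∈ closedBall x0 r,
      c3 * lam m ^ (1 - η) ≤ g m x - Mn η γ b lam f K (2 / c) X w q m x ∧
      (g m x - Mn η γ b lam f K (2 / c) X w q m x) / 2 ≤ g m x := by
  obtain ⟨cK, hcK, s0, hs0, hball⟩ := T.ball_lower
  have hc := T.c0
  have hη0 := S.η0
  have hη1 : 0 < 1 - η := by linarith [S.η1]
  set c3 : ℝ := cK * (ε ^ η * (c / 2 * ε) ^ (1 - η)) with hc3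
  have hc3p : 0 < c3 := by positivity
  have hb : ∀ᶠ n in atTop, s0 * b (n + 1) ≤ r := by
    have h1 : Tendsto (fun n => s0 * b (n + 1)) atTop (𝓝 0) := by
      simpa using (S.b0.comp (tendsto_add_atTop_nat 1)).const_mul s0
    filter_upwards [h1.eventually (gt_mem_nhds hr)] with n hn using hn.le
  obtain ⟨n1, hn1⟩ := eventually_atTop.1 (hq.and hb)
  obtain ⟨k, hk1, C, hC0, hC⟩ := ((eventually_ge_atTop n1).and (P.astart S x0 r)).exists
  have hstep : ∀ n, k ≤ n → ∀ x ∈ closedBall x0 r,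
      (1 - γ (n + 1)) * (g n x - Mn η γ b lam f K (2 / c) X w q n x)
      + γ (n + 1) * (c3 * lam n ^ (1 - η))
      ≤ g (n + 1) x - Mn η γ b lam f K (2 / c) X w q (n + 1) x := by
    intro n hn x hx
    have hl := S.lpos n
    have h1 := hn1 n (hk1.trans hn)
    have := P.step S T x measurableSet_closedBall (n := n) (v := c / 2 * lam n * ε) hε
      (by positivity) hf h1.1
      (fun y hy => le_trans (by have := hf y hy; gcongr) (h1.1 y hy))
      (hball _ (S.bpos (n + 1)) x0 r hr h1.2 x hx)
    have e : c / 2 * lam n * ε = (c / 2 * ε) * lam n := by ring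
    rw [e, Real.mul_rpow (by positivity) hl.le] at this
    rw [hc3]
    calc _ = _ := by ring
      _ ≤ _ := this
  have hlow : ∀ m, k ≤ m → ∀ x ∈ closedBall x0 r,
      c3 * lam m ^ (1 - η) - pp γ m * ((c3 + C) / pp γ k) ≤
      g m x - Mn η γ b lam f K (2 / c) X w q m x := by
    intro m hm x hx
    have hlm : 0 ≤ lam m ^ (1 - η) := Real.rpow_nonneg (S.lpos m).le _
    have hlm1 : lam m ^ (1 - η) ≤ 1 :=
      Real.rpow_le_one (S.lpos m).le (by linarith [S.lle m]) hη1.le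
    have := S.lower (fun n => g n x - Mn η γ b lam f K (2 / c) X w q n x)
      (c3 * lam m ^ (1 - η)) C k m hm (hC x hx) (by positivity) ?_
    · refine le_trans ?_ this
      have hpk := S.pp_pos k
      have hpm := S.pp_pos m
      have : (c3 * lam m ^ (1 - η) + C) / pp γ k ≤ (c3 + C) / pp γ k := by
        gcongr
        nlinarith
      have := mul_le_mul_of_nonneg_left this hpm.le
      linarith
    · intro n hn hnm
      refine le_trans ?_ (hstep n hn x hx)
      have : lam m ^ (1 - η) ≤ lam n ^ (1 - η) :=
        Real.rpow_le_rpow (S.lpos m).le (S.lanti hnm.le) hη1.le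
      have hg := S.gpos (n + 1)
      gcongr
  refine ⟨c3 / 2, by positivity, ?_⟩
  have hsm : Tendsto (fun m => pp γ m / lam m * ((c3 + C) / pp γ k)) atTop (𝓝 0) := by
    simpa using S.ppl.mul_const ((c3 + C) / pp γ k)
  filter_upwards [eventually_ge_atTop k, hsm.eventually (gt_mem_nhds (show 0 < c3 / 2 by positivity)),
    P.noise_ball x0 r (show 0 < c3 / 4 by positivity)] with m hm h1 h2 x hx
  have hl := S.lpos m
  have h3 := S.lam_rpow m (show 1 - η ≤ 1 by linarith)
  have h4 : pp γ m * ((c3 + C) / pp γ k) ≤ c3 / 2 * lam m ^ (1 - η) := by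
    calc _ = pp γ m / lam m * ((c3 + C) / pp γ k) * lam m := by field_simp
      _ ≤ c3 / 2 * lam m := by gcongr
      _ ≤ _ := by gcongr
  have h5 := hlow m hm x hx
  have h6 := h2 x hx
  have h7 := neg_abs_le (Mn η γ b lam f K (2 / c) X w q m x)
  constructor <;> linarith

lemma Traj.phase2 (S : Sched d η γ b lam) (P : Traj η γ b lam f q0 K c X w g q)
    (T : Targ d f q0 K c Cf CK LK) {x0 : EuclideanSpace ℝ (Fin d)} {r ε : ℝ} (hr : 0 < r)
    (hε : 0 < ε) (hf : ∀ y ∈ closedBall x0 r, ε ≤ f y)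
    (hq : ∀ᶠ n in atTop, ∀ y ∈ closedBall x0 r, c / 2 * lam n * f y ≤ q n y) :
    ∃ c5 > 0, ∃ ε0 > 0, ∃ n2, ∀ k1 ≥ n2, ∀ k2 ≥ k1,
      (∀ k, k1 ≤ k → k < k2 → 0 < (∫ y, g k y) ∧ (∫ y, g k y) ≤ 2) → pp γ k2 ≤ ε0 * pp γ k1 →
      ∀ x ∈ closedBall x0 r, c5 ≤ g k2 x := by
  obtain ⟨c3, hc3, hph⟩ := P.phase1 S T hr hε hf hq
  obtain ⟨cK, hcK, s0, hs0, hball⟩ := T.ball_lower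
  have hc := T.c0
  have hη0 := S.η0
  have hη1 : 0 < 1 - η := by linarith [S.η1]
  set c4 : ℝ := cK * (ε ^ η * (1 / 8) ^ (1 - η)) with hc4
  have hc4p : 0 < c4 := by positivity
  have hb : ∀ᶠ n in atTop, s0 * b (n + 1) ≤ r := by
    have h1 : Tendsto (fun n => s0 * b (n + 1)) atTop (𝓝 0) := by
      simpa using (S.b0.comp (tendsto_add_atTop_nat 1)).const_mul s0
    filter_upwards [h1.eventually (gt_mem_nhds hr)] with n hn using hn.le
  have hfl : ∀ᶠ n in atTop, γ (n + 1) * c4 ≤ (c3 * lam n ^ (1 - η)) ^ η := by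
    have h1 : Tendsto (fun n => γ (n + 1) / lam (n + 1) * c4) atTop (𝓝 0) := by
      simpa using (S.gl.comp (tendsto_add_atTop_nat 1)).mul_const c4
    filter_upwards [h1.eventually (gt_mem_nhds (show 0 < c3 ^ η by positivity))] with n hn
    have hl := S.lpos n
    have hl1 := S.lpos (n + 1)
    rw [Real.mul_rpow hc3.le (by positivity), ← Real.rpow_mul hl.le]
    calc γ (n + 1) * c4 = γ (n + 1) / lam (n + 1) * c4 * lam (n + 1) := by field_simp
      _ ≤ c3 ^ η * lam (n + 1) := by gcongr
      _ ≤ c3 ^ η * lam n := by have := S.lanti (Nat.le_succ n); gcongr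
      _ ≤ _ := by
        have := S.lam_rpow n (show (1 - η) * η ≤ 1 by nlinarith)
        gcongr
  obtain ⟨n2, hn2⟩ := eventually_atTop.1 (((hq.and hb).and hph).and hfl)
  refine ⟨(c4 / 2) ^ (1 / η) / 2, by positivity, (1 / 2) ^ (4 / η), by positivity, n2, ?_⟩
  intro k1 hk1 k2 hk2 hG hpp x hx
  have ind : ∀ m, k1 ≤ m → m ≤ k2 → ∀ x ∈ closedBall x0 r,
      (c4 * (1 - ∏ j ∈ Finset.Ico k1 m, (1 - η / 2 * γ (j + 1)))) ^ (1 / η) ≤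
      g m x - Mn η γ b lam f K (2 / c) X w q m x := by
    intro m hm
    induction m, hm using Nat.le_induction with
    | base =>
      intro _ x hx
      have h0 : (0:ℝ) ≤ c3 * lam k1 ^ (1 - η) :=
        mul_nonneg hc3.le (Real.rpow_nonneg (S.lpos k1).le _)
      have := ((hn2 k1 hk1).1.2 x hx).1
      rw [Finset.Ico_self, Finset.prod_empty, sub_self, mul_zero,
        Real.zero_rpow (by positivity)]
      linarith
    | succ n hn ih =>
      intro hnk x hx
      have ih := ih (by omega)
      obtain ⟨⟨⟨h1, h2⟩, h3⟩, h4⟩ := hn2 n (hk1.trans hn)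
      obtain ⟨hG0, hG2⟩ := hG n hn (by omega)
      set ρ := ∏ j ∈ Finset.Ico k1 n, (1 - η / 2 * γ (j + 1)) with hρ
      have hfac : ∀ j, 0 ≤ 1 - η / 2 * γ (j + 1) ∧ 1 - η / 2 * γ (j + 1) ≤ 1 := by
        intro j
        have := S.gpos (j + 1)
        have := S.gle (j + 1)
        constructor <;> nlinarith
      have hρ0 : 0 ≤ ρ := Finset.prod_nonneg fun j _ => (hfac j).1
      have hρ1 : ρ ≤ 1 := Finset.prod_le_one (fun j _ => (hfac j).1) fun j _ => (hfac j).2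
      have hl := S.lpos n
      set κ := max ((c4 * (1 - ρ)) ^ (1 / η)) (c3 * lam n ^ (1 - η)) with hκ
      have hκp : 0 < κ := lt_of_lt_of_le (by positivity) (le_max_right _ _)
      have hκa : ∀ y ∈ closedBall x0 r, κ ≤ g n y - Mn η γ b lam f K (2 / c) X w q n y :=
        fun y hy => max_le (ih y hy) (h3 y hy).1
      have hesc := escape_step S.η0 S.η1 (S.gpos (n + 1)) (S.gle (n + 1)) hc4p hκp
        (h4.trans (Real.rpow_le_rpow (by positivity) (le_max_right _ _) hη0.le)) hρ0 hρ1
        (le_max_left _ _)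
      rw [Finset.prod_Ico_succ_top hn, ← hρ, mul_comm ρ]
      refine hesc.trans ?_
      have hst := P.step S T x measurableSet_closedBall (n := n) (v := κ / 8) hε
        (by positivity) hf h1 ?_ (hball _ (S.bpos (n + 1)) x0 r hr h2 x hx)
      · refine le_trans ?_ hst
        have e : κ / 8 = (1 / 8) * κ := by ring
        rw [e, Real.mul_rpow (by positivity) hκp.le]
        have h5 : 0 ≤ 1 - γ (n + 1) := by linarith [S.gle (n + 1)]
        have h6 := mul_le_mul_of_nonneg_left (hκa x hx) h5
        rw [hc4]
        linarith
      · intro y hy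
        have h7 := hκa y hy
        have h8 := (h3 y hy).2
        rw [P.hq]
        have h9 : κ / 4 ≤ g n y / ∫ y, g n y := by
          rw [le_div_iff₀ hG0]
          nlinarith
        have h10 := S.lle n
        have h11 : 0 ≤ lam n * q0 y := mul_nonneg hl.le (T.q00 y)
        nlinarith
  have hfin := ind k2 hk2 le_rfl x hx
  have hslow := S.slow (θ := η / 2) (by positivity) (by linarith) hk2
  have hρ : ∏ j ∈ Finset.Ico k1 k2, (1 - η / 2 * γ (j + 1)) ≤ 1 / 2 := by
    refine hslow.trans ?_
    have h1 : pp γ k2 / pp γ k1 ≤ (1 / 2) ^ (4 / η) := by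
      rw [div_le_iff₀ (S.pp_pos k1)]; exact hpp
    calc _ ≤ ((1 / 2 : ℝ) ^ (4 / η)) ^ (η / 2 / 2) :=
          Real.rpow_le_rpow (div_nonneg (S.pp_pos _).le (S.pp_pos _).le) h1 (by positivity)
      _ = 1 / 2 := by
          rw [← Real.rpow_mul (by norm_num)]
          have : 4 / η * (η / 2 / 2) = 1 := by field_simp; norm_num
          rw [this, Real.rpow_one]
  have h1 := ((hn2 k2 (hk1.trans hk2)).1.2 x hx).2
  have h2 : (c4 / 2) ^ (1 / η) ≤
      (c4 * (1 - ∏ j ∈ Finset.Ico k1 k2, (1 - η / 2 * γ (j + 1)))) ^ (1 / η) := by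
    apply Real.rpow_le_rpow (by positivity) _ (by positivity)
    nlinarith
  linarith

end det2


section det3
variable {d : ℕ} {η : ℝ} {γ b lam : ℕ → ℝ} {f q0 K : EuclideanSpace ℝ (Fin d) → ℝ}
  {c Cf CK : ℝ} {LK : ℝ≥0}
  {X : ℕ → EuclideanSpace ℝ (Fin d)} {w : ℕ → ℝ} {g q : ℕ → EuclideanSpace ℝ (Fin d) → ℝ}

lemma Traj.D6 (S : Sched d η γ b lam) (P : Traj η γ b lam f q0 K c X w g q)
    (T : Targ d f q0 K c Cf CK LK) : ∃ θ > 0, ∀ᶠ n in atTop, θ ≤ ∫ y, g n y := by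
  obtain ⟨n0, hG⟩ := P.D2 S T
  obtain ⟨x0, r, hr, ε, hε, hf, hg⟩ := P.D3 S T hG
  obtain ⟨C, hC, hlow⟩ := P.D4 S T hG
  have hq : ∀ᶠ n in atTop, ∀ y ∈ closedBall x0 r, c / 2 * lam n * f y ≤ q n y := by
    filter_upwards [eventually_ge_atTop n0] with n hn y hy
    rw [P.hq]
    have h1 : 0 ≤ (1 - lam n) * (g n y / ∫ y, g n y) :=
      mul_nonneg (by linarith [S.lle n]) (div_nonneg (hg n hn y hy) (hG n hn).le)
    have h2 := mul_le_mul_of_nonneg_left (T.cf y) (S.lpos n).le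
    have h3 : 0 ≤ lam n * (c * f y) :=
      mul_nonneg (S.lpos n).le (mul_nonneg T.c0.le (T.f0 y))
    linarith
  obtain ⟨c5, hc5, ε0, hε0, n2', hph⟩ := P.phase2 S T hr hε hf hq
  set n2 := max n2' n0 with hn2
  set v : ℝ := volume.real (closedBall x0 r) with hv
  have hvp : 0 < v := by
    rw [hv, Measure.real]
    exact ENNReal.toReal_pos (measure_closedBall_pos _ _ hr).ne' measure_closedBall_lt_top.ne
  refine ⟨min ε0 (c5 * v / 2), lt_min hε0 (by positivity), ?_⟩
  have hwin : ∀ k2 ≥ n2, ∃ k1, n2 ≤ k1 ∧ k1 ≤ k2 ∧ (∀ k, k1 ≤ k → k < k2 → (∫ y, g k y) ≤ 2) ∧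
      (k1 = n2 ∨ 1 ≤ ∫ y, g k1 y) := by
    intro k2 hk2
    induction k2, hk2 using Nat.le_induction with
    | base => exact ⟨n2, le_rfl, le_rfl, fun k h1 h2 => by omega, Or.inl rfl⟩
    | succ k2 hk2 ih =>
      by_cases hle : (∫ y, g k2 y) ≤ 2
      · obtain ⟨k1, h1, h2, h3, h4⟩ := ih
        refine ⟨k1, h1, by omega, fun k h5 h6 => ?_, h4⟩
        rcases Nat.lt_succ_iff_lt_or_eq.1 h6 with h | h
        · exact h3 k h5 h
        · rw [h]; exact hle
      · push Not at hle
        refine ⟨k2 + 1, by omega, le_rfl, fun k h1 h2 => by omega, Or.inr ?_⟩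
        rw [P.Grec S T]
        have := mul_nonneg (S.gpos (k2 + 1)).le (Real.rpow_nonneg (P.w0 T k2) η)
        have := S.gle (k2 + 1)
        nlinarith
  have hp1 : ∀ᶠ n in atTop, pp γ n < ε0 * pp γ n2 :=
    S.pp_tendsto.eventually (gt_mem_nhds (mul_pos hε0 (S.pp_pos n2)))
  have hp2 : ∀ᶠ n in atTop, C * pp γ n < c5 * v / 2 := by
    have : Tendsto (fun n => C * pp γ n) atTop (𝓝 0) := by simpa using S.pp_tendsto.const_mul C
    exact this.eventually (gt_mem_nhds (by positivity))
  filter_upwards [hp1, hp2, eventually_ge_atTop n2] with k2 h1 h2 h3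
  by_contra hcon
  push Not at hcon
  obtain ⟨k1, hk1, hk12, hk3, hk4⟩ := hwin k2 h3
  have hn0 : ∀ k, n2 ≤ k → n0 ≤ k := fun k hk => (le_max_right _ _).trans hk
  have hpp : pp γ k2 ≤ ε0 * pp γ k1 := by
    rcases hk4 with h | h
    · rw [h]; exact h1.le
    · have h5 := P.Gpers S T hk12
      have h6 : pp γ k2 / pp γ k1 ≤ ε0 := by
        have h7 : 0 ≤ pp γ k2 / pp γ k1 := div_nonneg (S.pp_pos _).le (S.pp_pos _).le
        have h8 := min_le_left ε0 (c5 * v / 2)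
        nlinarith
      rwa [div_le_iff₀ (S.pp_pos k1)] at h6
  have hb := hph k1 ((le_max_left _ _).trans hk1) k2 hk12
    (fun k h5 h6 => ⟨hG k (hn0 k (hk1.trans h5)), hk3 k h5 h6⟩) hpp
  have hGl : c5 * v - C * pp γ k2 ≤ ∫ y, g k2 y := by
    have hi1 : Integrable ((closedBall x0 r).indicator fun _ => c5) :=
      (integrable_indicator_iff measurableSet_closedBall).2
        (integrableOn_const measure_closedBall_lt_top.ne)
    have hi2 : Integrable fun y => C * pp γ k2 * q0 y := T.q0int.const_mul _
    calc c5 * v - C * pp γ k2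
        = ∫ y, ((closedBall x0 r).indicator (fun _ => c5) y - C * pp γ k2 * q0 y) := by
          rw [integral_sub hi1 hi2, integral_indicator measurableSet_closedBall, setIntegral_const,
            integral_const_mul, T.q01, smul_eq_mul]
          ring
      _ ≤ _ := by
          apply integral_mono (hi1.sub hi2) (P.gint k2)
          intro y
          have h9 := hlow k2 (hn0 k2 h3) y
          have h10 : 0 ≤ C * pp γ k2 * q0 y :=
            mul_nonneg (mul_nonneg hC.le (S.pp_pos _).le) (T.q00 y)
          by_cases hy : y ∈ closedBall x0 r
          · simp only [Pi.sub_apply, Set.indicator_of_mem hy]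
            linarith [hb y hy]
          · simp only [Pi.sub_apply, Set.indicator_of_notMem hy]
            linarith
  have := min_le_right ε0 (c5 * v / 2)
  linarith

lemma Traj.D7a (S : Sched d η γ b lam) (P : Traj η γ b lam f q0 K c X w g q)
    (T : Targ d f q0 K c Cf CK LK) :
    ∀ᶠ n in atTop, ∀ y, lam n / 2 * q0 y ≤ q n y := by
  obtain ⟨n0, hG⟩ := P.D2 S T
  obtain ⟨C, hC, hlow⟩ := P.D4 S T hG
  obtain ⟨θ, hθ, hGl⟩ := P.D6 S T
  have h1 : Tendsto (fun n => C / θ * (pp γ n / lam n)) atTop (𝓝 0) := by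
    simpa using S.ppl.const_mul (C / θ)
  filter_upwards [hGl, h1.eventually (gt_mem_nhds (show (0:ℝ) < 1 / 2 by norm_num)),
    eventually_ge_atTop n0] with n h2 h3 h4 y
  rw [P.hq]
  have hl := S.lpos n
  have hp := S.pp_pos n
  have hq := T.q00 y
  have h5 : C / θ * pp γ n ≤ lam n / 2 := by
    calc _ = C / θ * (pp γ n / lam n) * lam n := by field_simp
      _ ≤ 1 / 2 * lam n := by gcongr
      _ = _ := by ring
  have h6 : -(C / θ * pp γ n * q0 y) ≤ g n y / ∫ y, g n y := by
    rw [le_div_iff₀ (hG n h4)]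
    have h7 := hlow n h4 y
    have h8 : C * pp γ n * q0 y ≤ C / θ * pp γ n * q0 y * ∫ y, g n y := by
      calc C * pp γ n * q0 y = C / θ * pp γ n * q0 y * θ := by field_simp
        _ ≤ _ := by gcongr
    linarith
  have h7 := mul_le_mul_of_nonneg_left h6 (show 0 ≤ 1 - lam n by linarith [S.lle n])
  have h8 : 0 ≤ C / θ * pp γ n * q0 y := by positivity
  have h9 := mul_le_mul_of_nonneg_right h5 hq
  nlinarith

lemma Traj.D7 (S : Sched d η γ b lam) (P : Traj η γ b lam f q0 K c X w g q)
    (T : Targ d f q0 K c Cf CK LK) {ε : ℝ} (hε : 0 < ε) :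
    ∀ᶠ n in atTop, (∫ y, g n y) ≤ 1 + ε := by
  obtain ⟨n0, hn0⟩ := eventually_atTop.1 (P.D7a S T)
  have hc := T.c0
  have hW : ∀ n ≥ n0, min (w (n + 1)) (2 / c / lam (n + 1)) = w (n + 1) := by
    intro n hn
    apply min_eq_left
    have hl1 := S.lpos (n + 1)
    rw [P.hw]
    rcases (P.qnn n (X (n + 1))).eq_or_lt with h | h
    · rw [← h, div_zero]; positivity
    · rw [div_le_iff₀ h]
      have h1 := hn0 n hn (X (n + 1))
      have h2 := T.cf (X (n + 1))
      have h3 : lam (n + 1) ≤ lam n := S.lanti (Nat.le_succ n)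
      have h4 : lam (n + 1) / 2 * (c * f (X (n + 1))) ≤ q n (X (n + 1)) := by
        refine le_trans ?_ h1
        have := T.q00 (X (n + 1))
        have := S.lpos n
        have := T.f0 (X (n + 1))
        gcongr
      have h5 := mul_le_mul_of_nonneg_left h4 (show 0 ≤ 2 / c / lam (n + 1) by positivity)
      calc _ = 2 / c / lam (n + 1) * (lam (n + 1) / 2 * (c * f (X (n + 1)))) := by field_simp
        _ ≤ _ := h5
  have hrec : ∀ n ≥ n0, (∫ y, g (n + 1) y) - Sn η γ lam f (2 / c) w q (n + 1) ≤
      (1 - γ (n + 1)) * ((∫ y, g n y) - Sn η γ lam f (2 / c) w q n) + γ (n + 1) * 1 := by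
    intro n hn
    have e : Sn η γ lam f (2 / c) w q (n + 1) = (1 - γ (n + 1)) * Sn η γ lam f (2 / c) w q n
        + γ (n + 1) * ((min (w (n + 1)) (2 / c / lam (n + 1))) ^ η
          - ∫ y, phi f η (2 / c / lam (n + 1)) (q n) y) := by
      simp [Sn, nz]
    rw [e, hW n hn, P.Grec S T]
    have h1 : ∫ y, phi f η (2 / c / lam (n + 1)) (q n) y ≤ 1 :=
      phi_int_le S.η0 S.η1 T.f0 (P.qnn n) (S.A0 T _) T.fc.measurable (P.qcont T n).measurable
        T.fint (P.qint T n) T.f1 (P.q1 n)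
    have := mul_le_mul_of_nonneg_left h1 (S.gpos (n + 1)).le
    linarith
  have h1 := S.limsup_le (fun n => (∫ y, g n y) - Sn η γ lam f (2 / c) w q n) 1 n0 hrec (ε / 2)
    (by positivity)
  filter_upwards [h1, P.hS.eventually (gt_mem_nhds (show 0 < ε / 2 by positivity))] with n h2 h3
  linarith

lemma Traj.D8q (S : Sched d η γ b lam) (P : Traj η γ b lam f q0 K c X w g q)
    (T : Targ d f q0 K c Cf CK LK) :
    ∀ᶠ n in atTop, ∀ y, c / 2 * lam n * f y ≤ q n y := by
  filter_upwards [P.D7a S T] with n hn y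
  refine le_trans ?_ (hn y)
  have := mul_le_mul_of_nonneg_left (T.cf y) (show 0 ≤ lam n / 2 by linarith [S.lpos n])
  linarith

lemma Traj.D8 (S : Sched d η γ b lam) (P : Traj η γ b lam f q0 K c X w g q)
    (T : Targ d f q0 K c Cf CK LK) {x0 : EuclideanSpace ℝ (Fin d)} (hx : 0 < f x0) :
    ∃ v > 0, ∃ r > 0, ∀ᶠ n in atTop, ∀ y ∈ closedBall x0 r, v ≤ g n y := by
  obtain ⟨r, hr, hf⟩ := T.fpos_ball (show f x0 / 2 < f x0 by linarith)
  obtain ⟨c5, hc5, ε0, hε0, n2, hph⟩ := P.phase2 S T hr (show 0 < f x0 / 2 by positivity) hf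
    ((P.D8q S T).mono fun n hn y _ => hn y)
  obtain ⟨n0, hG⟩ := P.D2 S T
  obtain ⟨n1, hn1⟩ := eventually_atTop.1 (P.D7 S T one_pos)
  set k1 := max n2 (max n0 n1) with hk1
  refine ⟨c5, hc5, r, hr, ?_⟩
  have hp1 : ∀ᶠ n in atTop, pp γ n < ε0 * pp γ k1 :=
    S.pp_tendsto.eventually (gt_mem_nhds (mul_pos hε0 (S.pp_pos k1)))
  filter_upwards [hp1, eventually_ge_atTop k1] with n h1 h2
  refine hph k1 (le_max_left _ _) n h2 (fun k h3 h4 => ⟨hG k ?_, ?_⟩) h1.le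
  · exact le_trans (le_trans (le_max_left _ _) (le_max_right _ _)) h3
  · have := hn1 k (le_trans (le_trans (le_max_right _ _) (le_max_right _ _)) h3)
    linarith

lemma Traj.D9a (S : Sched d η γ b lam) (P : Traj η γ b lam f q0 K c X w g q)
    (T : Targ d f q0 K c Cf CK LK) {x0 : EuclideanSpace ℝ (Fin d)} (hx : 0 < f x0) {v v' : ℝ}
    (hv : 0 < v) (hv' : v' < f x0 ^ η * v ^ (1 - η))
    (h : ∃ r > 0, ∀ᶠ n in atTop, ∀ y ∈ closedBall x0 r, v ≤ g n y) :
    ∃ r > 0, ∀ᶠ n in atTop, ∀ y ∈ closedBall x0 r, v' ≤ g n y := by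
  obtain ⟨r, hr, hev⟩ := h
  have hη0 := S.η0
  have hη1 : 0 < 1 - η := by linarith [S.η1]
  obtain ⟨δ, hδ0, hδ1, hδf, hδ⟩ : ∃ δ > 0, δ < 1 ∧ δ < f x0 ∧
      v' < (1 - δ) * ((f x0 - δ) ^ η * ((1 - δ) * (v / (1 + δ))) ^ (1 - η)) - δ := by
    have hcont : ContinuousAt (fun δ : ℝ =>
        (1 - δ) * ((f x0 - δ) ^ η * ((1 - δ) * (v / (1 + δ))) ^ (1 - η)) - δ) 0 := by
      refine ContinuousAt.sub (ContinuousAt.mul (by fun_prop) (ContinuousAt.mul ?_ ?_)) (by fun_prop)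
      · exact ContinuousAt.rpow_const (by fun_prop) (Or.inl (by simpa using hx.ne'))
      · refine ContinuousAt.rpow_const ?_ (Or.inl (by simpa using hv.ne'))
        refine ContinuousAt.mul (by fun_prop) (ContinuousAt.div (by fun_prop) (by fun_prop) (by simp))
    have h1 := hcont.eventually (lt_mem_nhds (show v' < _ by simpa using hv'))
    have h2 : ∀ᶠ δ : ℝ in 𝓝 0, δ < min 1 (f x0) := gt_mem_nhds (by positivity)
    have h3 := (h1.and h2).filter_mono (nhdsWithin_le_nhds (s := Set.Ioi 0))
    obtain ⟨δ, ⟨h4, h5⟩, h6⟩ := (h3.and self_mem_nhdsWithin).exists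
    exact ⟨δ, h6, h5.trans_le (min_le_left _ _), h5.trans_le (min_le_right _ _), h4⟩
  obtain ⟨r2, hr2, hf⟩ := T.fpos_ball (show f x0 - δ < f x0 by linarith)
  set s := min r r2 with hs
  have hsp : 0 < s := lt_min hr hr2
  obtain ⟨n0, hG⟩ := P.D2 S T
  have hconc : ∀ᶠ n in atTop, ∀ x : EuclideanSpace ℝ (Fin d),
      1 - δ ≤ ∫ y in closedBall x (s / 2), kb K (b (n + 1)) (x - y) :=
    (tendsto_add_atTop_nat 1).eventually
      (T.conc S.bpos S.b0 (show 0 < s / 2 by positivity) hδ0)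
  have hlam : ∀ᶠ n in atTop, lam n < δ := S.l0.eventually (gt_mem_nhds hδ0)
  obtain ⟨n1, hn1⟩ := eventually_atTop.1
    ((((hev.and hconc).and (P.D7 S T hδ0)).and hlam).and
      ((P.D8q S T).and (eventually_ge_atTop n0)))
  obtain ⟨k, hk1, C, hC0, hC⟩ := ((eventually_ge_atTop n1).and (P.astart S x0 (s / 2))).exists
  set B : ℝ := (1 - δ) * ((f x0 - δ) ^ η * ((1 - δ) * (v / (1 + δ))) ^ (1 - η)) with hB
  have h1δ : 0 < 1 - δ := by linarith
  have hfδ : 0 < f x0 - δ := by linarith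
  have hB0 : 0 ≤ B := by positivity
  have hlow : ∀ m ≥ k, ∀ x ∈ closedBall x0 (s / 2),
      B - pp γ m * ((B + C) / pp γ k) ≤ g m x - Mn η γ b lam f K (2 / c) X w q m x := by
    intro m hm x hx
    refine S.lower (fun n => g n x - Mn η γ b lam f K (2 / c) X w q n x) B C k m hm (hC x hx) hB0 ?_
    intro n hn _
    obtain ⟨⟨⟨⟨h1, h2⟩, h3⟩, h4⟩, h5, h6⟩ := hn1 n (hk1.trans hn)
    have hsub : ∀ y ∈ closedBall x (s / 2), y ∈ closedBall x0 s := by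
      intro y hy
      rw [mem_closedBall] at hx hy ⊢
      linarith [dist_triangle y x x0]
    refine P.step S T x measurableSet_closedBall hfδ (by positivity)
      (fun y hy => hf y (closedBall_subset_closedBall (min_le_right _ _) (hsub y hy)))
      (fun y _ => h5 y) ?_ (h2 x)
    intro y hy
    have h7 := h1 y (closedBall_subset_closedBall (min_le_left _ _) (hsub y hy))
    have hGp := hG n h6
    rw [P.hq]
    have h8 : v / (1 + δ) ≤ g n y / ∫ y, g n y := by
      rw [div_le_div_iff₀ (by positivity) hGp]
      have : 0 ≤ g n y := hv.le.trans h7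
      nlinarith
    have h9 : 0 ≤ lam n * q0 y := mul_nonneg (S.lpos n).le (T.q00 y)
    have h10 : 0 ≤ v / (1 + δ) := by positivity
    nlinarith [S.lpos n]
  refine ⟨s / 2, by positivity, ?_⟩
  have hsm : Tendsto (fun m => pp γ m * ((B + C) / pp γ k)) atTop (𝓝 0) := by
    simpa using S.pp_tendsto.mul_const ((B + C) / pp γ k)
  filter_upwards [hsm.eventually (gt_mem_nhds (show 0 < δ / 2 by positivity)),
    P.noise_ball x0 (s / 2) (show 0 < δ / 2 by positivity), eventually_ge_atTop k] with m h1 h2 h3 y hy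
  have h4 := hlow m h3 y hy
  have h5 := h2 y hy
  have h6 : lam m ^ (1 - η) ≤ 1 :=
    Real.rpow_le_one (S.lpos m).le (by linarith [S.lle m]) hη1.le
  have h7 := neg_abs_le (Mn η γ b lam f K (2 / c) X w q m y)
  nlinarith

lemma Traj.D9 (S : Sched d η γ b lam) (P : Traj η γ b lam f q0 K c X w g q)
    (T : Targ d f q0 K c Cf CK LK) {x0 : EuclideanSpace ℝ (Fin d)} (hx : 0 < f x0) {v : ℝ}
    (hv : v < f x0) : ∀ᶠ n in atTop, v ≤ g n x0 := by
  have hη0 := S.η0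
  have hη1 : 0 < 1 - η := by linarith [S.η1]
  set V : Set ℝ := {v | 0 < v ∧ ∃ r > 0, ∀ᶠ n in atTop, ∀ y ∈ closedBall x0 r, v ≤ g n y} with hV
  have hfin : ∀ v' ∈ V, v ≤ v' → ∀ᶠ n in atTop, v ≤ g n x0 := by
    rintro v' ⟨_, r, hr, h⟩ hvv
    filter_upwards [h] with n hn
    exact hvv.trans (hn x0 (mem_closedBall_self hr.le))
  by_contra hcon
  have hub : ∀ v' ∈ V, v' ≤ v := fun v' hv' => by
    by_contra hc
    push Not at hc
    exact hcon (hfin v' hv' hc.le)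
  obtain ⟨v0, hv0, hv0'⟩ := P.D8 S T hx
  have hne : V.Nonempty := ⟨v0, hv0, hv0'⟩
  have hbdd : BddAbove V := ⟨v, hub⟩
  set t := sSup V with ht
  have htp : 0 < t := hv0.trans_le (le_csSup hbdd ⟨hv0, hv0'⟩)
  have htv : t ≤ v := csSup_le hne hub
  have hgt : t < f x0 ^ η * t ^ (1 - η) := by
    have h1 : t ^ η < f x0 ^ η := Real.rpow_lt_rpow htp.le (by linarith) hη0
    calc t = t ^ η * t ^ (1 - η) := by
          rw [← Real.rpow_add htp]; simp
      _ < _ := by gcongr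
  have hcont : ContinuousAt (fun u : ℝ => f x0 ^ η * u ^ (1 - η)) t :=
    ContinuousAt.mul (by fun_prop) (ContinuousAt.rpow_const continuousAt_id (Or.inl htp.ne'))
  have h1 := hcont.eventually (lt_mem_nhds hgt)
  obtain ⟨e, he, h2⟩ := Metric.eventually_nhds_iff_ball.1 h1
  obtain ⟨u, huV, hu⟩ := exists_lt_of_lt_csSup hne (show t - e < t by linarith)
  have hut : u ≤ t := le_csSup hbdd huV
  have h3 := h2 u (by rw [mem_ball, Real.dist_eq, abs_lt]; constructor <;> linarith)
  obtain ⟨v', h4, h5⟩ := exists_between h3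
  have h6 := P.D9a S T hx huV.1 h5 huV.2
  have : v' ∈ V := ⟨htp.trans h4, h6⟩
  linarith [le_csSup hbdd this]

theorem Traj.main (S : Sched d η γ b lam) (P : Traj η γ b lam f q0 K c X w g q)
    (T : Targ d f q0 K c Cf CK LK) :
    Tendsto (fun n => ∫ x, |q n x - f x|) atTop (𝓝 0) := by
  obtain ⟨n0, hG⟩ := P.D2 S T
  obtain ⟨C, hC, hlow⟩ := P.D4 S T hG
  -- positive part
  have hpos : Tendsto (fun n => ∫ x, max (f x - g n x) 0) atTop (𝓝 0) := by
    have h0 : (0:ℝ) = ∫ x : EuclideanSpace ℝ (Fin d), (0:ℝ) := by simp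
    refine (show Tendsto _ _ (𝓝 (∫ x : EuclideanSpace ℝ (Fin d), (0:ℝ))) → _ by rw [← h0]; exact id) ?_
    refine tendsto_integral_filter_of_dominated_convergence (fun x => f x + C * q0 x) ?_ ?_ ?_ ?_
    · refine Eventually.of_forall fun n => ?_
      have := T.fc
      have := P.gcont n
      exact (by fun_prop : Continuous fun x => max (f x - g n x) 0).aestronglyMeasurable
    · filter_upwards [eventually_ge_atTop n0] with n hn
      refine Eventually.of_forall fun x => ?_
      rw [Real.norm_of_nonneg (le_max_right _ _)]
      have h1 := hlow n hn x
      have h2 : pp γ n ≤ 1 := by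
        have := S.pp_anti (Nat.zero_le n)
        simpa [pp] using this
      have h3 := T.q00 x
      have h4 := T.f0 x
      have h5 : C * pp γ n * q0 x ≤ C * q0 x := by
        have : C * pp γ n ≤ C := by nlinarith
        exact mul_le_mul_of_nonneg_right this h3
      have h6 : 0 ≤ C * q0 x := by positivity
      exact max_le (by linarith) (by linarith)
    · exact T.fint.add (T.q0int.const_mul C)
    · refine Eventually.of_forall fun x => ?_
      rw [Metric.tendsto_nhds]
      intro e he
      rcases (T.f0 x).eq_or_lt with h | h
      · have h1 : Tendsto (fun n => C * pp γ n * q0 x) atTop (𝓝 0) := by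
          simpa using (S.pp_tendsto.const_mul C).mul_const (q0 x)
        filter_upwards [h1.eventually (gt_mem_nhds he), eventually_ge_atTop n0] with n h2 h3
        rw [dist_zero_right, Real.norm_of_nonneg (le_max_right _ _), ← h]
        exact max_lt (by linarith [hlow n h3 x]) he
      · filter_upwards [P.D9 S T h (show f x - e / 2 < f x by linarith)] with n hn
        rw [dist_zero_right, Real.norm_of_nonneg (le_max_right _ _)]
        exact max_lt (by linarith) he
  have hpi : ∀ n, Integrable fun x => max (f x - g n x) 0 := fun n =>
    (T.fint.sub (P.gint n)).pos_part
  have habs : ∀ n, ∫ x, |g n x - f x| = (∫ x, g n x) - 1 + 2 * ∫ x, max (f x - g n x) 0 := by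
    intro n
    have : ∀ x, |g n x - f x| = (g n x - f x) + 2 * max (f x - g n x) 0 := by
      intro x
      rcases le_total (f x) (g n x) with h | h
      · rw [abs_of_nonneg (by linarith), max_eq_right (by linarith)]; ring
      · rw [abs_of_nonpos (by linarith), max_eq_left (by linarith)]; ring
    simp_rw [this]
    rw [integral_add (f := fun x => g n x - f x) ((P.gint n).sub T.fint) ((hpi n).const_mul 2), integral_sub (P.gint n) T.fint,
      T.f1, integral_const_mul]
  have hG1 : Tendsto (fun n => ∫ x, g n x) atTop (𝓝 1) := by
    rw [Metric.tendsto_nhds]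
    intro e he
    have hlo : ∀ n, 1 - 2 * (∫ x, max (f x - g n x) 0) ≤ ∫ x, g n x := by
      intro n
      have h1 : 0 ≤ ∫ x, |g n x - f x| := integral_nonneg fun x => abs_nonneg _
      linarith [habs n]
    filter_upwards [P.D7 S T (show 0 < e / 2 by positivity),
      hpos.eventually (gt_mem_nhds (show 0 < e / 4 by positivity))] with n h1 h2
    rw [Real.dist_eq, abs_lt]
    constructor <;> linarith [hlo n]
  have hgf : Tendsto (fun n => ∫ x, |g n x - f x|) atTop (𝓝 0) := by
    simp_rw [habs]
    simpa using (hG1.sub_const 1).add (hpos.const_mul 2)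
  have hb : ∀ᶠ n in atTop, ∫ x, |q n x - f x| ≤
      ((∫ x, |g n x - f x|) + |(∫ x, g n x) - 1|) / (∫ x, g n x) + lam n * 2 := by
    filter_upwards [eventually_ge_atTop n0] with n hn
    have hGn := hG n hn
    have hl := S.lpos n
    have hl2 := S.lle n
    have hpt : ∀ x, |q n x - f x| ≤
        (|g n x - f x| + |(∫ x, g n x) - 1| * f x) / (∫ x, g n x) + lam n * (f x + q0 x) := by
      intro x
      rw [P.hq]
      set Gn := ∫ x, g n x
      have e : (1 - lam n) * (g n x / Gn) + lam n * q0 x - f x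
        = (1 - lam n) * (((g n x - f x) - (Gn - 1) * f x) / Gn) + lam n * (q0 x - f x) := by
        field_simp
        ring
      rw [e]
      have hf0 := T.f0 x
      have hq0 := T.q00 x
      have h1 : |(g n x - f x) - (Gn - 1) * f x| ≤ |g n x - f x| + |Gn - 1| * f x := by
        calc _ ≤ |g n x - f x| + |(Gn - 1) * f x| := abs_sub _ _
          _ = _ := by rw [abs_mul (Gn - 1), abs_of_nonneg hf0]
      have h2 : |q0 x - f x| ≤ f x + q0 x := by
        rw [abs_le]; constructor <;> linarith
      calc _ ≤ |(1 - lam n) * (((g n x - f x) - (Gn - 1) * f x) / Gn)| + |lam n * (q0 x - f x)| :=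
            abs_add_le _ _
        _ = (1 - lam n) * (|(g n x - f x) - (Gn - 1) * f x| / Gn) + lam n * |q0 x - f x| := by
            rw [abs_mul, abs_mul, abs_of_nonneg (show 0 ≤ 1 - lam n by linarith), abs_div,
              abs_of_pos hGn, abs_of_pos hl]
        _ ≤ 1 * ((|g n x - f x| + |Gn - 1| * f x) / Gn) + lam n * (f x + q0 x) := by
            gcongr
            linarith
        _ = _ := by ring
    have hi1 : Integrable fun x => |g n x - f x| := ((P.gint n).sub T.fint).abs
    have hi2 : Integrable fun x => (|g n x - f x| + |(∫ x, g n x) - 1| * f x) / (∫ x, g n x) :=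
      (hi1.add (T.fint.const_mul _)).div_const _
    have hi3 : Integrable fun x => lam n * (f x + q0 x) := (T.fint.add T.q0int).const_mul _
    calc _ ≤ ∫ x, ((|g n x - f x| + |(∫ x, g n x) - 1| * f x) / (∫ x, g n x) + lam n * (f x + q0 x)) :=
          integral_mono ((P.qint T n).sub T.fint).abs (hi2.add hi3) hpt
      _ = _ := by
          rw [integral_add hi2 hi3, integral_div, integral_add hi1 (T.fint.const_mul _),
            integral_const_mul, integral_const_mul, integral_add T.fint T.q0int, T.f1, T.q01]
          ring
  have hlim : Tendsto (fun n => ((∫ x, |g n x - f x|) + |(∫ x, g n x) - 1|) / (∫ x, g n x) + lam n * 2)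
      atTop (𝓝 0) := by
    have := ((hgf.add (hG1.sub_const 1).abs).div hG1 one_ne_zero).add (S.l0.mul_const 2)
    simpa using this
  exact squeeze_zero' (Eventually.of_forall fun n => integral_nonneg fun x => abs_nonneg _) hb hlim

end det3

set_option linter.unusedSectionVars false

/-- the (shifted) random process -/
structure Proc {Ω : Type*} [mΩ : MeasurableSpace Ω] (μ : Measure Ω) {d : ℕ}
    (F : ℕ → MeasurableSpace Ω) (η : ℝ) (γ b lam : ℕ → ℝ)
    (f q0 K : EuclideanSpace ℝ (Fin d) → ℝ)
    (X : ℕ → Ω → EuclideanSpace ℝ (Fin d)) (w : ℕ → Ω → ℝ)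
    (g q : ℕ → Ω → EuclideanSpace ℝ (Fin d) → ℝ) : Prop where
  Fle : ∀ n, F n ≤ mΩ
  Fmono : Monotone F
  XF : ∀ n, Measurable[F n] (X n)
  hw : ∀ n ω, w (n + 1) ω = f (X (n + 1) ω) / q n ω (X (n + 1) ω)
  hg : ∀ n ω x, g (n + 1) ω x = (1 - γ (n + 1)) * g n ω x
        + γ (n + 1) * w (n + 1) ω ^ η * kb K (b (n + 1)) (x - X (n + 1) ω)
  hq : ∀ n ω x, q n ω x = (1 - lam n) * (g n ω x / (∫ y, g n ω y)) + lam n * q0 x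
  gcont : ∀ n ω, Continuous (g n ω)
  gint : ∀ n ω, Integrable (g n ω)
  qm : ∀ n x, Measurable[F n] fun ω => q n ω x
  pol : ∀ n (φ : EuclideanSpace ℝ (Fin d) → ℝ), Continuous φ → (∃ C, ∀ x, |φ x| ≤ C) →
      (μ[fun ω => φ (X (n+1) ω) | F n]) =ᵐ[μ] (fun ω => ∫ y, φ y * q n ω y)

section CLgen
variable {Ω Ω' : Type*} [MeasurableSpace Ω] [MeasurableSpace Ω'] {d : ℕ}

lemma CL_gen (μ : Measure Ω) [IsFiniteMeasure μ] (T : Ω → Ω') (hT : Measurable T)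
    (X : Ω → EuclideanSpace ℝ (Fin d)) (hX : Measurable X)
    (q : Ω' → EuclideanSpace ℝ (Fin d) → ℝ) (hq : Measurable (Function.uncurry q))
    (h : ∀ A : Set Ω', MeasurableSet A → ∀ φ : BoundedContinuousFunction (EuclideanSpace ℝ (Fin d)) ℝ≥0,
      ∫⁻ ω in T ⁻¹' A, (φ (X ω) : ℝ≥0∞) ∂μ
        = ∫⁻ ω in T ⁻¹' A, (∫⁻ y, (φ y : ℝ≥0∞) * ENNReal.ofReal (q (T ω) y)) ∂μ)
    (Φ : Ω' × EuclideanSpace ℝ (Fin d) → ℝ≥0∞) (hΦ : Measurable Φ) :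
    ∫⁻ ω, Φ (T ω, X ω) ∂μ = ∫⁻ ω, (∫⁻ y, Φ (T ω, y) * ENNReal.ofReal (q (T ω) y)) ∂μ := by
  have hqo : Measurable fun z : Ω' × EuclideanSpace ℝ (Fin d) => ENNReal.ofReal (q z.1 z.2) :=
    ENNReal.measurable_ofReal.comp hq
  set m1 := μ.map (fun ω => (T ω, X ω)) with hm1
  set m2 := ((μ.map T).prod (volume : Measure (EuclideanSpace ℝ (Fin d)))).withDensity
    (fun z => ENNReal.ofReal (q z.1 z.2)) with hm2
  have hTX : Measurable (fun ω => (T ω, X ω)) := hT.prodMk hX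
  have I1 : ∀ Φ : Ω' × EuclideanSpace ℝ (Fin d) → ℝ≥0∞, Measurable Φ →
      ∫⁻ z, Φ z ∂m1 = ∫⁻ ω, Φ (T ω, X ω) ∂μ := fun Φ hΦ => by
    rw [hm1, lintegral_map hΦ hTX]
  have I2 : ∀ Φ : Ω' × EuclideanSpace ℝ (Fin d) → ℝ≥0∞, Measurable Φ →
      ∫⁻ z, Φ z ∂m2 = ∫⁻ ω, (∫⁻ y, Φ (T ω, y) * ENNReal.ofReal (q (T ω) y)) ∂μ := fun Φ hΦ => by
    rw [hm2, lintegral_withDensity_eq_lintegral_mul _ hqo hΦ, lintegral_prod _ (hqo.mul hΦ).aemeasurable]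
    rw [lintegral_map _ hT]
    · simp [mul_comm]
    · exact (hqo.mul hΦ).lintegral_prod_right'
  have key : m1 = m2 := by
    have : IsFiniteMeasure m1 := by rw [hm1]; infer_instance
    refine Measure.ext_prod fun {A B} hA hB => ?_
    -- compare as measures in `B`
    have hmeas : (μ.restrict (T ⁻¹' A)).map X
        = ((m2.restrict (A ×ˢ Set.univ)).map Prod.snd) := by
      apply ext_of_forall_lintegral_eq_of_IsFiniteMeasure
      intro φ
      have hφ : Measurable fun y => (φ y : ℝ≥0∞) := by fun_prop
      rw [lintegral_map hφ hX, h A hA φ, lintegral_map hφ measurable_snd,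
        ← lintegral_indicator (hA.prod MeasurableSet.univ),
        I2 (Set.indicator (A ×ˢ Set.univ) fun a => (φ a.2 : ℝ≥0∞)) ((hφ.comp measurable_snd).indicator (hA.prod MeasurableSet.univ)),
        ← lintegral_indicator (hT hA)]
      apply lintegral_congr
      intro ω
      by_cases hω : T ω ∈ A
      · simp [Set.indicator, hω]
      · simp [Set.indicator, hω]
    have := congrArg (fun m => m B) hmeas
    rw [Measure.map_apply hX hB, Measure.restrict_apply (hX hB), Measure.map_apply measurable_snd hB,
      Measure.restrict_apply (measurable_snd hB)] at this
    rw [hm1, Measure.map_apply hTX (hA.prod hB)]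
    convert this using 2
    · ext ω; simp [and_comm]
    · ext ω; simp [and_comm]
  rw [← I1 Φ hΦ, key, I2 Φ hΦ]

lemma meas_joint (q : Ω → EuclideanSpace ℝ (Fin d) → ℝ) (h1 : ∀ ω, Continuous (q ω))
    (h2 : ∀ x, Measurable fun ω => q ω x) : Measurable (Function.uncurry q) := by
  have h1 : Measurable (Function.uncurry fun (x : EuclideanSpace ℝ (Fin d)) (ω : Ω) => q ω x) :=
    measurable_uncurry_of_continuous_of_measurable h1 h2
  exact h1.comp measurable_swap

end CLgen

section proc
variable {Ω : Type*} [mΩ : MeasurableSpace Ω] {μ : Measure Ω} [IsProbabilityMeasure μ]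
  {d : ℕ} {F : ℕ → MeasurableSpace Ω} {η : ℝ} {γ b lam : ℕ → ℝ}
  {f q0 K : EuclideanSpace ℝ (Fin d) → ℝ} {c Cf CK : ℝ} {LK : ℝ≥0}
  {X : ℕ → Ω → EuclideanSpace ℝ (Fin d)} {w : ℕ → Ω → ℝ}
  {g q : ℕ → Ω → EuclideanSpace ℝ (Fin d) → ℝ}

lemma Proc.qint (P : Proc μ F η γ b lam f q0 K X w g q) (T : Targ d f q0 K c Cf CK LK) (n : ℕ) (ω : Ω) :
    Integrable (q n ω) := by
  have : q n ω = fun x => (1 - lam n) * (g n ω x / (∫ y, g n ω y)) + lam n * q0 x := by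
    ext x; exact P.hq n ω x
  rw [this]
  exact (((P.gint n ω).div_const _).const_mul _).add (T.q0int.const_mul _)

lemma Proc.qcont (P : Proc μ F η γ b lam f q0 K X w g q) (T : Targ d f q0 K c Cf CK LK) (n : ℕ) (ω : Ω) :
    Continuous (q n ω) := by
  have : q n ω = fun x => (1 - lam n) * (g n ω x / (∫ y, g n ω y)) + lam n * q0 x := by
    ext x; exact P.hq n ω x
  rw [this]
  have := P.gcont n ω
  have := T.q0c
  fun_prop

lemma Proc.qj (P : Proc μ F η γ b lam f q0 K X w g q) (T : Targ d f q0 K c Cf CK LK) (n : ℕ) :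
    Measurable[(F n).prod inferInstance] (Function.uncurry (q n)) := by
  exact @meas_joint Ω (F n) d (q n) (fun ω => P.qcont T n ω) (fun x => P.qm n x)

lemma Proc.q1 (P : Proc μ F η γ b lam f q0 K X w g q) :
    ∀ᵐ ω ∂μ, ∀ n, ∫ x, q n ω x = 1 := by
  rw [ae_all_iff]
  intro n
  have := P.pol n (fun _ => 1) continuous_const ⟨1, by simp⟩
  rw [condExp_const (P.Fle n)] at this
  filter_upwards [this] with ω hω
  simpa using hω.symm

lemma Proc.qnn (P : Proc μ F η γ b lam f q0 K X w g q) (T : Targ d f q0 K c Cf CK LK) :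
    ∀ᵐ ω ∂μ, ∀ n x, 0 ≤ q n ω x := by
  rw [ae_all_iff]
  intro n
  let u := TopologicalSpace.denseSeq (EuclideanSpace ℝ (Fin d))
  let φ : ℕ → ℕ → EuclideanSpace ℝ (Fin d) → ℝ := fun j k y => max 0 (1 / ((k:ℝ) + 1) - dist y (u j))
  have φc : ∀ j k, Continuous (φ j k) := fun j k => by fun_prop
  have φ0 : ∀ j k y, 0 ≤ φ j k y := fun j k y => le_max_left _ _
  have φb : ∀ j k y, |φ j k y| ≤ 1 := fun j k y => by
    rw [abs_of_nonneg (φ0 j k y)]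
    apply max_le zero_le_one
    have : 1 / ((k:ℝ) + 1) ≤ 1 := by
      rw [div_le_one (by positivity)]; linarith [(Nat.cast_nonneg k : (0:ℝ) ≤ k)]
    linarith [dist_nonneg (x := y) (y := u j)]
  have h1 : ∀ᵐ ω ∂μ, ∀ j k, 0 ≤ ∫ y, φ j k y * q n ω y := by
    rw [ae_all_iff]; intro j
    rw [ae_all_iff]; intro k
    have h := P.pol n (φ j k) (φc j k) ⟨1, φb j k⟩
    have h2 : 0 ≤ᵐ[μ] μ[fun ω => φ j k (X (n+1) ω) | F n] :=
      condExp_nonneg (Eventually.of_forall fun ω => φ0 j k _)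
    filter_upwards [h, h2] with ω a1 a2
    rw [← a1]; exact a2
  filter_upwards [h1] with ω hω x
  by_contra hx
  push Not at hx
  have hc := P.qcont T n ω
  have hopen : IsOpen {y | q n ω y < 0} := isOpen_lt hc continuous_const
  obtain ⟨ε, ε0, hε⟩ := Metric.isOpen_iff.1 hopen x hx
  obtain ⟨k, hk⟩ := exists_nat_one_div_lt (half_pos ε0)
  have hkp : 0 < 1 / ((k:ℝ) + 1) := by positivity
  obtain ⟨j, hj⟩ := (TopologicalSpace.denseRange_denseSeq (EuclideanSpace ℝ (Fin d))).exists_dist_lt x hkp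
  have hle : ∀ y, φ j k y * q n ω y ≤ 0 := fun y => by
    by_cases hy : dist y (u j) < 1 / ((k:ℝ) + 1)
    · have : y ∈ ball x ε := by
        rw [mem_ball]
        have := dist_triangle y (u j) x
        rw [dist_comm (u j) x] at this
        change dist x (u j) < _ at hj
        linarith
      exact mul_nonpos_of_nonneg_of_nonpos (φ0 _ _ _) (le_of_lt (hε this))
    · have : φ j k y = 0 := max_eq_left (by linarith)
      simp [this]
  have hI : Integrable fun y => φ j k y * q n ω y :=
    (P.qint T n ω).bdd_mul (c := 1) (φc j k).aestronglyMeasurable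
      (Eventually.of_forall fun y => φb j k y)
  have h0 : ∫ y, -(φ j k y * q n ω y) = 0 := by
    apply le_antisymm
    · rw [integral_neg]; linarith [hω j k]
    · exact integral_nonneg fun y => by simpa using hle y
  rw [integral_eq_zero_iff_of_nonneg (fun y => by simpa using hle y) (by exact hI.neg)] at h0
  have h3 := (Continuous.ae_eq_iff_eq volume (by have := φc j k; fun_prop) continuous_zero).1 h0
  have h4 := congrFun h3 x
  simp only [Pi.zero_apply, neg_eq_zero, mul_eq_zero] at h4
  rcases h4 with h4 | h4
  · have : 0 < φ j k x := lt_max_of_lt_right (by change dist x (u j) < _ at hj; linarith)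
    linarith
  · linarith

lemma Proc.CL (P : Proc μ F η γ b lam f q0 K X w g q) (T : Targ d f q0 K c Cf CK LK) (n : ℕ)
    (Φ : Ω × EuclideanSpace ℝ (Fin d) → ℝ≥0∞) (hΦ : Measurable[(F n).prod inferInstance] Φ) :
    ∫⁻ ω, Φ (ω, X (n+1) ω) ∂μ = ∫⁻ ω, (∫⁻ y, Φ (ω, y) * ENNReal.ofReal (q n ω y)) ∂μ := by
  refine @CL_gen Ω Ω mΩ (F n) d μ _ id ?_ (X (n+1)) ((P.XF (n+1)).mono (P.Fle _) le_rfl) (q n) (P.qj T n) ?_ Φ hΦ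
  · exact measurable_id.mono (P.Fle n) le_rfl
  intro A hA φ
  simp only [Set.preimage_id, id]
  have hXm : Measurable (X (n+1)) := (P.XF (n+1)).mono (P.Fle _) le_rfl
  have φc : Continuous fun y => (φ y : ℝ) := by fun_prop
  obtain ⟨C, hC⟩ : ∃ C : ℝ, ∀ y, |(φ y : ℝ)| ≤ C := by
    refine ⟨nndist φ 0, fun y => ?_⟩
    have h1 := BoundedContinuousFunction.NNReal.upper_bound φ y
    rw [abs_of_nonneg (NNReal.coe_nonneg _)]
    exact_mod_cast h1
  have hpol := P.pol n (fun y => (φ y : ℝ)) φc ⟨C, hC⟩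
  have hi1 : Integrable (fun ω => (φ (X (n+1) ω) : ℝ)) μ :=
    Integrable.of_bound (φc.measurable.comp hXm).aestronglyMeasurable C
      (Eventually.of_forall fun ω => hC _)
  have e1 := setIntegral_condExp (P.Fle n) hi1 hA
  have hi2 : Integrable (fun ω => ∫ y, (φ y : ℝ) * q n ω y) μ :=
    integrable_condExp.congr hpol
  rw [setIntegral_congr_ae (P.Fle n _ hA) (hpol.mono fun ω h _ => h)] at e1
  have e2 : ∫⁻ ω in A, (φ (X (n+1) ω) : ℝ≥0∞) ∂μ = ENNReal.ofReal (∫ ω in A, (φ (X (n+1) ω) : ℝ) ∂μ) := by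
    rw [ofReal_integral_eq_lintegral_ofReal hi1.restrict (Eventually.of_forall fun ω => (φ _).2)]
    simp
  rw [e2, ← e1, ofReal_integral_eq_lintegral_ofReal hi2.restrict]
  · apply lintegral_congr_ae
    filter_upwards [ae_restrict_of_ae (P.qnn T)] with ω hω
    have hI : Integrable fun y => (φ y : ℝ) * q n ω y :=
      (P.qint T n ω).bdd_mul (c := C) φc.aestronglyMeasurable (Eventually.of_forall fun y => hC y)
    rw [ofReal_integral_eq_lintegral_ofReal hI
      (Eventually.of_forall fun y => mul_nonneg (φ y).2 (hω n y))]
    apply lintegral_congr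
    intro y
    rw [ENNReal.ofReal_mul (NNReal.coe_nonneg _)]
    simp
  · filter_upwards [ae_restrict_of_ae (P.qnn T)] with ω hω
    exact integral_nonneg fun y => mul_nonneg (φ y).2 (hω n y)

end proc

set_option linter.unusedSectionVars false

lemma graph_meas {Ω : Type*} {m1 m2 : MeasurableSpace Ω} {d : ℕ} (h : m1 ≤ m2)
    {X : Ω → EuclideanSpace ℝ (Fin d)} (hX : Measurable[m2] X) :
    @Measurable _ _ m2 (m1.prod inferInstance) fun ω => (ω, X ω) :=
  Measurable.prodMk (measurable_id.mono h le_rfl) hX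

lemma ind_meas {Ω : Type*} [MeasurableSpace Ω] {d : ℕ} {V : Set Ω} (hV : MeasurableSet V)
    {W : Set (Ω × EuclideanSpace ℝ (Fin d))} (hW : MeasurableSet W) :
    MeasurableSet (Prod.fst ⁻¹' V ∩ W) := (measurable_fst hV).inter hW

lemma ind_meas' {Ω : Type*} [MeasurableSpace Ω] {V : Set Ω} (hV : MeasurableSet V) :
    Measurable (Set.indicator V (fun _ => (1:ℝ≥0∞))) :=
  measurable_const.indicator hV

section proc2
variable {Ω : Type*} [mΩ : MeasurableSpace Ω] {μ : Measure Ω} [IsProbabilityMeasure μ]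
  {d : ℕ} {F : ℕ → MeasurableSpace Ω} {η : ℝ} {γ b lam : ℕ → ℝ}
  {f q0 K : EuclideanSpace ℝ (Fin d) → ℝ} {c Cf CK : ℝ} {LK : ℝ≥0}
  {X : ℕ → Ω → EuclideanSpace ℝ (Fin d)} {w : ℕ → Ω → ℝ}
  {g q : ℕ → Ω → EuclideanSpace ℝ (Fin d) → ℝ}

lemma Proc.CLset (P : Proc μ F η γ b lam f q0 K X w g q)
    (T : Targ d f q0 K c Cf CK LK) (n : ℕ) {V : Set Ω} (hV : MeasurableSet[F n] V)
    {W : Set (Ω × EuclideanSpace ℝ (Fin d))} (hW : MeasurableSet[(F n).prod inferInstance] W)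
    {θ : ℝ≥0∞} (h : ∀ᵐ ω ∂μ, ω ∈ V →
      ∫⁻ y, W.indicator (fun _ => 1) (ω, y) * ENNReal.ofReal (q n ω y) ≤ θ) :
    μ (V ∩ {ω | (ω, X (n + 1) ω) ∈ W}) ≤ θ * μ V := by
  have hW' : MeasurableSet[(F n).prod inferInstance] (Prod.fst ⁻¹' V ∩ W) := @ind_meas Ω (F n) d _ hV _ hW
  have hcl := P.CL T n _ (@ind_meas' _ ((F n).prod inferInstance) _ hW')
  have hXm : Measurable (X (n + 1)) := (P.XF (n + 1)).mono (P.Fle _) le_rfl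
  have hm : MeasurableSet (V ∩ {ω | (ω, X (n + 1) ω) ∈ W}) :=
    (graph_meas (P.Fle n) hXm) hW'
  have e1 : ∫⁻ ω, Set.indicator (Prod.fst ⁻¹' V ∩ W) (fun _ => (1:ℝ≥0∞))
      (ω, X (n + 1) ω) ∂μ = μ (V ∩ {ω | (ω, X (n + 1) ω) ∈ W}) := by
    rw [← lintegral_indicator_one hm]
    rfl
  rw [← e1, hcl]
  have e2 : θ * μ V = ∫⁻ ω, V.indicator (fun _ => θ) ω ∂μ := by
    rw [lintegral_indicator (P.Fle n _ hV)]
    simp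
  rw [e2]
  apply lintegral_mono_ae
  filter_upwards [h] with ω hω
  by_cases hv : ω ∈ V
  · rw [Set.indicator_of_mem hv]
    refine le_trans (lintegral_mono fun y => ?_) (hω hv)
    gcongr
    exact Set.inter_subset_right
  · rw [Set.indicator_of_notMem hv]
    refine le_of_eq (lintegral_eq_zero_of_ae_eq_zero (Eventually.of_forall fun y => ?_))
    simp [Set.indicator, hv]

lemma forall_dense {E : Type*} [TopologicalSpace E] [TopologicalSpace.SeparableSpace E] [Nonempty E]
    {p : E → Prop} (hp : IsOpen {x | ¬ p x}) :
    (∀ x, p x) ↔ ∀ k, p (TopologicalSpace.denseSeq E k) := by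
  refine ⟨fun h k => h _, fun h x => ?_⟩
  by_contra hx
  obtain ⟨k, hk⟩ := (TopologicalSpace.denseRange_denseSeq E).exists_mem_open hp ⟨x, hx⟩
  exact hk (h k)

lemma Proc.peq (S : Sched d η γ b lam) (P : Proc μ F η γ b lam f q0 K X w g q) (n : ℕ) (ω : Ω)
    (x : EuclideanSpace ℝ (Fin d)) :
    g n ω x / (∫ y, g n ω y) = (q n ω x - lam n * q0 x) / (1 - lam n) := by
  have : (1 - lam n) ≠ 0 := by linarith [S.lle n]
  rw [P.hq n ω x]
  field_simp
  ring

lemma Proc.pm (S : Sched d η γ b lam) (P : Proc μ F η γ b lam f q0 K X w g q) (n : ℕ)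
    (x : EuclideanSpace ℝ (Fin d)) :
    Measurable[F n] fun ω => g n ω x / (∫ y, g n ω y) := by
  simp_rw [P.peq S]
  exact ((P.qm n x).sub_const _).div_const _

/-- bad event for the normalised mixture -/
def badv (lam : ℕ → ℝ) (f q0 : EuclideanSpace ℝ (Fin d) → ℝ)
    (g : ℕ → Ω → EuclideanSpace ℝ (Fin d) → ℝ) (n L : ℕ) : Set Ω :=
  {ω | (∀ x, 0 < f x → g n ω x / (∫ y, g n ω y) ≤ 0) ∧
    ∃ x, (1 - lam L) * (g n ω x / (∫ y, g n ω y)) + lam L * q0 x < 0}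

lemma Proc.badv_meas (S : Sched d η γ b lam) (P : Proc μ F η γ b lam f q0 K X w g q)
    (T : Targ d f q0 K c Cf CK LK) (n L : ℕ) : MeasurableSet[F n] (badv lam f q0 g n L) := by
  have hpc : ∀ ω, Continuous fun x => g n ω x / (∫ y, g n ω y) := fun ω => (P.gcont n ω).div_const _
  have e : badv lam f q0 g n L = {ω | (∀ k, 0 < f (TopologicalSpace.denseSeq _ k) →
      g n ω (TopologicalSpace.denseSeq _ k) / (∫ y, g n ω y) ≤ 0)} ∩
      {ω | ∀ k, 0 ≤ (1 - lam L) * (g n ω (TopologicalSpace.denseSeq _ k) / (∫ y, g n ω y))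
        + lam L * q0 (TopologicalSpace.denseSeq _ k)}ᶜ := by
    ext ω
    have h1 := forall_dense (E := EuclideanSpace ℝ (Fin d))
      (p := fun x => 0 < f x → g n ω x / (∫ y, g n ω y) ≤ 0) (by
        have : {x | ¬ (0 < f x → g n ω x / (∫ y, g n ω y) ≤ 0)}
          = {x | 0 < f x} ∩ {x | 0 < g n ω x / (∫ y, g n ω y)} := by ext x; simp
        rw [this]
        exact (isOpen_lt continuous_const T.fc).inter (isOpen_lt continuous_const (hpc ω)))
    have h2 := forall_dense (E := EuclideanSpace ℝ (Fin d))
      (p := fun x => 0 ≤ (1 - lam L) * (g n ω x / (∫ y, g n ω y)) + lam L * q0 x) (by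
        simp only [not_le]
        exact isOpen_lt (((hpc ω).const_mul _).add (T.q0c.const_mul _)) continuous_const)
    simp only [badv, Set.mem_ofPred_eq, Set.mem_inter_iff, Set.mem_compl_iff, ← h1, ← h2, not_forall, not_le]
  rw [e]
  apply MeasurableSet.inter
  · have : {ω | (∀ k, 0 < f (TopologicalSpace.denseSeq _ k) →
      g n ω (TopologicalSpace.denseSeq _ k) / (∫ y, g n ω y) ≤ 0)} =
      ⋂ k, ⋂ (_ : 0 < f (TopologicalSpace.denseSeq _ k)),
        {ω | g n ω (TopologicalSpace.denseSeq _ k) / (∫ y, g n ω y) ≤ 0} := by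
      ext ω; simp
    rw [this]
    refine MeasurableSet.iInter fun k => MeasurableSet.iInter fun _ => ?_
    exact measurableSet_le (P.pm S n _) measurable_const
  · refine MeasurableSet.compl ?_
    rw [Set.ofPred_forall]
    refine MeasurableSet.iInter fun k => ?_
    exact measurableSet_le measurable_const (((P.pm S n _).const_mul _).add_const _)

lemma Proc.badv_null (S : Sched d η γ b lam) (P : Proc μ F η γ b lam f q0 K X w g q)
    (T : Targ d f q0 K c Cf CK LK) (k : ℕ) : ∀ n, μ (badv lam f q0 g n (n + k)) = 0 := by
  induction k with
  | zero =>
    intro n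
    have h : ∀ᵐ ω ∂μ, ω ∉ badv lam f q0 g n (n + 0) := by
      filter_upwards [P.qnn T] with ω hω
      rintro ⟨_, x, hx⟩
      have := hω n x
      rw [P.hq n ω x] at this
      simp only [add_zero] at hx
      linarith
    simpa [ae_iff] using h
  | succ k ih =>
    intro n
    set V := badv lam f q0 g n (n + (k + 1)) with hV
    have hVm := P.badv_meas S T n (n + (k + 1))
    have hU : MeasurableSet {y : EuclideanSpace ℝ (Fin d) | 0 < f y} :=
      (isOpen_lt continuous_const T.fc).measurableSet
    have h1 : V ∩ {ω | ¬ 0 < f (X (n + 1) ω)} ⊆ badv lam f q0 g (n + 1) (n + 1 + k) := by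
      rintro ω ⟨hv, hf⟩
      have hf0 : f (X (n + 1) ω) = 0 := le_antisymm (not_lt.1 hf) (T.f0 _)
      have hg : ∀ x, g (n + 1) ω x = (1 - γ (n + 1)) * g n ω x := fun x => by
        rw [P.hg, P.hw, hf0, zero_div, Real.zero_rpow S.η0.ne']; ring
      have hp : ∀ x, g (n + 1) ω x / (∫ y, g (n + 1) ω y) = g n ω x / (∫ y, g n ω y) := fun x => by
        simp_rw [hg]
        rw [integral_const_mul, mul_div_mul_left]
        linarith [S.gle (n + 1)]
      rw [hV] at hv
      simp only [badv, Set.mem_ofPred_eq, hp] at hv ⊢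
      rwa [show n + 1 + k = n + (k + 1) by ring]
    have h2 : μ (V ∩ {ω | 0 < f (X (n + 1) ω)}) ≤ μ V / 2 := by
      have := P.CLset T n hVm (@MeasurableSet.prod _ _ (F n) _ _ _ (@MeasurableSet.univ _ (F n)) hU) (θ := 1/2) (Eventually.of_forall fun ω hω => ?_)
      · simpa [ENNReal.div_eq_inv_mul] using this
      · calc _ ≤ ∫⁻ y, ENNReal.ofReal (lam n * q0 y) := by
              apply lintegral_mono
              intro y
              by_cases hy : 0 < f y
              · simp only [Set.indicator, Set.mem_prod, Set.mem_univ, Set.mem_ofPred_eq, hy, and_self, if_true, one_mul]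
                apply ENNReal.ofReal_le_ofReal
                rw [P.hq]
                have := hω.1 y hy
                nlinarith [S.lle n]
              · simp [Set.indicator, hy]
          _ = ENNReal.ofReal (lam n) := by
              rw [← ofReal_integral_eq_lintegral_ofReal (T.q0int.const_mul _)
                (Eventually.of_forall fun y => mul_nonneg (S.lpos n).le (T.q00 y)), integral_const_mul, T.q01,
                mul_one]
          _ ≤ ENNReal.ofReal (1 / 2) := ENNReal.ofReal_le_ofReal (S.lle n)
          _ = 1 / 2 := by
              rw [ENNReal.ofReal_div_of_pos (by norm_num)]; simp
    have h3 : μ V ≤ μ V / 2 := by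
      calc μ V ≤ μ ((V ∩ {ω | 0 < f (X (n + 1) ω)}) ∪ (V ∩ {ω | ¬ 0 < f (X (n + 1) ω)})) := by
            apply measure_mono
            intro ω hω
            by_cases h : 0 < f (X (n + 1) ω)
            · exact Or.inl ⟨hω, h⟩
            · exact Or.inr ⟨hω, h⟩
        _ ≤ _ := measure_union_le _ _
        _ ≤ μ V / 2 + 0 := add_le_add h2 ((measure_mono h1).trans (ih (n + 1)).le)
        _ = _ := add_zero _
    by_contra hne
    exact absurd (ENNReal.half_lt_self hne (measure_ne_top μ V)) (not_lt.2 h3)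

lemma Proc.P1 (S : Sched d η γ b lam) (P : Proc μ F η γ b lam f q0 K X w g q)
    (T : Targ d f q0 K c Cf CK LK) : ∀ᵐ ω ∂μ, ∀ n,
      (∀ x, 0 < f x → g n ω x / (∫ y, g n ω y) ≤ 0) → ∀ x, 0 ≤ g n ω x / (∫ y, g n ω y) := by
  have h : ∀ᵐ ω ∂μ, ∀ n k, ω ∉ badv lam f q0 g n (n + k) := by
    rw [ae_all_iff]; intro n
    rw [ae_all_iff]; intro k
    simpa [ae_iff] using P.badv_null S T k n
  filter_upwards [h] with ω hω n hn x
  have h1 : ∀ k, 0 ≤ (1 - lam (n + k)) * (g n ω x / (∫ y, g n ω y)) + lam (n + k) * q0 x := fun k => by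
    by_contra hx
    exact hω n k ⟨hn, x, not_le.1 hx⟩
  have h2 : Tendsto (fun k => lam (n + k)) atTop (𝓝 0) := by
    simpa [add_comm] using (tendsto_add_atTop_iff_nat n).2 S.l0
  have h3 : Tendsto (fun k => (1 - lam (n + k)) * (g n ω x / (∫ y, g n ω y)) + lam (n + k) * q0 x) atTop
      (𝓝 ((1 - 0) * (g n ω x / (∫ y, g n ω y)) + 0 * q0 x)) :=
    ((tendsto_const_nhds.sub h2).mul_const _).add (h2.mul_const _)
  have := ge_of_tendsto' h3 h1
  simpa using this


lemma wmeas {Ω : Type*} [MeasurableSpace Ω] {d : ℕ} {f : EuclideanSpace ℝ (Fin d) → ℝ} (hf : Measurable f)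
    {q : Ω → EuclideanSpace ℝ (Fin d) → ℝ} (hq : Measurable (Function.uncurry q)) :
    Measurable fun z : Ω × EuclideanSpace ℝ (Fin d) => f z.2 / q z.1 z.2 :=
  (hf.comp measurable_snd).div hq

lemma Proc.wm (P : Proc μ F η γ b lam f q0 K X w g q) (T : Targ d f q0 K c Cf CK LK) (n : ℕ) :
    Measurable[F (n + 1)] (w (n + 1)) := by
  have h1 := @wmeas Ω (F n) d f T.fc.measurable (q n) (P.qj T n)
  have h2 := @graph_meas Ω (F n) (F (n + 1)) d (P.Fmono (Nat.le_succ n)) _ (P.XF (n + 1))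
  have h3 : w (n + 1) = fun ω => f (X (n + 1) ω) / q n ω (X (n + 1) ω) := by
    ext ω; exact P.hw n ω
  rw [h3]
  exact @Measurable.comp _ _ _ (F (n+1)) ((F n).prod inferInstance) _ _ _ h1 h2

lemma lt_meas {α : Type*} [MeasurableSpace α] {h : α → ℝ} (hh : Measurable h) :
    MeasurableSet {z | h z < 1 / 2} := measurableSet_lt hh measurable_const

lemma esc_int (T : Targ d f q0 K c Cf CK LK) {l : ℝ} (hl : 0 < l) {p : EuclideanSpace ℝ (Fin d) → ℝ}
    (hp : Integrable p) (hpc : Continuous p) (hp0 : ∀ x, 0 ≤ p x) (hp1 : ∫ x, p x = 1)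
    (h : ∀ x, l * q0 x ≤ p x) :
    ∫ y in {y | f y / p y < 1 / 2}, p y ≤ 1 - c / 2 * l := by
  have hU : MeasurableSet {y | f y / p y < 1 / 2} :=
    measurableSet_lt (T.fc.measurable.div hpc.measurable) measurable_const
  have hlow : ∀ y, l * c * f y ≤ p y := fun y => by
    have := mul_le_mul_of_nonneg_left (T.cf y) hl.le
    linarith [h y]
  have h1 : ∫ y in {y | f y / p y < 1 / 2}, f y ≤ 1 / 2 := by
    calc _ ≤ ∫ y in {y | f y / p y < 1 / 2}, p y / 2 := by
          apply setIntegral_mono_on T.fint.integrableOn (hp.div_const _).integrableOn hU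
          intro y hy
          rcases (hp0 y).eq_or_lt with h0 | h0
          · have := hlow y
            rw [← h0] at this
            have h2 : 0 < l * c := mul_pos hl T.c0
            rw [← h0]
            nlinarith
          · have := (div_lt_iff₀ h0).1 hy
            linarith
      _ ≤ ∫ y, p y / 2 := setIntegral_le_integral (hp.div_const _) (Eventually.of_forall fun y => by
          have := hp0 y; simp only [Pi.zero_apply]; linarith)
      _ = 1 / 2 := by rw [integral_div, hp1]
  have h2 := integral_add_compl hU T.fint
  have h3 := integral_add_compl hU hp
  have h4 : l * c * ∫ y in {y | f y / p y < 1 / 2}ᶜ, f y ≤ ∫ y in {y | f y / p y < 1 / 2}ᶜ, p y := by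
    rw [← integral_const_mul]
    exact setIntegral_mono (T.fint.const_mul _).integrableOn hp.integrableOn hlow
  rw [T.f1] at h2
  rw [hp1] at h3
  have h5 : 0 < l * c := mul_pos hl T.c0
  nlinarith

/-- event of staying in the escape regime -/
def staySet (lam : ℕ → ℝ) (q0 : EuclideanSpace ℝ (Fin d) → ℝ) (w : ℕ → Ω → ℝ)
    (q : ℕ → Ω → EuclideanSpace ℝ (Fin d) → ℝ) (n0 : ℕ) : ℕ → Set Ω
  | 0 => Set.univ
  | k + 1 => (staySet lam q0 w q n0 k ∩ {ω | ∀ x, lam (n0 + k) * q0 x ≤ q (n0 + k) ω x}) ∩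
      {ω | w (n0 + k + 1) ω < 1 / 2}

lemma Proc.hmeas (P : Proc μ F η γ b lam f q0 K X w g q) (T : Targ d f q0 K c Cf CK LK) (n : ℕ) :
    MeasurableSet[F n] {ω | ∀ x, lam n * q0 x ≤ q n ω x} := by
  have e : {ω | ∀ x, lam n * q0 x ≤ q n ω x} = {ω | ∀ k, lam n * q0 (TopologicalSpace.denseSeq _ k)
      ≤ q n ω (TopologicalSpace.denseSeq _ k)} := by
    ext ω
    apply forall_dense
    simp only [not_le]
    exact isOpen_lt (P.qcont T n ω) (T.q0c.const_mul _)
  rw [e, Set.ofPred_forall]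
  refine MeasurableSet.iInter fun k => ?_
  exact measurableSet_le measurable_const (P.qm n _)

lemma Proc.stay_meas (P : Proc μ F η γ b lam f q0 K X w g q) (T : Targ d f q0 K c Cf CK LK) (n0 k : ℕ) :
    MeasurableSet[F (n0 + k)] (staySet lam q0 w q n0 k) := by
  induction k with
  | zero => exact @MeasurableSet.univ _ (F (n0 + 0))
  | succ k ih =>
    have hF := P.Fmono (Nat.le_succ (n0 + k))
    refine MeasurableSet.inter (MeasurableSet.inter (hF _ ih) (hF _ (P.hmeas T (n0 + k)))) ?_
    exact measurableSet_lt (P.wm T (n0 + k)) measurable_const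

lemma Proc.stay_le (S : Sched d η γ b lam) (P : Proc μ F η γ b lam f q0 K X w g q)
    (T : Targ d f q0 K c Cf CK LK) (n0 k : ℕ) :
    μ (staySet lam q0 w q n0 (k + 1)) ≤ ENNReal.ofReal (1 - c / 2 * lam (n0 + k)) *
      μ (staySet lam q0 w q n0 k) := by
  set n := n0 + k with hn
  set V := staySet lam q0 w q n0 k ∩ {ω | ∀ x, lam (n0 + k) * q0 x ≤ q (n0 + k) ω x} with hV
  have hVm : MeasurableSet[F n] V := MeasurableSet.inter (P.stay_meas T n0 k) (P.hmeas T n)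
  have hWm : MeasurableSet[(F n).prod inferInstance]
      {z : Ω × EuclideanSpace ℝ (Fin d) | f z.2 / q n z.1 z.2 < 1 / 2} :=
    @lt_meas _ ((F n).prod inferInstance) _ (@wmeas Ω (F n) d f T.fc.measurable (q n) (P.qj T n))
  have e : staySet lam q0 w q n0 (k + 1) = V ∩ {ω | (ω, X (n + 1) ω) ∈
      {z : Ω × EuclideanSpace ℝ (Fin d) | f z.2 / q n z.1 z.2 < 1 / 2}} := by
    ext ω
    simp only [staySet, Set.mem_inter_iff, Set.mem_ofPred_eq, hV, P.hw, hn]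
  rw [e]
  refine (P.CLset T n hVm hWm (θ := ENNReal.ofReal (1 - c / 2 * lam n)) ?_).trans ?_
  · filter_upwards [P.qnn T, P.q1] with ω h0 h1 hω
    have hU : MeasurableSet {y | f y / q n ω y < 1 / 2} :=
      measurableSet_lt (T.fc.measurable.div (P.qcont T n ω).measurable) measurable_const
    have := esc_int T (S.lpos n) (P.qint T n ω) (P.qcont T n ω) (h0 n) (h1 n) hω.2
    refine le_trans (le_of_eq ?_) (ENNReal.ofReal_le_ofReal this)
    rw [ofReal_integral_eq_lintegral_ofReal (P.qint T n ω).restrict (Eventually.of_forall (h0 n)),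
      ← lintegral_indicator hU]
    apply lintegral_congr
    intro y
    by_cases hy : f y / q n ω y < 1 / 2
    · rw [Set.indicator_of_mem (show (ω, y) ∈ {z : Ω × EuclideanSpace ℝ (Fin d) | f z.2 / q n z.1 z.2 < 1 / 2} from hy),
        Set.indicator_of_mem (show y ∈ {y | f y / q n ω y < 1 / 2} from hy), one_mul]
    · rw [Set.indicator_of_notMem (show (ω, y) ∉ {z : Ω × EuclideanSpace ℝ (Fin d) | f z.2 / q n z.1 z.2 < 1 / 2} from hy),
        Set.indicator_of_notMem (show y ∉ {y | f y / q n ω y < 1 / 2} from hy), zero_mul]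
  · gcongr
    exact Set.inter_subset_left

lemma Targ.c1 (T : Targ d f q0 K c Cf CK LK) : c ≤ 1 := by
  have := integral_mono (T.fint.const_mul c) T.q0int T.cf
  rwa [integral_const_mul, T.f1, T.q01, mul_one] at this

lemma Proc.stay_lim (S : Sched d η γ b lam) (P : Proc μ F η γ b lam f q0 K X w g q)
    (T : Targ d f q0 K c Cf CK LK) {n0 : ℕ} (hn0 : ∀ n ≥ n0, γ n ≤ lam n) :
    Tendsto (fun k => μ (staySet lam q0 w q n0 k)) atTop (𝓝 0) := by
  have hc := T.c0
  have hc1 := T.c1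
  have hb : ∀ k, μ (staySet lam q0 w q n0 k)
      ≤ ENNReal.ofReal (∏ j ∈ Finset.Ico n0 (n0 + k), (1 - c / 2 * γ (j + 1))) := by
    intro k
    induction k with
    | zero => simpa using prob_le_one
    | succ k ih =>
      refine (P.stay_le S T n0 k).trans ?_
      rw [← add_assoc, Finset.prod_Ico_succ_top (by omega), ENNReal.ofReal_mul, mul_comm]
      · refine mul_le_mul' ih (ENNReal.ofReal_le_ofReal ?_)
        have h1 : γ (n0 + k + 1) ≤ lam (n0 + k) := (hn0 _ (by omega)).trans (S.lanti (Nat.le_succ _))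
        nlinarith
      · apply Finset.prod_nonneg
        intro j _
        nlinarith [S.gle (j + 1), S.gpos (j + 1)]
  have hlim : Tendsto (fun k => (pp γ (n0 + k) / pp γ n0) ^ (c / 2 / 2)) atTop (𝓝 0) := by
    have h1 : Tendsto (fun k => pp γ (n0 + k) / pp γ n0) atTop (𝓝 0) := by
      have : Tendsto (fun k => pp γ (n0 + k)) atTop (𝓝 0) := by
        simpa [add_comm] using (tendsto_add_atTop_iff_nat n0).2 S.pp_tendsto
      simpa using this.div_const (pp γ n0)
    have := h1.rpow_const (p := c / 2 / 2) (Or.inr (by positivity))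
    rwa [Real.zero_rpow (by positivity)] at this
  have hlim2 := ENNReal.tendsto_ofReal hlim
  rw [ENNReal.ofReal_zero] at hlim2
  refine tendsto_of_tendsto_of_tendsto_of_le_of_le tendsto_const_nhds hlim2 (fun _ => zero_le) fun k => ?_
  exact (hb k).trans (ENNReal.ofReal_le_ofReal (S.slow (by positivity) (by linarith) (by omega)))

lemma Proc.P2 (S : Sched d η γ b lam) (P : Proc μ F η γ b lam f q0 K X w g q)
    (T : Targ d f q0 K c Cf CK LK) : ∀ᵐ ω ∂μ,
      ¬ ∃ n0, ∀ n ≥ n0, (∀ x, lam n * q0 x ≤ q n ω x) ∧ w (n + 1) ω < 1 / 2 := by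
  obtain ⟨N, hN⟩ : ∃ N, ∀ n ≥ N, γ n ≤ lam n := by
    have := S.gl.eventually (gt_mem_nhds one_pos)
    obtain ⟨N, hN⟩ := eventually_atTop.1 this
    refine ⟨N, fun n hn => ?_⟩
    have := (div_lt_one (S.lpos n)).1 (hN n hn)
    exact this.le
  have key : ∀ m, ∀ᵐ ω ∂μ, ω ∉ ⋂ k, staySet lam q0 w q (N + m) k := fun m => by
    have h := P.stay_lim S T (n0 := N + m) (fun n hn => hN n (by omega))
    have : μ (⋂ k, staySet lam q0 w q (N + m) k) = 0 := by
      refine le_antisymm (ge_of_tendsto' h fun k => measure_mono (Set.iInter_subset _ k)) zero_le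
    rw [ae_iff]
    simp only [not_not]
    exact this
  rw [← ae_all_iff] at key
  filter_upwards [key] with ω hω
  rintro ⟨n0, hn0⟩
  refine hω n0 (Set.mem_iInter.2 fun k => ?_)
  induction k with
  | zero => trivial
  | succ k ih => exact ⟨⟨ih, (hn0 _ (by omega)).1⟩, (hn0 _ (by omega)).2⟩

end proc2

set_option linter.unusedSectionVars false

lemma exp_quad {u : ℝ} (h : |u| ≤ 1) : Real.exp u ≤ 1 + u + u ^ 2 := by
  have := Real.abs_exp_sub_one_sub_id_le h
  have := (abs_le.1 this).2
  linarith

lemma one_step {d : ℕ} {D p : EuclideanSpace ℝ (Fin d) → ℝ} {R v s : ℝ} (hp : Integrable p)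
    (hp0 : ∀ y, 0 ≤ p y) (hp1 : ∫ y, p y = 1) (hD : Measurable D) (hD0 : ∀ y, 0 ≤ D y)
    (hDR : ∀ y, D y ≤ R) (hv : ∫ y, D y ^ 2 * p y ≤ v) (hs : |s| * R ≤ 1) :
    ∫⁻ y, ENNReal.ofReal (Real.exp (s * (D y - ∫ z, D z * p z))) * ENNReal.ofReal (p y)
      ≤ ENNReal.ofReal (Real.exp (s ^ 2 * v)) := by
  have hI1 : Integrable fun y => D y * p y := hp.bdd_mul (c := R) hD.aestronglyMeasurable
    (Eventually.of_forall fun y => by rw [Real.norm_of_nonneg (hD0 y)]; exact hDR y)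
  have hI2 : Integrable fun y => D y ^ 2 * p y := hp.bdd_mul (c := R ^ 2) (hD.pow_const 2).aestronglyMeasurable
    (Eventually.of_forall fun y => by
      rw [Real.norm_of_nonneg (sq_nonneg _)]; exact pow_le_pow_left₀ (hD0 y) (hDR y) 2)
  set m := ∫ z, D z * p z with hm
  have hm0 : 0 ≤ m := integral_nonneg fun y => mul_nonneg (hD0 y) (hp0 y)
  have hmR : m ≤ R := by
    calc m ≤ ∫ y, R * p y := integral_mono hI1 (hp.const_mul R)
          fun y => mul_le_mul_of_nonneg_right (hDR y) (hp0 y)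
      _ = R := by rw [integral_const_mul, hp1, mul_one]
  have hR0 : 0 ≤ R := hm0.trans hmR
  have hu : ∀ y, |s * (D y - m)| ≤ 1 := fun y => by
    rw [abs_mul]
    refine le_trans (mul_le_mul_of_nonneg_left ?_ (abs_nonneg s)) hs
    rw [abs_le]; constructor <;> linarith [hD0 y, hDR y]
  have hbd : ∀ y, ENNReal.ofReal (Real.exp (s * (D y - m))) * ENNReal.ofReal (p y)
      ≤ ENNReal.ofReal ((1 + s * (D y - m) + (s * (D y - m)) ^ 2) * p y) := fun y => by
    rw [← ENNReal.ofReal_mul (Real.exp_nonneg _)]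
    exact ENNReal.ofReal_le_ofReal (mul_le_mul_of_nonneg_right (exp_quad (hu y)) (hp0 y))
  have hform : (fun y => (1 + s * (D y - m) + (s * (D y - m)) ^ 2) * p y)
      = fun y => (1 - s * m + s ^ 2 * m ^ 2) * p y + (s - 2 * s ^ 2 * m) * (D y * p y)
        + s ^ 2 * (D y ^ 2 * p y) := by ext y; ring
  have hI3 : Integrable fun y => (1 + s * (D y - m) + (s * (D y - m)) ^ 2) * p y := by
    rw [hform]
    exact ((hp.const_mul _).add (hI1.const_mul _)).add (hI2.const_mul _)
  refine (lintegral_mono hbd).trans ?_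
  rw [← ofReal_integral_eq_lintegral_ofReal hI3 (Eventually.of_forall fun y => ?_)]
  · apply ENNReal.ofReal_le_ofReal
    rw [hform, integral_add (by exact (hp.const_mul _).add (hI1.const_mul _)) (hI2.const_mul _),
      integral_add (hp.const_mul _) (hI1.const_mul _), integral_const_mul, integral_const_mul,
      integral_const_mul, hp1, ← hm]
    have h1 := Real.add_one_le_exp (s ^ 2 * v)
    have h2 : s ^ 2 * ∫ y, D y ^ 2 * p y ≤ s ^ 2 * v := mul_le_mul_of_nonneg_left hv (sq_nonneg s)
    have h3 : 0 ≤ s ^ 2 * m ^ 2 := by positivity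
    nlinarith
  · refine mul_nonneg ?_ (hp0 y)
    have := (Real.exp_pos (s * (D y - m))).trans_le (exp_quad (hu y))
    exact this.le

/-- generic weighted noise -/
noncomputable def Nk {d : ℕ} (η : ℝ) (γ lam : ℕ → ℝ) (f : EuclideanSpace ℝ (Fin d) → ℝ) (A : ℝ)
    (κ : ℕ → EuclideanSpace ℝ (Fin d) → ℝ)
    (X : ℕ → EuclideanSpace ℝ (Fin d)) (w : ℕ → ℝ) (q : ℕ → EuclideanSpace ℝ (Fin d) → ℝ)
    (n : ℕ) : ℝ :=
  nz γ (fun k => (min (w k) (A / lam k)) ^ η * κ k (X k)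
    - ∫ y, κ k y * phi f η (A / lam k) (q (k - 1)) y) n

lemma phi_int_meas {Ω : Type*} [MeasurableSpace Ω] {d : ℕ} {f κ : EuclideanSpace ℝ (Fin d) → ℝ}
    (hf : Measurable f) (hκ : Measurable κ) (η a : ℝ)
    {q : Ω → EuclideanSpace ℝ (Fin d) → ℝ} (hq : Measurable (Function.uncurry q)) :
    Measurable fun ω => ∫ y, κ y * phi f η a (q ω) y := by
  have h : Measurable fun z : Ω × EuclideanSpace ℝ (Fin d) => κ z.2 * phi f η a (q z.1) z.2 := by
    unfold phi
    exact (hκ.comp measurable_snd).mul (((((hf.comp measurable_snd).div hq).min measurable_const).pow_const η).mul hq)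
  exact (h.stronglyMeasurable.integral_prod_right).measurable

lemma Phi_meas {Ω : Type*} [MeasurableSpace Ω] {d : ℕ} {f κ : EuclideanSpace ℝ (Fin d) → ℝ}
    (hf : Measurable f) (hκ : Measurable κ) (η a s t : ℝ)
    {q : Ω → EuclideanSpace ℝ (Fin d) → ℝ} (hq : Measurable (Function.uncurry q))
    {N : Ω → ℝ} (hN : Measurable N) :
    Measurable fun z : Ω × EuclideanSpace ℝ (Fin d) => ENNReal.ofReal (Real.exp (s * N z.1)) *
      ENNReal.ofReal (Real.exp (t * ((min (f z.2 / q z.1 z.2) a) ^ η * κ z.2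
        - ∫ y, κ y * phi f η a (q z.1) y))) := by
  have h1 := phi_int_meas hf hκ η a hq
  have h2 := wmeas hf hq
  have h3 : Measurable fun z : Ω × EuclideanSpace ℝ (Fin d) =>
      (min (f z.2 / q z.1 z.2) a) ^ η * κ z.2 - ∫ y, κ y * phi f η a (q z.1) y :=
    (((h2.min measurable_const).pow_const η).mul (hκ.comp measurable_snd)).sub (h1.comp measurable_fst)
  have h4 : Measurable fun z : Ω × EuclideanSpace ℝ (Fin d) => N z.1 := hN.comp measurable_fst
  fun_prop

/-- admissible weights -/
structure Kap {Ω : Type*} [mΩ : MeasurableSpace Ω] (μ : Measure Ω) {d : ℕ} (η : ℝ) (lam : ℕ → ℝ)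
    (f : EuclideanSpace ℝ (Fin d) → ℝ) (A : ℝ) (q : ℕ → Ω → EuclideanSpace ℝ (Fin d) → ℝ)
    (R v : ℕ → ℝ) (κ : ℕ → EuclideanSpace ℝ (Fin d) → ℝ) : Prop where
  m : ∀ k, Measurable (κ k)
  nn : ∀ k y, 0 ≤ κ k y
  le : ∀ k y, (A / lam k) ^ η * κ k y ≤ R k
  var : ∀ᵐ ω ∂μ, ∀ k, ∫ y, ((min (f y / q k ω y) (A / lam (k + 1))) ^ η * κ (k + 1) y) ^ 2 * q k ω y
    ≤ v (k + 1)

section proc3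
variable {Ω : Type*} [mΩ : MeasurableSpace Ω] {μ : Measure Ω} [IsProbabilityMeasure μ]
  {d : ℕ} {F : ℕ → MeasurableSpace Ω} {η : ℝ} {γ b lam : ℕ → ℝ}
  {f q0 K : EuclideanSpace ℝ (Fin d) → ℝ} {c Cf CK : ℝ} {LK : ℝ≥0}
  {X : ℕ → Ω → EuclideanSpace ℝ (Fin d)} {w : ℕ → Ω → ℝ}
  {g q : ℕ → Ω → EuclideanSpace ℝ (Fin d) → ℝ} {R v : ℕ → ℝ} {A : ℝ}
  {κ : ℕ → EuclideanSpace ℝ (Fin d) → ℝ}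

lemma Proc.Nm (P : Proc μ F η γ b lam f q0 K X w g q) (T : Targ d f q0 K c Cf CK LK)
    (hκ : ∀ k, Measurable (κ k)) (n : ℕ) :
    Measurable[F n] fun ω => Nk η γ lam f A κ (fun n => X n ω) (fun n => w n ω) (fun n => q n ω) n := by
  induction n with
  | zero => exact @measurable_const _ _ _ (F 0) _
  | succ n ih =>
    have hF := P.Fmono (Nat.le_succ n)
    have h1 := ih.mono hF le_rfl
    have h2 := P.wm T n
    have h3 : Measurable[F (n + 1)] fun ω => ∫ y, κ (n + 1) y * phi f η (A / lam (n + 1)) (q n ω) y :=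
      (@phi_int_meas Ω (F n) d f _ T.fc.measurable (hκ (n + 1)) η (A / lam (n + 1)) (q n) (P.qj T n)).mono hF le_rfl
    have h4 : Measurable[F (n + 1)] fun ω => κ (n + 1) (X (n + 1) ω) := (hκ (n + 1)).comp (P.XF (n + 1))
    exact (h1.const_mul _).add (((((h2.min measurable_const).pow_const η).mul h4).sub h3).const_mul _)

lemma Proc.mgf (S : Sched d η γ b lam) (P : Proc μ F η γ b lam f q0 K X w g q)
    (T : Targ d f q0 K c Cf CK LK) (hA : 0 ≤ A) (hκ : Kap μ η lam f A q R v κ)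
    (hR : Monotone R) (hR0 : ∀ n, 0 ≤ R n) (hv : Monotone v) (hv0 : ∀ n, 0 ≤ v n) (n : ℕ) :
    ∀ s : ℝ, |s| * (γ n * R n) ≤ 1 →
      ∫⁻ ω, ENNReal.ofReal (Real.exp (s *
        Nk η γ lam f A κ (fun n => X n ω) (fun n => w n ω) (fun n => q n ω) n)) ∂μ
        ≤ ENNReal.ofReal (Real.exp (s ^ 2 * (n * γ n ^ 2 * v n))) := by
  induction n with
  | zero => intro s _; simp [Nk, nz]
  | succ n ih =>
    intro s hs
    have hγ := S.gpos (n + 1)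
    have hγ' := S.gle (n + 1)
    have hst := S.gstep n
    set a := A / lam (n + 1) with ha
    have ha0 : 0 ≤ a := div_nonneg hA (S.lpos _).le
    set N : Ω → ℝ := fun ω => Nk η γ lam f A κ (fun n => X n ω) (fun n => w n ω) (fun n => q n ω) n with hN
    have hΦ := @Phi_meas Ω (F n) d f (κ (n + 1)) T.fc.measurable (hκ.m (n + 1)) η a (s * (1 - γ (n + 1)))
      (s * γ (n + 1)) (q n) (P.qj T n) N (P.Nm T hκ.m n)
    have hcl := P.CL T n _ hΦ
    have e1 : ∫⁻ ω, ENNReal.ofReal (Real.exp (s *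
        Nk η γ lam f A κ (fun n => X n ω) (fun n => w n ω) (fun n => q n ω) (n + 1))) ∂μ
        = ∫⁻ ω, ENNReal.ofReal (Real.exp (s * (1 - γ (n + 1)) * N ω)) *
          ENNReal.ofReal (Real.exp (s * γ (n + 1) * ((min (f (X (n + 1) ω) / q n ω (X (n + 1) ω)) a) ^ η
            * κ (n + 1) (X (n + 1) ω) - ∫ y, κ (n + 1) y * phi f η a (q n ω) y))) ∂μ := by
      apply lintegral_congr
      intro ω
      rw [← ENNReal.ofReal_mul (Real.exp_nonneg _), ← Real.exp_add]
      congr 2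
      simp only [Nk, nz, hN, P.hw, Nat.add_sub_cancel, ha]
      ring
    rw [e1, hcl]
    have hs1 : |s * γ (n + 1)| * R (n + 1) ≤ 1 := by
      rw [abs_mul, abs_of_pos hγ]; linarith [mul_assoc |s| (γ (n + 1)) (R (n + 1))]
    have hs2 : |s * (1 - γ (n + 1))| * (γ n * R n) ≤ 1 := by
      rw [abs_mul, abs_of_nonneg (by linarith : 0 ≤ 1 - γ (n + 1))]
      refine le_trans ?_ hs
      have h1 : (γ n * (1 - γ (n + 1))) * R n ≤ γ (n + 1) * R (n + 1) :=
        mul_le_mul hst (hR (Nat.le_succ n)) (hR0 n) hγ.le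
      have := mul_le_mul_of_nonneg_left h1 (abs_nonneg s)
      linarith
    have step : ∀ᵐ ω ∂μ, ∫⁻ y, ENNReal.ofReal (Real.exp (s * (1 - γ (n + 1)) * N ω)) *
          ENNReal.ofReal (Real.exp (s * γ (n + 1) * ((min (f y / q n ω y) a) ^ η
            * κ (n + 1) y - ∫ y, κ (n + 1) y * phi f η a (q n ω) y))) * ENNReal.ofReal (q n ω y)
        ≤ ENNReal.ofReal (Real.exp (s * (1 - γ (n + 1)) * N ω)) *
          ENNReal.ofReal (Real.exp ((s * γ (n + 1)) ^ 2 * v (n + 1))) := by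
      filter_upwards [P.qnn T, P.q1, hκ.var] with ω h0 h1 hvar
      simp_rw [mul_assoc (ENNReal.ofReal (Real.exp (s * (1 - γ (n + 1)) * N ω)))]
      rw [lintegral_const_mul' _ _ ENNReal.ofReal_ne_top]
      gcongr
      have hqm := (P.qcont T n ω).measurable
      have := one_step (D := fun y => (min (f y / q n ω y) a) ^ η * κ (n + 1) y) (p := q n ω)
        (R := R (n + 1)) (v := v (n + 1)) (s := s * γ (n + 1)) (P.qint T n ω) (h0 n) (h1 n)
        ((((T.fc.measurable.div hqm).min measurable_const).pow_const η).mul (hκ.m _))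
        (fun y => mul_nonneg (Real.rpow_nonneg (le_min (div_nonneg (T.f0 y) (h0 n y)) ha0) _) (hκ.nn _ _))
        (fun y => le_trans (mul_le_mul_of_nonneg_right (Real.rpow_le_rpow
          (le_min (div_nonneg (T.f0 y) (h0 n y)) ha0) (min_le_right _ _) S.η0.le) (hκ.nn _ _)) (hκ.le _ y))
        (hvar n) hs1
      have e2 : ∫ y, κ (n + 1) y * phi f η a (q n ω) y
          = ∫ y, (min (f y / q n ω y) a) ^ η * κ (n + 1) y * q n ω y := by
        congr 1; ext y; unfold phi; ring
      rw [e2]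
      exact this
    refine (lintegral_mono_ae step).trans ?_
    rw [lintegral_mul_const' _ _ ENNReal.ofReal_ne_top]
    refine (mul_le_mul' (ih _ hs2) le_rfl).trans ?_
    rw [← ENNReal.ofReal_mul (Real.exp_nonneg _), ← Real.exp_add]
    apply ENNReal.ofReal_le_ofReal
    apply Real.exp_le_exp.2
    push_cast
    have h1 : (γ n * (1 - γ (n + 1))) ^ 2 ≤ γ (n + 1) ^ 2 :=
      pow_le_pow_left₀ (mul_nonneg (S.gpos n).le (by linarith)) hst 2
    have h2 : (γ n * (1 - γ (n + 1))) ^ 2 * v n ≤ γ (n + 1) ^ 2 * v (n + 1) :=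
      mul_le_mul h1 (hv (Nat.le_succ n)) (hv0 n) (sq_nonneg _)
    have h3 := mul_le_mul_of_nonneg_left h2 (by positivity : 0 ≤ s ^ 2 * (n:ℝ))
    linarith

lemma Proc.tail1 (S : Sched d η γ b lam) (P : Proc μ F η γ b lam f q0 K X w g q)
    (T : Targ d f q0 K c Cf CK LK) (hA : 0 ≤ A) (hκ : Kap μ η lam f A q R v κ)
    (hR : Monotone R) (hR0 : ∀ n, 0 ≤ R n) (hv : Monotone v) (hv0 : ∀ n, 0 ≤ v n) (n : ℕ)
    {s ε : ℝ} (hs0 : 0 < s) (hs : s * (γ n * R n) ≤ 1) :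
    μ {ω | ε ≤ |Nk η γ lam f A κ (fun n => X n ω) (fun n => w n ω) (fun n => q n ω) n|}
      ≤ ENNReal.ofReal (2 * Real.exp (s ^ 2 * (n * γ n ^ 2 * v n) - s * ε)) := by
  set N : Ω → ℝ := fun ω => Nk η γ lam f A κ (fun n => X n ω) (fun n => w n ω) (fun n => q n ω) n with hN
  have hNm : Measurable N := (P.Nm T hκ.m n).mono (P.Fle n) le_rfl
  have one : ∀ t : ℝ, |t| = s → μ {ω | s * ε ≤ t * N ω}
      ≤ ENNReal.ofReal (Real.exp (s ^ 2 * (n * γ n ^ 2 * v n) - s * ε)) := by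
    intro t ht
    have h1 := P.mgf S T hA hκ hR hR0 hv hv0 n t (by rw [ht]; exact hs)
    have h2 := mul_meas_ge_le_lintegral (μ := μ) (f := fun ω => ENNReal.ofReal (Real.exp (t * N ω)))
      (by fun_prop) (ENNReal.ofReal (Real.exp (s * ε)))
    have h3 : {ω | ENNReal.ofReal (Real.exp (s * ε)) ≤ ENNReal.ofReal (Real.exp (t * N ω))}
        = {ω | s * ε ≤ t * N ω} := by
      ext ω
      simp only [Set.mem_ofPred_eq]
      rw [ENNReal.ofReal_le_ofReal_iff (Real.exp_nonneg _), Real.exp_le_exp]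
    rw [h3] at h2
    have h4 := h2.trans h1
    rw [← sq_abs t, ht] at h4
    rw [Real.exp_sub, ENNReal.ofReal_div_of_pos (Real.exp_pos _)]
    rw [ENNReal.le_div_iff_mul_le (Or.inl (by simp [Real.exp_pos])) (Or.inl ENNReal.ofReal_ne_top), mul_comm]
    exact h4
  have hsub : {ω | ε ≤ |N ω|} ⊆ {ω | s * ε ≤ s * N ω} ∪ {ω | s * ε ≤ (-s) * N ω} := by
    intro ω hω
    rcases le_abs.1 (show ε ≤ |N ω| from hω) with h | h
    · exact Or.inl (mul_le_mul_of_nonneg_left h hs0.le)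
    · refine Or.inr ?_
      have := mul_le_mul_of_nonneg_left h hs0.le
      simp only [Set.mem_ofPred_eq]
      linarith
  refine (measure_mono hsub).trans ((measure_union_le _ _).trans ?_)
  refine (add_le_add (one s (abs_of_pos hs0)) (one (-s) (by rw [abs_neg, abs_of_pos hs0]))).trans ?_
  rw [two_mul, ENNReal.ofReal_add (Real.exp_nonneg _) (Real.exp_nonneg _)]

/-- rates for which the tail is polynomially small -/
structure Rate (γ R v τ : ℕ → ℝ) : Prop where
  Rm : Monotone R
  R0 : ∀ n, 0 ≤ R n
  vm : Monotone v
  v0 : ∀ n, 0 ≤ v n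
  τ0 : ∀ n, 0 < τ n
  Rv : ∃ C > (0:ℝ), ∀ n, R n * τ n ≤ C * v n
  lim : Tendsto (fun n : ℕ => (n : ℝ) * γ n ^ 2 * Real.log n * v n / τ n ^ 2) atTop (𝓝 0)

lemma Proc.tail (S : Sched d η γ b lam) (P : Proc μ F η γ b lam f q0 K X w g q)
    (T : Targ d f q0 K c Cf CK LK) (hA : 0 ≤ A) {τ : ℕ → ℝ} (hr : Rate γ R v τ) {δ : ℝ} (hδ : 0 < δ)
    (p : ℕ) (hp : 1 ≤ p) :
    ∀ᶠ n : ℕ in atTop, ∀ κ, Kap μ η lam f A q R v κ →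
      μ {ω | δ * τ n ≤ |Nk η γ lam f A κ (fun n => X n ω) (fun n => w n ω) (fun n => q n ω) n|}
      ≤ ENNReal.ofReal (2 * ((n:ℝ) ^ p)⁻¹) := by
  obtain ⟨C, C0, hC⟩ := hr.Rv
  obtain ⟨C', C'0, hC'⟩ := S.gn
  have hp0 : (0:ℝ) < p := by exact_mod_cast hp
  have e1 : ∀ᶠ n : ℕ in atTop, (n : ℝ) * γ n ^ 2 * Real.log n * v n / τ n ^ 2 < δ ^ 2 / (4 * p) :=
    hr.lim.eventually (gt_mem_nhds (by positivity))
  have e2 : ∀ᶠ n : ℕ in atTop, (n : ℝ) * γ n ^ 2 * Real.log n * v n / τ n ^ 2 < δ / (2 * p * C * C') :=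
    hr.lim.eventually (gt_mem_nhds (by positivity))
  filter_upwards [e1, e2, eventually_ge_atTop 2] with n h1 h2 hn κ hκ
  have hn' : (2:ℝ) ≤ n := by exact_mod_cast hn
  have hlog : 0 < Real.log n := Real.log_pos (by linarith)
  have hτ := hr.τ0 n
  have hγ := S.gpos n
  set s := 2 * p * Real.log n / (δ * τ n) with hs
  have hs0 : 0 < s := by positivity
  have hv0 := hr.v0 n
  have hsR : s * (γ n * R n) ≤ 1 := by
    have a1 : R n ≤ C * v n / τ n := by rw [le_div_iff₀ hτ]; exact hC n
    have a2 := hC' n (by omega)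
    calc s * (γ n * R n) ≤ s * (γ n * (C * v n / τ n)) := by gcongr
      _ = (s * (γ n * (C * v n / τ n))) * 1 := by ring
      _ ≤ (s * (γ n * (C * v n / τ n))) * (C' * (n * γ n)) := by gcongr
      _ = (2 * p * C * C' / δ) * ((n : ℝ) * γ n ^ 2 * Real.log n * v n / τ n ^ 2) := by
          rw [hs]; field_simp
      _ ≤ (2 * p * C * C' / δ) * (δ / (2 * p * C * C')) := by gcongr
      _ = 1 := by field_simp
  refine (P.tail1 S T hA hκ hr.Rm hr.R0 hr.vm hr.v0 n (ε := δ * τ n) hs0 hsR).trans ?_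
  apply ENNReal.ofReal_le_ofReal
  have hexp : s ^ 2 * (n * γ n ^ 2 * v n) - s * (δ * τ n) ≤ - (p * Real.log n) := by
    have b1 : s * (δ * τ n) = 2 * p * Real.log n := by rw [hs]; field_simp
    have b2 : s ^ 2 * (n * γ n ^ 2 * v n) = (4 * p ^ 2 * Real.log n / δ ^ 2) *
        ((n : ℝ) * γ n ^ 2 * Real.log n * v n / τ n ^ 2) := by rw [hs]; field_simp; ring
    have b3 : (4 * p ^ 2 * Real.log n / δ ^ 2) *
        ((n : ℝ) * γ n ^ 2 * Real.log n * v n / τ n ^ 2) ≤ (4 * p ^ 2 * Real.log n / δ ^ 2) * (δ ^ 2 / (4 * p)) := by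
      gcongr
    have b4 : (4 * p ^ 2 * Real.log n / δ ^ 2) * (δ ^ 2 / (4 * p)) = p * Real.log n := by field_simp
    rw [b1, b2]; linarith
  have h5 : Real.exp (-(p * Real.log n)) = ((n:ℝ) ^ p)⁻¹ := by
    rw [Real.exp_neg, mul_comm, ← Real.rpow_def_of_pos (by linarith), Real.rpow_natCast]
  rw [← h5]
  have := Real.exp_le_exp.2 hexp
  linarith

end proc3

set_option linter.unusedSectionVars false

lemma minsq_hi {η u p a : ℝ} (h1 : 1 / 2 ≤ η) (hu : 0 ≤ u) (hp : 0 ≤ p) (ha : 0 ≤ a) :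
    ((min (u / p) a) ^ η) ^ 2 * p ≤ a ^ (2 * η - 1) * u := by
  have hm : 0 ≤ min (u / p) a := le_min (div_nonneg hu hp) ha
  rw [← Real.rpow_natCast, ← Real.rpow_mul hm]
  have e : (min (u / p) a) ^ (η * (2:ℕ)) = (min (u / p) a) ^ (2 * η - 1) * min (u / p) a := by
    rcases hm.eq_or_lt with h | h
    · rw [← h, mul_zero, Real.zero_rpow]; push_cast; linarith
    · rw [Real.rpow_sub_one h.ne', div_mul_cancel₀ _ h.ne']; congr 1; push_cast; ring
  rw [e, mul_assoc]
  apply mul_le_mul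
  · exact Real.rpow_le_rpow hm (min_le_right _ _) (by linarith)
  · rcases hp.eq_or_lt with h | h
    · rw [← h]; simpa using hu
    · calc _ ≤ u / p * p := mul_le_mul_of_nonneg_right (min_le_left _ _) hp
        _ = u := div_mul_cancel₀ _ h.ne'
  · positivity
  · positivity

lemma minsq_lo {η u p a s : ℝ} (h0 : 0 < η) (h1 : η < 1 / 2) (hu : 0 ≤ u) (hp : 0 ≤ p) (ha : 0 ≤ a)
    (hs : 0 < s) : ((min (u / p) a) ^ η) ^ 2 * p ≤ s ^ (1 - 2 * η) * (u + p / s) := by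
  have hm : 0 ≤ min (u / p) a := le_min (div_nonneg hu hp) ha
  rcases hp.eq_or_lt with h | h
  · rw [← h]; simp; positivity
  rw [← Real.rpow_natCast, ← Real.rpow_mul hm]
  calc (min (u / p) a) ^ (η * (2:ℕ)) * p ≤ (u / p) ^ (η * (2:ℕ)) * p := by
        refine mul_le_mul_of_nonneg_right (Real.rpow_le_rpow hm (min_le_left _ _) ?_) hp
        push_cast; linarith
    _ = u ^ (2 * η) * p ^ (1 - 2 * η) := by
        rw [div_rpow_mul hu h]; push_cast; rw [mul_comm η 2]
    _ = s ^ (1 - 2 * η) * (u ^ (2 * η) * (p / s) ^ (1 - 2 * η)) := by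
        rw [Real.div_rpow hp hs.le]; field_simp
    _ ≤ s ^ (1 - 2 * η) * (u + p / s) := by
        gcongr
        have := young (η := 2 * η) (by linarith) (by linarith) hu (by positivity : 0 ≤ p / s)
        have h3 : 0 ≤ p / s := by positivity
        nlinarith

section proc4
variable {Ω : Type*} [mΩ : MeasurableSpace Ω] {μ : Measure Ω} [IsProbabilityMeasure μ]
  {d : ℕ} {F : ℕ → MeasurableSpace Ω} {η : ℝ} {γ b lam : ℕ → ℝ}
  {f q0 K : EuclideanSpace ℝ (Fin d) → ℝ} {c Cf CK : ℝ} {LK : ℝ≥0}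
  {X : ℕ → Ω → EuclideanSpace ℝ (Fin d)} {w : ℕ → Ω → ℝ}
  {g q : ℕ → Ω → EuclideanSpace ℝ (Fin d) → ℝ}

lemma Targ.Cf0 (T : Targ d f q0 K c Cf CK LK) : 0 ≤ Cf := (T.f0 0).trans (T.fC 0)

lemma Targ.kf (T : Targ d f q0 K c Cf CK LK) {β : ℝ} (hb : 0 < β) (x : EuclideanSpace ℝ (Fin d)) :
    ∫ y, kb K β (x - y) * f y ≤ Cf := by
  calc _ ≤ ∫ y, kb K β (x - y) * Cf := integral_mono (T.kphi_int hb x T.fint)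
        ((kb_integrable' T.Kint hb x).mul_const _)
        fun y => mul_le_mul_of_nonneg_left (T.fC y) (T.kb_nonneg hb _)
    _ = Cf := by rw [integral_mul_const, kb_integral' _ hb, T.K1, one_mul]

lemma Targ.kq (T : Targ d f q0 K c Cf CK LK) {β : ℝ} (hb : 0 < β) (x : EuclideanSpace ℝ (Fin d))
    {p : EuclideanSpace ℝ (Fin d) → ℝ} (hp : Integrable p) (hp0 : ∀ y, 0 ≤ p y) (hp1 : ∫ y, p y = 1) :
    ∫ y, kb K β (x - y) * p y ≤ CK * (β ^ d)⁻¹ := by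
  calc _ ≤ ∫ y, CK * (β ^ d)⁻¹ * p y := integral_mono (T.kphi_int hb x hp) (hp.const_mul _)
        fun y => mul_le_mul_of_nonneg_right (T.kb_le hb _) (hp0 y)
    _ = _ := by rw [integral_const_mul, hp1, mul_one]

lemma Targ.var_hi (T : Targ d f q0 K c Cf CK LK) {β : ℝ} (hb : 0 < β) (x : EuclideanSpace ℝ (Fin d))
    {p : EuclideanSpace ℝ (Fin d) → ℝ} (hp : Integrable p) (hp0 : ∀ y, 0 ≤ p y)
    {a : ℝ} (ha : 0 ≤ a) (h1 : 1 / 2 ≤ η) :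
    ∫ y, ((min (f y / p y) a) ^ η * kb K β (x - y)) ^ 2 * p y
      ≤ CK * Cf * a ^ (2 * η - 1) * (β ^ d)⁻¹ := by
  have hCK := T.CK0
  calc _ ≤ ∫ y, (CK * (β ^ d)⁻¹ * a ^ (2 * η - 1)) * (kb K β (x - y) * f y) := by
        apply integral_mono_of_nonneg
        · exact Eventually.of_forall fun y => mul_nonneg (sq_nonneg _) (hp0 y)
        · exact (T.kphi_int hb x T.fint).const_mul _
        · refine Eventually.of_forall fun y => ?_
          have hk0 := T.kb_nonneg hb (x - y)
          have hk := T.kb_le hb (x - y)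
          have hm := minsq_hi h1 (T.f0 y) (hp0 y) ha
          have hf := T.f0 y
          calc _ = kb K β (x - y) * (kb K β (x - y) * (((min (f y / p y) a) ^ η) ^ 2 * p y)) := by ring
            _ ≤ (CK * (β ^ d)⁻¹) * (kb K β (x - y) * (a ^ (2 * η - 1) * f y)) := by
              apply mul_le_mul hk (mul_le_mul_of_nonneg_left hm hk0) _ (by positivity)
              exact mul_nonneg hk0 (mul_nonneg (sq_nonneg _) (hp0 y))
            _ = _ := by ring
    _ ≤ (CK * (β ^ d)⁻¹ * a ^ (2 * η - 1)) * Cf := by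
        rw [integral_const_mul]
        exact mul_le_mul_of_nonneg_left (T.kf hb x) (by positivity)
    _ = _ := by ring

lemma Targ.var_lo (T : Targ d f q0 K c Cf CK LK) {β : ℝ} (hb : 0 < β) (x : EuclideanSpace ℝ (Fin d))
    {p : EuclideanSpace ℝ (Fin d) → ℝ} (hp : Integrable p) (hp0 : ∀ y, 0 ≤ p y) (hp1 : ∫ y, p y = 1)
    {a : ℝ} (ha : 0 ≤ a) (h0 : 0 < η) (h1 : η < 1 / 2) :
    ∫ y, ((min (f y / p y) a) ^ η * kb K β (x - y)) ^ 2 * p y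
      ≤ CK * (Cf + CK) * ((β ^ d)⁻¹) ^ (2 * (1 - η)) := by
  have hCK := T.CK0
  set s := (β ^ d)⁻¹ with hs
  have hs0 : 0 < s := by positivity
  calc _ ≤ ∫ y, (CK * s * s ^ (1 - 2 * η)) * (kb K β (x - y) * f y + (kb K β (x - y) * p y) / s) := by
        apply integral_mono_of_nonneg
        · exact Eventually.of_forall fun y => mul_nonneg (sq_nonneg _) (hp0 y)
        · exact ((T.kphi_int hb x T.fint).add ((T.kphi_int hb x hp).div_const _)).const_mul _
        · refine Eventually.of_forall fun y => ?_
          have hk0 := T.kb_nonneg hb (x - y)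
          have hk := T.kb_le hb (x - y)
          have hm := minsq_lo h0 h1 (T.f0 y) (hp0 y) ha hs0
          have hf := T.f0 y
          calc _ = kb K β (x - y) * (kb K β (x - y) * (((min (f y / p y) a) ^ η) ^ 2 * p y)) := by ring
            _ ≤ (CK * s) * (kb K β (x - y) * (s ^ (1 - 2 * η) * (f y + p y / s))) := by
              apply mul_le_mul hk (mul_le_mul_of_nonneg_left hm hk0) _ (by positivity)
              exact mul_nonneg hk0 (mul_nonneg (sq_nonneg _) (hp0 y))
            _ = _ := by ring
    _ ≤ (CK * s * s ^ (1 - 2 * η)) * (Cf + CK * s / s) := by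
        rw [integral_const_mul, integral_add (T.kphi_int hb x T.fint) ((T.kphi_int hb x hp).div_const _),
          integral_div]
        have h3 := T.kf hb x
        have h4 := T.kq hb x hp hp0 hp1
        gcongr
    _ = _ := by
        have : s ^ (2 * (1 - η)) = s * s ^ (1 - 2 * η) := by
          rw [show 2 * (1 - η) = 1 + (1 - 2 * η) by ring, Real.rpow_add hs0, Real.rpow_one]
        rw [this]
        field_simp

lemma Sched.la {A : ℝ} (S : Sched d η γ b lam) (hA : 0 < A) : Monotone fun n => A / lam n := fun m n h =>
  div_le_div_of_nonneg_left hA.le (S.lpos n) (S.lanti h)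

lemma Sched.bm (S : Sched d η γ b lam) : Monotone fun n => (b n ^ d)⁻¹ := fun m n h => by
  have := S.bpos n
  have := S.banti h
  show (b m ^ d)⁻¹ ≤ (b n ^ d)⁻¹
  gcongr

/-- The `R` used for the kernel noise. -/
noncomputable def RM (d : ℕ) (η A CK : ℝ) (b lam : ℕ → ℝ) (k : ℕ) : ℝ :=
  (A / lam k) ^ η * (CK * (b k ^ d)⁻¹)

lemma Proc.rateM (S : Sched d η γ b lam) (P : Proc μ F η γ b lam f q0 K X w g q)
    (T : Targ d f q0 K c Cf CK LK) {A : ℝ} (hA : 0 < A) :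
    ∃ R v : ℕ → ℝ, Rate γ R v (fun n => lam n ^ (1 - η)) ∧
      ∀ x, Kap μ η lam f A q R v (fun k y => kb K (b k) (x - y)) := by
  have hCK := T.CK0
  have hCf := T.Cf0
  have hη := S.η0
  have hη1 := S.η1
  have al : ∀ n, 0 < A / lam n := fun n => div_pos hA (S.lpos n)
  have hRm : Monotone (RM d η A CK b lam) := fun m n h => by
    unfold RM
    have h1 := S.la hA h
    have h2 := S.bm h
    simp only at h1 h2
    have := S.bpos m
    have := al m
    have := al n
    have h3 : 0 ≤ (A / lam n) ^ η := by positivity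
    gcongr
  have hR0 : ∀ n, 0 ≤ RM d η A CK b lam n := fun n => by
    unfold RM
    have := S.bpos n
    have := al n
    positivity
  have kapc : ∀ (v : ℕ → ℝ) x, (∀ᵐ ω ∂μ, ∀ k, ∫ y, ((min (f y / q k ω y) (A / lam (k + 1))) ^ η
      * kb K (b (k + 1)) (x - y)) ^ 2 * q k ω y ≤ v (k + 1)) →
      Kap μ η lam f A q (RM d η A CK b lam) v (fun k y => kb K (b k) (x - y)) := fun v x hv =>
    { m := fun k => ((T.kb_cont (b k)).comp (by fun_prop : Continuous fun y => x - y)).measurable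
      nn := fun k y => T.kb_nonneg (S.bpos k) _
      le := fun k y => mul_le_mul_of_nonneg_left (T.kb_le (S.bpos k) _) (Real.rpow_nonneg (al k).le _)
      var := hv }
  have tau : ∀ n, (A / lam n) ^ η * lam n ^ (1 - η) = A ^ η * lam n ^ (1 - 2 * η) := fun n => by
    have hl := S.lpos n
    rw [Real.div_rpow hA.le hl.le, show 1 - η = (1 - 2 * η) + η by ring, Real.rpow_add hl]
    field_simp
  rcases le_or_gt (1 / 2) η with h | h
  · refine ⟨RM d η A CK b lam, fun k => CK * (Cf + 1) * (A / lam k) ^ (2 * η - 1) * (b k ^ d)⁻¹, ?_, fun x => kapc _ x ?_⟩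
    · refine ⟨hRm, hR0, ?_, ?_, fun n => Real.rpow_pos_of_pos (S.lpos n) _,
        ⟨A ^ η * (A ^ (2 * η - 1))⁻¹, by positivity, ?_⟩, ?_⟩
      · intro m n hmn
        have h1 := S.la hA hmn
        have h2 := S.bm hmn
        simp only at h1 h2 ⊢
        have := S.bpos m
        have := al m
        have h3 : (A / lam m) ^ (2 * η - 1) ≤ (A / lam n) ^ (2 * η - 1) :=
          Real.rpow_le_rpow this.le h1 (by linarith)
        have := al n
        have h4 : 0 ≤ CK * (Cf + 1) * (A / lam n) ^ (2 * η - 1) := by positivity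
        gcongr
      · intro n
        have := S.bpos n
        have := al n
        positivity
      · intro n
        have hb := S.bpos n
        have hl := S.lpos n
        have e : lam n ^ (1 - 2 * η) = (lam n ^ (2 * η - 1))⁻¹ := by
          rw [← Real.rpow_neg hl.le]; congr 1; ring
        calc RM d η A CK b lam n * lam n ^ (1 - η)
            = (A / lam n) ^ η * lam n ^ (1 - η) * (CK * (b n ^ d)⁻¹) := by unfold RM; ring
          _ = A ^ η * (A ^ (2 * η - 1))⁻¹ * (CK * 1 * (A / lam n) ^ (2 * η - 1) * (b n ^ d)⁻¹) := by
              rw [tau, e, Real.div_rpow hA.le hl.le]; field_simp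
          _ ≤ _ := by gcongr; linarith
      · have := (S.rate1 h).const_mul (CK * (Cf + 1) * A ^ (2 * η - 1))
        rw [mul_zero] at this
        refine this.congr fun n => ?_
        have hb := S.bpos n
        have hl := S.lpos n
        have e1 : (lam n ^ (1 - η)) ^ 2 = lam n / lam n ^ (2 * η - 1) := by
          rw [← Real.rpow_natCast (lam n ^ (1 - η)), ← Real.rpow_mul hl.le,
            show (1 - η) * (2:ℕ) = 1 - (2 * η - 1) by push_cast; ring, Real.rpow_sub hl, Real.rpow_one]
        have hL : 0 < lam n ^ (2 * η - 1) := Real.rpow_pos_of_pos hl _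
        rw [Real.div_rpow hA.le hl.le, e1]
        generalize lam n ^ (2 * η - 1) = L at hL ⊢
        generalize A ^ (2 * η - 1) = A'
        field_simp
    · filter_upwards [P.qnn T, P.q1] with ω h0 h1 k
      refine (T.var_hi (S.bpos (k + 1)) x (P.qint T k ω) (h0 k) (al (k + 1)).le h).trans ?_
      have := S.bpos (k + 1)
      have := al (k + 1)
      gcongr
      linarith
  · refine ⟨RM d η A CK b lam, fun k => CK * (Cf + CK) * ((b k ^ d)⁻¹) ^ (2 * (1 - η)), ?_, fun x => kapc _ x ?_⟩
    · refine ⟨hRm, hR0, ?_, ?_, fun n => Real.rpow_pos_of_pos (S.lpos n) _,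
        ⟨A ^ η * CK⁻¹, by positivity, ?_⟩, ?_⟩
      · intro m n hmn
        have h2 := S.bm hmn
        simp only at h2 ⊢
        have := S.bpos m
        have h3 : ((b m ^ d)⁻¹) ^ (2 * (1 - η)) ≤ ((b n ^ d)⁻¹) ^ (2 * (1 - η)) :=
          Real.rpow_le_rpow (by positivity) h2 (by linarith)
        gcongr
      · intro n
        have := S.bpos n
        positivity
      · intro n
        have hb := S.bpos n
        have hl := S.lpos n
        have h1 : lam n ^ (1 - 2 * η) ≤ 1 :=
          Real.rpow_le_one hl.le ((S.lle n).trans (by norm_num)) (by linarith)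
        have h2 : 1 ≤ (b n ^ d)⁻¹ := by
          rw [one_le_inv₀ (by positivity)]; exact pow_le_one₀ hb.le (S.ble n)
        have h3 : (b n ^ d)⁻¹ ≤ ((b n ^ d)⁻¹) ^ (2 * (1 - η)) := by
          calc (b n ^ d)⁻¹ = ((b n ^ d)⁻¹) ^ (1:ℝ) := (Real.rpow_one _).symm
            _ ≤ _ := Real.rpow_le_rpow_of_exponent_le h2 (by linarith)
        calc RM d η A CK b lam n * lam n ^ (1 - η)
            = (A / lam n) ^ η * lam n ^ (1 - η) * (CK * (b n ^ d)⁻¹) := by unfold RM; ring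
          _ = A ^ η * lam n ^ (1 - 2 * η) * (CK * (b n ^ d)⁻¹) := by rw [tau]
          _ ≤ A ^ η * 1 * (CK * ((b n ^ d)⁻¹) ^ (2 * (1 - η))) := by gcongr
          _ = A ^ η * CK⁻¹ * (CK * (0 + CK) * ((b n ^ d)⁻¹) ^ (2 * (1 - η))) := by field_simp; ring
          _ ≤ _ := by gcongr
      · have := (S.rate2 h).const_mul (CK * (Cf + CK))
        rw [mul_zero] at this
        refine this.congr fun n => ?_
        have hb := S.bpos n
        have hl := S.lpos n
        have e1 : (lam n ^ (1 - η)) ^ 2 = lam n ^ (2 * (1 - η)) := by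
          rw [← Real.rpow_natCast (lam n ^ (1 - η)), ← Real.rpow_mul hl.le]; congr 1; push_cast; ring
        have e2 : ((b n ^ d)⁻¹) ^ (2 * (1 - η)) = (b n ^ (2 * (d:ℝ) * (1 - η)))⁻¹ := by
          rw [Real.inv_rpow (by positivity), ← Real.rpow_natCast, ← Real.rpow_mul hb.le]; congr 2; ring
        rw [e1, e2]
        have := Real.rpow_pos_of_pos hb (2 * (d:ℝ) * (1 - η))
        field_simp
    · filter_upwards [P.qnn T, P.q1] with ω h0 h1 k
      exact T.var_lo (S.bpos (k + 1)) x (P.qint T k ω) (h0 k) (h1 k) (al (k + 1)).le hη h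

lemma Proc.rateS (S : Sched d η γ b lam) (P : Proc μ F η γ b lam f q0 K X w g q)
    (T : Targ d f q0 K c Cf CK LK) {A : ℝ} (hA : 0 < A) :
    ∃ R v : ℕ → ℝ, Rate γ R v (fun _ => 1) ∧ Kap μ η lam f A q R v (fun _ _ => 1) := by
  have hη := S.η0
  have hη1 := S.η1
  have al : ∀ n, 0 < A / lam n := fun n => div_pos hA (S.lpos n)
  have hm : Monotone fun n => (A / lam n) ^ η := fun m n h =>
    Real.rpow_le_rpow (al m).le (S.la hA h) hη.le
  have h0 : ∀ n, 0 ≤ (A / lam n) ^ η := fun n => Real.rpow_nonneg (al n).le _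
  refine ⟨fun n => (A / lam n) ^ η, fun n => (A / lam n) ^ η, ⟨hm, h0, hm, h0, fun _ => one_pos, ⟨1, one_pos, ?_⟩, ?_⟩,
    ⟨fun _ => measurable_const, fun _ _ => zero_le_one, fun k y => by simp, ?_⟩⟩
  · intro n; simp
  · have lb : ∀ n, 0 < lam n ∧ lam n ≤ 1 ∧ 0 < b n ∧ b n ≤ 1 := fun n =>
      ⟨S.lpos n, (S.lle n).trans (by norm_num), S.bpos n, S.ble n⟩
    have lg : ∀ n : ℕ, 0 ≤ (n:ℝ) * γ n ^ 2 * Real.log n := fun n => by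
      have := Real.log_natCast_nonneg n
      positivity
    have hl1 : Tendsto (fun n : ℕ => (n : ℝ) * γ n ^ 2 * Real.log n / lam n) atTop (𝓝 0) := by
      rcases le_or_gt (1 / 2) η with h | h
      · refine squeeze_zero (fun n => div_nonneg (lg n) (lb n).1.le) (fun n => ?_) (S.rate1 h)
        obtain ⟨a1, a2, a3, a4⟩ := lb n
        refine div_le_div_of_nonneg_left (lg n) (by positivity) ?_
        exact mul_le_of_le_one_right a1.le (pow_le_one₀ a3.le a4)
      · refine squeeze_zero (fun n => div_nonneg (lg n) (lb n).1.le) (fun n => ?_) (S.rate2 h)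
        obtain ⟨a1, a2, a3, a4⟩ := lb n
        refine div_le_div_of_nonneg_left (lg n) (by positivity) ?_
        calc _ ≤ lam n ^ (1:ℝ) * 1 := by
              apply mul_le_mul
              · exact Real.rpow_le_rpow_of_exponent_ge a1 a2 (by linarith)
              · refine Real.rpow_le_one a3.le a4 ?_
                have : 0 < 1 - η := by linarith
                positivity
              · positivity
              · positivity
          _ = lam n := by simp
    have hl2 := hl1.const_mul (A ^ η)
    rw [mul_zero] at hl2
    refine squeeze_zero (fun n => ?_) (fun n => ?_) hl2
    · have := mul_nonneg (lg n) (h0 n)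
      positivity
    · obtain ⟨a1, a2, a3, a4⟩ := lb n
      rw [one_pow, div_one, Real.div_rpow hA.le a1.le]
      have : lam n ≤ lam n ^ η := by
        calc lam n = lam n ^ (1:ℝ) := (Real.rpow_one _).symm
          _ ≤ _ := Real.rpow_le_rpow_of_exponent_ge a1 a2 hη1.le
      have h5 : A ^ η / lam n ^ η ≤ A ^ η / lam n := by gcongr
      calc _ ≤ (n:ℝ) * γ n ^ 2 * Real.log n * (A ^ η / lam n) := mul_le_mul_of_nonneg_left h5 (lg n)
        _ = _ := by ring
  · filter_upwards [P.qnn T, P.q1] with ω h0 h1 k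
    have hqm := (P.qcont T k ω).measurable
    calc _ ≤ ∫ y, (A / lam (k + 1)) ^ η * phi f η (A / lam (k + 1)) (q k ω) y := by
          apply integral_mono_of_nonneg
          · exact Eventually.of_forall fun y => mul_nonneg (sq_nonneg _) (h0 k y)
          · exact (phi_int hη hη1 T.f0 (h0 k) (al (k + 1)).le T.fc.measurable hqm T.fint (P.qint T k ω)).const_mul _
          · refine Eventually.of_forall fun y => ?_
            have hmn : 0 ≤ min (f y / q k ω y) (A / lam (k + 1)) :=
              le_min (div_nonneg (T.f0 y) (h0 k y)) (al _).le
            have h5 : (min (f y / q k ω y) (A / lam (k + 1))) ^ η ≤ (A / lam (k + 1)) ^ η :=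
              Real.rpow_le_rpow hmn (min_le_right _ _) hη.le
            have h6 := Real.rpow_nonneg hmn η
            simp only [mul_one, phi]
            rw [sq, mul_assoc]
            exact mul_le_mul_of_nonneg_right h5 (mul_nonneg h6 (h0 k y))
      _ ≤ (A / lam (k + 1)) ^ η := by
          rw [integral_const_mul]
          exact mul_le_of_le_one_right (Real.rpow_nonneg (al _).le _)
            (phi_int_le hη hη1 T.f0 (h0 k) (al (k + 1)).le T.fc.measurable hqm T.fint (P.qint T k ω) T.f1 (h1 k))

end proc4

set_option linter.unusedSectionVars false

lemma nz_sub (γ ξ ζ : ℕ → ℝ) (n : ℕ) : nz γ ξ n - nz γ ζ n = nz γ (fun k => ξ k - ζ k) n := by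
  induction n with
  | zero => simp [nz]
  | succ n ih => simp only [nz]; rw [← ih]; ring

lemma nz_bdd {γ ξ : ℕ → ℝ} {B : ℝ} (hB : 0 ≤ B) (h0 : ∀ n, 0 ≤ γ n) (h1 : ∀ n, γ n ≤ 1) (n : ℕ)
    (h : ∀ k, 1 ≤ k → k ≤ n → |ξ k| ≤ B) : |nz γ ξ n| ≤ B := by
  induction n with
  | zero => simpa [nz] using hB
  | succ n ih =>
    simp only [nz]
    have h2 := ih fun k hk hk' => h k hk (by omega)
    have h3 := h (n + 1) (by omega) le_rfl
    have a0 := h0 (n + 1)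
    have a1 : 0 ≤ 1 - γ (n + 1) := by linarith [h1 (n + 1)]
    calc _ ≤ |(1 - γ (n + 1)) * nz γ ξ n| + |γ (n + 1) * ξ (n + 1)| := abs_add_le _ _
      _ = (1 - γ (n + 1)) * |nz γ ξ n| + γ (n + 1) * |ξ (n + 1)| := by
        rw [abs_mul, abs_mul, abs_of_nonneg a0, abs_of_nonneg a1]
      _ ≤ (1 - γ (n + 1)) * B + γ (n + 1) * B := by gcongr
      _ = B := by ring

lemma bc {Ω : Type*} [MeasurableSpace Ω] {μ : Measure Ω} {s : ℕ → Set Ω} {C : ℝ} 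
    (h : ∀ᶠ n : ℕ in atTop, μ (s n) ≤ ENNReal.ofReal (C * ((n:ℝ) ^ 2)⁻¹)) :
    ∀ᵐ ω ∂μ, ∀ᶠ n in atTop, ω ∉ s n := by
  obtain ⟨N, hN⟩ := eventually_atTop.1 h
  have hs : Summable fun n : ℕ => C * ((n:ℝ) ^ 2)⁻¹ :=
    (Real.summable_nat_pow_inv.2 (by norm_num)).mul_left C
  have h2 : ∑' n, μ (if N ≤ n then s n else ∅) ≠ ∞ := by
    refine ne_top_of_le_ne_top hs.tsum_ofReal_ne_top (ENNReal.tsum_le_tsum fun n => ?_)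
    split_ifs with hn
    · exact hN n hn
    · simp
  filter_upwards [ae_eventually_notMem h2] with ω hω
  filter_upwards [hω, eventually_ge_atTop N] with n hn hn'
  rwa [if_pos hn'] at hn

lemma eucl_norm_le_sum {d : ℕ} (x : EuclideanSpace ℝ (Fin d)) : ‖x‖ ≤ ∑ i, |x i| := by
  rw [EuclideanSpace.norm_eq]
  refine Real.sqrt_le_iff.2 ⟨Finset.sum_nonneg fun i _ => abs_nonneg _, ?_⟩
  simp only [Real.norm_eq_abs]
  exact Finset.sum_sq_le_sq_sum_of_nonneg fun i _ => abs_nonneg _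

lemma net_exists {d : ℕ} {R : ℝ} (hR : 0 < R) {m : ℕ} (hm : 1 ≤ m) :
    ∃ t : Finset (EuclideanSpace ℝ (Fin d)), t.card ≤ (m + 1) ^ d ∧
      ∀ x : EuclideanSpace ℝ (Fin d), ‖x‖ ≤ R → ∃ y ∈ t, ‖x - y‖ ≤ d * (2 * R / m) := by
  classical
  let φ : (Fin d → Fin (m + 1)) → EuclideanSpace ℝ (Fin d) :=
    fun j => WithLp.toLp 2 fun i => -R + 2 * R / m * (j i : ℕ)
  have hm0 : (0:ℝ) < m := by exact_mod_cast hm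
  refine ⟨Finset.univ.image φ, ?_, fun x hx => ?_⟩
  · refine Finset.card_image_le.trans ?_
    simp
  · have hxi : ∀ i, |x i| ≤ R := fun i => (PiLp.norm_apply_le x i).trans hx
    have h0 : ∀ i, 0 ≤ (x i + R) / (2 * R / m) := fun i =>
      div_nonneg (by linarith [(abs_le.1 (hxi i)).1]) (by positivity)
    have hle : ∀ i, ⌊(x i + R) / (2 * R / m)⌋₊ < m + 1 := fun i => by
      rw [Nat.lt_succ_iff]
      refine Nat.floor_le_of_le ?_
      rw [div_le_iff₀ (by positivity)]
      have := (abs_le.1 (hxi i)).2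
      field_simp
      linarith
    refine ⟨φ fun i => ⟨⌊(x i + R) / (2 * R / m)⌋₊, hle i⟩, Finset.mem_image_of_mem _ (Finset.mem_univ _), ?_⟩
    refine (eucl_norm_le_sum _).trans ?_
    calc _ ≤ ∑ i : Fin d, 2 * R / m := by
          refine Finset.sum_le_sum fun i _ => ?_
          have h1 := Nat.floor_le (h0 i)
          have h2 := Nat.lt_floor_add_one ((x i + R) / (2 * R / m))
          have hp : 0 < 2 * R / m := by positivity
          rw [le_div_iff₀ hp] at h1
          rw [div_lt_iff₀ hp] at h2
          simp only [φ, PiLp.sub_apply]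
          rw [abs_le]
          constructor <;> nlinarith
      _ = _ := by simp

section proc5
variable {Ω : Type*} [mΩ : MeasurableSpace Ω] {μ : Measure Ω} [IsProbabilityMeasure μ]
  {d : ℕ} {F : ℕ → MeasurableSpace Ω} {η : ℝ} {γ b lam : ℕ → ℝ}
  {f q0 K : EuclideanSpace ℝ (Fin d) → ℝ} {c Cf CK : ℝ} {LK : ℝ≥0}
  {X : ℕ → Ω → EuclideanSpace ℝ (Fin d)} {w : ℕ → Ω → ℝ}
  {g q : ℕ → Ω → EuclideanSpace ℝ (Fin d) → ℝ}

lemma Proc.hS (S : Sched d η γ b lam) (P : Proc μ F η γ b lam f q0 K X w g q)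
    (T : Targ d f q0 K c Cf CK LK) {A : ℝ} (hA : 0 < A) :
    ∀ᵐ ω ∂μ, Tendsto (Sn η γ lam f A (fun n => w n ω) (fun n => q n ω)) atTop (𝓝 0) := by
  obtain ⟨R, v, hr, hk⟩ := P.rateS S T hA
  have h : ∀ m : ℕ, ∀ᵐ ω ∂μ, ∀ᶠ n in atTop,
      |Sn η γ lam f A (fun n => w n ω) (fun n => q n ω) n| < 1 / ((m:ℝ) + 1) := fun m => by
    have h1 := P.tail S T hA.le hr (δ := 1 / ((m:ℝ) + 1)) (by positivity) 2 (by norm_num)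
    have h2 := bc (C := 2) (h1.mono fun n hn => hn _ hk)
    filter_upwards [h2] with ω hω
    filter_upwards [hω] with n hn
    rw [not_le, mul_one] at hn
    have e : Sn η γ lam f A (fun n => w n ω) (fun n => q n ω) n
        = Nk η γ lam f A (fun _ _ => 1) (fun n => X n ω) (fun n => w n ω) (fun n => q n ω) n := by
      simp only [Sn, Nk, one_mul, mul_one]
    rw [e]
    exact hn
  rw [← ae_all_iff] at h
  filter_upwards [h] with ω hω
  rw [Metric.tendsto_nhds]
  intro ε hε
  obtain ⟨m, hm⟩ := exists_nat_one_div_lt hε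
  filter_upwards [hω m] with n hn
  rw [Real.dist_eq, sub_zero]
  exact hn.trans hm

lemma Proc.mlip (S : Sched d η γ b lam) (P : Proc μ F η γ b lam f q0 K X w g q)
    (T : Targ d f q0 K c Cf CK LK) {A : ℝ} (hA : 0 < A) {ω : Ω} (h0 : ∀ n x, 0 ≤ q n ω x)
    (h1 : ∀ n, ∫ x, q n ω x = 1) (n : ℕ) (x x' : EuclideanSpace ℝ (Fin d)) :
    |Mn η γ b lam f K A (fun n => X n ω) (fun n => w n ω) (fun n => q n ω) n x
      - Mn η γ b lam f K A (fun n => X n ω) (fun n => w n ω) (fun n => q n ω) n x'|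
      ≤ ((A / lam n) ^ η + 1) * (LK * (b n ^ d)⁻¹ * (b n)⁻¹ * ‖x - x'‖) := by
  have al : ∀ n, 0 < A / lam n := fun n => div_pos hA (S.lpos n)
  have hη := S.η0
  unfold Mn
  rw [nz_sub]
  have hbn := S.bpos n
  have hln := al n
  refine nz_bdd (by positivity) (fun n => (S.gpos n).le) (fun n => (S.gle n).trans (by norm_num)) n ?_
  intro k hk hkn
  obtain ⟨j, rfl⟩ : ∃ j, k = j + 1 := ⟨k - 1, by omega⟩
  have hbk := S.bpos (j + 1)
  have hlk := al (j + 1)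
  have hqm := (P.qcont T j ω).measurable
  have hpi := phi_int (a := A / lam (j + 1)) hη S.η1 T.f0 (h0 j) hlk.le T.fc.measurable hqm T.fint (P.qint T j ω)
  have hpl := phi_int_le (a := A / lam (j + 1)) hη S.η1 T.f0 (h0 j) hlk.le T.fc.measurable hqm T.fint (P.qint T j ω) T.f1 (h1 j)
  have hpn : ∀ y, 0 ≤ phi f η (A / lam (j + 1)) (q j ω) y := phi_nonneg T.f0 (h0 j) hlk.le
  simp only [Nat.add_sub_cancel]
  set D := LK * (b (j + 1) ^ d)⁻¹ * (b (j + 1))⁻¹ * ‖x - x'‖ with hD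
  have hD0 : 0 ≤ D := by positivity
  have hlip : ∀ y, |kb K (b (j + 1)) (x - y) - kb K (b (j + 1)) (x' - y)| ≤ D := fun y => by
    refine (T.kb_lip hbk _ _).trans_eq ?_
    rw [hD, sub_sub_sub_cancel_right]
  have hw0 : 0 ≤ w (j + 1) ω := by rw [P.hw]; exact div_nonneg (T.f0 _) (h0 _ _)
  have e1 : (min (w (j + 1) ω) (A / lam (j + 1))) ^ η ≤ (A / lam (j + 1)) ^ η :=
    Real.rpow_le_rpow (le_min hw0 hlk.le) (min_le_right _ _) hη.le
  have e0 : 0 ≤ (min (w (j + 1) ω) (A / lam (j + 1))) ^ η := Real.rpow_nonneg (le_min hw0 hlk.le) _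
  have i1 : |(∫ y, kb K (b (j + 1)) (x - y) * phi f η (A / lam (j + 1)) (q j ω) y)
      - ∫ y, kb K (b (j + 1)) (x' - y) * phi f η (A / lam (j + 1)) (q j ω) y| ≤ D := by
    rw [← integral_sub (T.kphi_int hbk x hpi) (T.kphi_int hbk x' hpi), ← Real.norm_eq_abs]
    calc _ ≤ ∫ y, D * phi f η (A / lam (j + 1)) (q j ω) y := by
          refine norm_integral_le_of_norm_le (hpi.const_mul D) (Eventually.of_forall fun y => ?_)
          rw [← sub_mul, norm_mul, Real.norm_eq_abs, Real.norm_of_nonneg (hpn y)]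
          exact mul_le_mul_of_nonneg_right (hlip y) (hpn y)
      _ ≤ D := by rw [integral_const_mul]; exact mul_le_of_le_one_right hD0 hpl
  have i2 : |(min (w (j + 1) ω) (A / lam (j + 1))) ^ η * kb K (b (j + 1)) (x - X (j + 1) ω)
      - (min (w (j + 1) ω) (A / lam (j + 1))) ^ η * kb K (b (j + 1)) (x' - X (j + 1) ω)|
      ≤ (A / lam (j + 1)) ^ η * D := by
    rw [← mul_sub, abs_mul, abs_of_nonneg e0]
    exact mul_le_mul e1 (hlip _) (abs_nonneg _) (e0.trans e1)
  have hDn : D ≤ LK * (b n ^ d)⁻¹ * (b n)⁻¹ * ‖x - x'‖ := by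
    have := S.banti hkn
    rw [hD]; gcongr
  have hAn : (A / lam (j + 1)) ^ η ≤ (A / lam n) ^ η :=
    Real.rpow_le_rpow hlk.le (S.la hA hkn) hη.le
  calc _ = |((min (w (j + 1) ω) (A / lam (j + 1))) ^ η * kb K (b (j + 1)) (x - X (j + 1) ω)
      - (min (w (j + 1) ω) (A / lam (j + 1))) ^ η * kb K (b (j + 1)) (x' - X (j + 1) ω))
      - ((∫ y, kb K (b (j + 1)) (x - y) * phi f η (A / lam (j + 1)) (q j ω) y)
      - ∫ y, kb K (b (j + 1)) (x' - y) * phi f η (A / lam (j + 1)) (q j ω) y)| := by congr 1; ring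
    _ ≤ (A / lam (j + 1)) ^ η * D + D := (abs_sub _ _).trans (add_le_add i2 i1)
    _ = ((A / lam (j + 1)) ^ η + 1) * D := by ring
    _ ≤ _ := by gcongr

lemma Sched.lipc (S : Sched d η γ b lam) {A : ℝ} (hA : 0 < A) (L : ℝ) (hL : 0 ≤ L) :
    ∃ D > (0:ℝ), ∀ n : ℕ, 1 ≤ n →
      ((A / lam n) ^ η + 1) * (L * (b n ^ d)⁻¹ * (b n)⁻¹) ≤ D * n ^ 4 * lam n ^ (1 - η) := by
  obtain ⟨C, C0, hC⟩ := S.poly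
  have hη := S.η0
  have hη1 := S.η1
  refine ⟨(A * C + 2) * L * C * C * C + 1, by positivity, fun n hn => ?_⟩
  have h := hC n hn
  have n1 : (1:ℝ) ≤ n := by exact_mod_cast hn
  have n0 : (0:ℝ) < n := by linarith
  have hl := S.lpos n
  have hl1 : lam n ≤ 1 := (S.lle n).trans (by norm_num)
  have hb := S.bpos n
  have hb1 := S.ble n
  have hbd : b n ^ d ≤ b n := pow_le_of_le_one hb.le hb1 (by have := S.hd; omega)
  have hbd1 : b n ^ d ≤ 1 := hbd.trans hb1
  have hbd0 : 0 < b n ^ d := by positivity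
  have c1 : 1 ≤ C * n * lam n := by
    calc 1 ≤ C * (n * (lam n * b n ^ d)) := h
      _ ≤ C * (n * (lam n * 1)) := by gcongr
      _ = _ := by ring
  have c2 : 1 ≤ C * n * b n ^ d := by
    calc 1 ≤ C * (n * (lam n * b n ^ d)) := h
      _ ≤ C * (n * (1 * b n ^ d)) := by gcongr
      _ = _ := by ring
  have d1 : (b n ^ d)⁻¹ ≤ C * n := by rw [inv_le_iff_one_le_mul₀ hbd0]; exact c2
  have d2 : (b n)⁻¹ ≤ C * n := le_trans (by gcongr) d1
  have d3 : A / lam n ≤ A * (C * n) := by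
    rw [div_le_iff₀ hl]; nlinarith
  have al : 0 < A / lam n := div_pos hA hl
  have d4 : (A / lam n) ^ η ≤ A / lam n + 1 := by
    rcases le_total (A / lam n) 1 with h' | h'
    · exact (Real.rpow_le_one al.le h' hη.le).trans (by linarith)
    · calc _ ≤ (A / lam n) ^ (1:ℝ) := Real.rpow_le_rpow_of_exponent_le h' hη1.le
        _ ≤ _ := by rw [Real.rpow_one]; linarith
  have d5 : (A / lam n) ^ η + 1 ≤ (A * C + 2) * n := by nlinarith
  have d6 : lam n ≤ lam n ^ (1 - η) := by
    calc lam n = lam n ^ (1:ℝ) := (Real.rpow_one _).symm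
      _ ≤ _ := Real.rpow_le_rpow_of_exponent_ge hl hl1 (by linarith)
  calc _ ≤ ((A * C + 2) * n) * (L * (C * n) * (C * n)) := by gcongr
    _ = (A * C + 2) * L * C * C * n ^ 3 * 1 := by ring
    _ ≤ (A * C + 2) * L * C * C * n ^ 3 * (C * n * lam n) := by gcongr
    _ = ((A * C + 2) * L * C * C * C + 0) * n ^ 4 * lam n := by ring
    _ ≤ _ := by gcongr; norm_num

lemma Proc.hM (S : Sched d η γ b lam) (P : Proc μ F η γ b lam f q0 K X w g q)
    (T : Targ d f q0 K c Cf CK LK) {A : ℝ} (hA : 0 < A) :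
    ∀ᵐ ω ∂μ, ∀ R : ℕ, ∀ δ > (0:ℝ), ∀ᶠ n in atTop, ∀ x, ‖x‖ ≤ R →
    |Mn η γ b lam f K A (fun n => X n ω) (fun n => w n ω) (fun n => q n ω) n x| ≤ δ * lam n ^ (1 - η) := by
  obtain ⟨Rr, v, hr, hk⟩ := P.rateM S T hA
  obtain ⟨D, D0, hD⟩ := S.lipc hA LK LK.2
  rw [ae_all_iff]
  intro R
  have h : ∀ m : ℕ, ∀ᵐ ω ∂μ, ∀ᶠ n in atTop, ∀ x, ‖x‖ ≤ R →
      |Mn η γ b lam f K A (fun n => X n ω) (fun n => w n ω) (fun n => q n ω) n x|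
        ≤ 1 / ((m:ℝ) + 1) * lam n ^ (1 - η) := fun m => by
    set δ := 1 / ((m:ℝ) + 1) with hδ
    have δ0 : 0 < δ := by positivity
    have h1 := P.tail S T hA.le hr (δ := δ / 2) (by positivity) (5 * d + 2) (by omega)
    have hnet : ∀ n : ℕ, ∃ t : Finset (EuclideanSpace ℝ (Fin d)), 1 ≤ n →
        (t.card ≤ (n ^ 5 + 1) ^ d ∧
      ∀ x : EuclideanSpace ℝ (Fin d), ‖x‖ ≤ R + 1 → ∃ y ∈ t, ‖x - y‖ ≤ d * (2 * ((R:ℝ) + 1) / (n ^ 5 : ℕ))) := fun n => by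
      by_cases hn : 1 ≤ n
      · obtain ⟨t, ht⟩ := net_exists (d := d) (R := (R:ℝ) + 1) (by positivity) (m := n ^ 5) (Nat.one_le_pow _ _ hn)
        exact ⟨t, fun _ => ht⟩
      · exact ⟨∅, fun h => absurd h hn⟩
    choose t ht using hnet
    have h2 : ∀ᶠ n : ℕ in atTop, μ (⋃ x ∈ t n, {ω | δ / 2 * lam n ^ (1 - η) ≤
        |Mn η γ b lam f K A (fun n => X n ω) (fun n => w n ω) (fun n => q n ω) n x|})
        ≤ ENNReal.ofReal (2 ^ (d + 1) * ((n:ℝ) ^ 2)⁻¹) := by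
      filter_upwards [h1, eventually_ge_atTop 1] with n hn hn1
      have n1 : (1:ℝ) ≤ n := by exact_mod_cast hn1
      calc _ ≤ ∑ x ∈ t n, μ {ω | δ / 2 * lam n ^ (1 - η) ≤
        |Mn η γ b lam f K A (fun n => X n ω) (fun n => w n ω) (fun n => q n ω) n x|} :=
            measure_biUnion_finset_le _ _
        _ ≤ ∑ x ∈ t n, ENNReal.ofReal (2 * ((n:ℝ) ^ (5 * d + 2))⁻¹) :=
            Finset.sum_le_sum fun x _ => hn _ (hk x)
        _ = ENNReal.ofReal ((t n).card * (2 * ((n:ℝ) ^ (5 * d + 2))⁻¹)) := by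
            rw [Finset.sum_const, nsmul_eq_mul, ENNReal.ofReal_mul (p := ((t n).card : ℝ)) (by positivity), ENNReal.ofReal_natCast]
        _ ≤ _ := by
            apply ENNReal.ofReal_le_ofReal
            have hc : ((t n).card : ℝ) ≤ 2 ^ d * (n:ℝ) ^ (5 * d) := by
              calc ((t n).card : ℝ) ≤ (((n ^ 5 + 1) ^ d : ℕ) : ℝ) := by exact_mod_cast (ht n hn1).1
                _ = ((n:ℝ) ^ 5 + 1) ^ d := by push_cast; ring
                _ ≤ ((n:ℝ) ^ 5 + (n:ℝ) ^ 5) ^ d := by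
                  have := one_le_pow₀ (n := 5) n1
                  gcongr
                _ = _ := by rw [← two_mul, mul_pow, ← pow_mul]
            calc _ ≤ 2 ^ d * (n:ℝ) ^ (5 * d) * (2 * ((n:ℝ) ^ (5 * d + 2))⁻¹) := by gcongr
              _ = _ := by rw [pow_add, pow_add]; field_simp
    have h3 := bc h2
    obtain ⟨N0, hN0⟩ := exists_nat_ge (D * d * (2 * ((R:ℝ) + 1)) / (δ / 2))
    filter_upwards [h3, P.qnn T, P.q1] with ω hω hq0 hq1
    filter_upwards [hω, eventually_ge_atTop 1, eventually_ge_atTop N0] with n hn hn1 hnN x hx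
    have n1 : (1:ℝ) ≤ n := by exact_mod_cast hn1
    have n0 : (0:ℝ) < n := by linarith
    obtain ⟨y, hy, hxy⟩ := (ht n hn1).2 x (by linarith)
    have l1 := P.mlip S T hA hq0 hq1 n x y
    simp only [Set.mem_iUnion, Set.mem_ofPred_eq, not_exists, not_le] at hn
    have l2 := hn y hy
    have τ0 : 0 < lam n ^ (1 - η) := Real.rpow_pos_of_pos (S.lpos n) _
    have l3 : ((A / lam n) ^ η + 1) * (LK * (b n ^ d)⁻¹ * (b n)⁻¹ * ‖x - y‖) ≤ δ / 2 * lam n ^ (1 - η) := by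
      calc _ = ((A / lam n) ^ η + 1) * (LK * (b n ^ d)⁻¹ * (b n)⁻¹) * ‖x - y‖ := by ring
        _ ≤ (D * n ^ 4 * lam n ^ (1 - η)) * (d * (2 * ((R:ℝ) + 1) / (n ^ 5 : ℕ))) := by
            have := hD n hn1
            exact mul_le_mul this hxy (norm_nonneg _) (by positivity)
        _ = D * d * (2 * ((R:ℝ) + 1)) / n * lam n ^ (1 - η) := by push_cast; field_simp
        _ ≤ _ := by
            refine mul_le_mul_of_nonneg_right ?_ τ0.le
            rw [div_le_iff₀ n0]
            have : (N0:ℝ) ≤ n := by exact_mod_cast hnN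
            rw [div_le_iff₀ (by positivity)] at hN0
            nlinarith
    have l4 := abs_sub_abs_le_abs_sub (Mn η γ b lam f K A (fun n => X n ω) (fun n => w n ω) (fun n => q n ω) n x)
      (Mn η γ b lam f K A (fun n => X n ω) (fun n => w n ω) (fun n => q n ω) n y)
    linarith
  rw [← ae_all_iff] at h
  filter_upwards [h] with ω hω δ hδ
  obtain ⟨m, hm⟩ := exists_nat_one_div_lt hδ
  filter_upwards [hω m] with n hn x hx
  have τ0 : 0 < lam n ^ (1 - η) := Real.rpow_pos_of_pos (S.lpos n) _
  exact (hn x hx).trans (mul_le_mul_of_nonneg_right hm.le τ0.le)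

end proc5

set_option linter.unusedSectionVars false

lemma sched_shift {d : ℕ} (hd : 1 ≤ d) {η : ℝ} (hη : 0 < η) (hη1 : η < 1) (γ b lam : ℕ → ℝ)
    (hγpos : ∀ n, 0 < γ n) (hbpos : ∀ n, 0 < b n) (hlampos : ∀ n, 0 < lam n)
    (hγ0 : Tendsto γ atTop (nhds 0))
    (hbanti : Antitone b) (hb0 : Tendsto b atTop (nhds 0))
    (hlamanti : Antitone lam) (hlam0 : Tendsto lam atTop (nhds 0))
    (hγrate : ∃ Cγ > (0:ℝ), ∃ nγ : ℕ, 1 ≤ nγ ∧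
      (∀ n : ℕ, 1 ≤ n → ((n : ℝ))⁻¹ ≤ Cγ * γ n) ∧
      (∀ n : ℕ, nγ ≤ n → γ n - γ (n+1) ≤ γ n * γ (n+1)))
    (hrate1 : 1/2 ≤ η → Tendsto
      (fun n : ℕ => (n : ℝ) * γ n ^ 2 * Real.log n / (lam n * b n ^ d))
      atTop (nhds 0))
    (hrate2 : η < 1/2 → Tendsto
      (fun n : ℕ => (n : ℝ) * γ n ^ 2 * Real.log n
        / (lam n ^ (2 * (1 - η)) * b n ^ (2 * (d : ℝ) * (1 - η))))
      atTop (nhds 0)) :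
    ∃ N : ℕ, 1 ≤ N ∧ Sched d η (fun n => γ (N + n)) (fun n => b (N + n)) (fun n => lam (N + n)) := by
  obtain ⟨C, C0, nγ, -, hC, hstep⟩ := hγrate
  have lg : ∀ n : ℕ, 0 ≤ (n:ℝ) * γ n ^ 2 * Real.log n := fun n => by
    have := Real.log_natCast_nonneg n
    positivity
  have eb : ∀ᶠ n in atTop, b n ≤ 1 := hb0.eventually (ge_mem_nhds one_pos)
  have el : ∀ᶠ n in atTop, lam n ≤ 1 / 2 := hlam0.eventually (ge_mem_nhds (by norm_num))
  have eg : ∀ᶠ n in atTop, γ n ≤ 1 / 2 := hγ0.eventually (ge_mem_nhds (by norm_num))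
  have r1 : Tendsto (fun n : ℕ => (n : ℝ) * γ n ^ 2 * Real.log n / (lam n * b n ^ d)) atTop (nhds 0) := by
    rcases le_or_gt (1 / 2) η with h | h
    · exact hrate1 h
    · refine squeeze_zero' (Eventually.of_forall fun n => div_nonneg (lg n) ?_) ?_ (hrate2 h)
      · have := hlampos n
        have := hbpos n
        positivity
      · filter_upwards [eb, el] with n hb hl
        have l0 := hlampos n
        have b0 := hbpos n
        refine div_le_div_of_nonneg_left (lg n) (by positivity) ?_
        apply mul_le_mul
        · calc _ ≤ lam n ^ (1:ℝ) := Real.rpow_le_rpow_of_exponent_ge l0 (by linarith) (by linarith)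
            _ = _ := Real.rpow_one _
        · calc _ ≤ b n ^ (d:ℝ) := by
                refine Real.rpow_le_rpow_of_exponent_ge b0 hb ?_
                have : (0:ℝ) ≤ d := Nat.cast_nonneg d
                nlinarith
            _ = _ := Real.rpow_natCast _ _
        · positivity
        · positivity
  have e1 : ∀ᶠ n : ℕ in atTop, (n : ℝ) * γ n ^ 2 * Real.log n / (lam n * b n ^ d) ≤ 1 :=
    r1.eventually (ge_mem_nhds one_pos)
  obtain ⟨N, hN⟩ := eventually_atTop.1 (eb.and (el.and (eg.and (e1.and
    ((eventually_ge_atTop 3).and (eventually_ge_atTop nγ))))))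
  have hN' : ∀ n, b (N + n) ≤ 1 ∧ lam (N + n) ≤ 1 / 2 ∧ γ (N + n) ≤ 1 / 2 ∧
      ((N + n : ℕ) : ℝ) * γ (N + n) ^ 2 * Real.log (N + n : ℕ) / (lam (N + n) * b (N + n) ^ d) ≤ 1 ∧
      3 ≤ N + n ∧ nγ ≤ N + n := fun n => hN _ (by omega)
  have hN3 : 3 ≤ N := (hN' 0).2.2.2.2.1
  have tN : Tendsto (fun n : ℕ => N + n) atTop atTop := tendsto_atTop_mono (fun n => Nat.le_add_left n N) tendsto_id
  have lg1 : ∀ n : ℕ, 3 ≤ n → 1 ≤ Real.log n := fun n hn => by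
    rw [Real.le_log_iff_exp_le (by positivity)]
    have := Real.exp_one_lt_d9
    have : (3:ℝ) ≤ n := by exact_mod_cast hn
    linarith
  have Ng : ∀ n : ℕ, 1 ≤ n → 1 ≤ C * (n * γ n) := fun n hn => by
    have n0 : (0:ℝ) < n := by exact_mod_cast hn
    have := hC n hn
    rw [inv_le_iff_one_le_mul₀ n0] at this
    linarith
  have NN : ∀ n : ℕ, 1 ≤ n → ((N + n : ℕ) : ℝ) ≤ (N + 1) * n := fun n hn => by
    have n0 : (1:ℝ) ≤ n := by exact_mod_cast hn
    have : (0:ℝ) ≤ N := Nat.cast_nonneg N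
    push_cast
    nlinarith
  have shift : ∀ z : ℕ → ℝ, (∀ n, 0 ≤ z n) →
      Tendsto (fun n : ℕ => (n : ℝ) * γ n ^ 2 * Real.log n / z n) atTop (𝓝 0) →
      Tendsto (fun n : ℕ => (n : ℝ) * γ (N + n) ^ 2 * Real.log n / z (N + n)) atTop (𝓝 0) := by
    intro z hz ht
    refine squeeze_zero (fun n => ?_) (fun n => ?_) (ht.comp tN)
    · have := Real.log_natCast_nonneg n
      have := hz (N + n)
      positivity
    · have := Real.log_natCast_nonneg n
      have hz' := hz (N + n)
      simp only [Function.comp]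
      have hc : (n:ℝ) ≤ ((N + n : ℕ) : ℝ) := by push_cast; linarith [(Nat.cast_nonneg N : (0:ℝ) ≤ N)]
      have hlog : Real.log n ≤ Real.log ((N + n : ℕ) : ℝ) := by
        rcases Nat.eq_zero_or_pos n with h | h
        · subst h; simp only [Nat.cast_zero, Real.log_zero]; exact Real.log_natCast_nonneg _
        · exact Real.log_le_log (by exact_mod_cast h) hc
      gcongr
  refine ⟨N, by omega, ?_⟩
  refine
    { hd := hd, η0 := hη, η1 := hη1, gpos := fun n => hγpos _, gle := fun n => (hN' n).2.2.1
      gstep := fun n => ?_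
      g0 := hγ0.comp tN, bpos := fun n => hbpos _, ble := fun n => (hN' n).1
      banti := fun m n h => hbanti (by omega), b0 := hb0.comp tN
      lpos := fun n => hlampos _, lle := fun n => (hN' n).2.1
      lanti := fun m n h => hlamanti (by omega), l0 := hlam0.comp tN
      gl := ?_, gn := ?_, poly := ?_
      rate1 := fun h => shift _ (fun n => ?_) (hrate1 h)
      rate2 := fun h => shift (fun n => lam n ^ (2 * (1 - η)) * b n ^ (2 * (d : ℝ) * (1 - η))) (fun n => ?_) (hrate2 h) }
  · have := hstep (N + n) (hN' n).2.2.2.2.2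
    show γ (N + n) * (1 - γ (N + n + 1)) ≤ γ (N + n + 1)
    linarith
  · have h2 := (r1.comp tN).const_mul C
    rw [mul_zero] at h2
    refine squeeze_zero (fun n => div_nonneg (hγpos _).le (hlampos _).le) (fun n => ?_) h2
    have l0 := hlampos (N + n)
    have g0 := hγpos (N + n)
    have b0 := hbpos (N + n)
    have b1 : b (N + n) ^ d ≤ 1 := pow_le_one₀ b0.le (hN' n).1
    have h3 := Ng (N + n) (by omega)
    have h4 := lg1 (N + n) (hN' n).2.2.2.2.1
    simp only [Function.comp]
    calc γ (N + n) / lam (N + n) = 1 * γ (N + n) * 1 / (lam (N + n) * 1) := by simp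
      _ ≤ (C * ((N + n : ℕ) * γ (N + n))) * γ (N + n) * Real.log (N + n : ℕ) / (lam (N + n) * b (N + n) ^ d) := by
        gcongr
      _ = _ := by ring
  · refine ⟨C * (N + 1), by positivity, fun n hn => ?_⟩
    have h3 := Ng (N + n) (by omega)
    have g0 := hγpos (N + n)
    calc 1 ≤ C * (((N + n : ℕ) : ℝ) * γ (N + n)) := h3
      _ ≤ C * ((N + 1) * n * γ (N + n)) := by
        have := NN n hn
        gcongr
      _ = _ := by ring
  · refine ⟨C ^ 2 * (N + 1), by positivity, fun n hn => ?_⟩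
    have h3 := Ng (N + n) (by omega)
    have g0 := hγpos (N + n)
    have l0 := hlampos (N + n)
    have b0 := hbpos (N + n)
    have h4 := lg1 (N + n) (hN' n).2.2.2.2.1
    have h5 := (hN' n).2.2.2.1
    rw [div_le_one (by positivity)] at h5
    have n1 : (1:ℝ) ≤ ((N + n : ℕ) : ℝ) := by exact_mod_cast (by omega : 1 ≤ N + n)
    have n0 : (0:ℝ) < ((N + n : ℕ) : ℝ) := by linarith
    calc 1 ≤ (C * (((N + n : ℕ) : ℝ) * γ (N + n))) ^ 2 := one_le_pow₀ h3
      _ = C ^ 2 * (((N + n : ℕ) : ℝ) * (((N + n : ℕ) : ℝ) * γ (N + n) ^ 2 * 1)) := by ring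
      _ ≤ C ^ 2 * (((N + n : ℕ) : ℝ) * (((N + n : ℕ) : ℝ) * γ (N + n) ^ 2 * Real.log (N + n : ℕ))) := by gcongr
      _ ≤ C ^ 2 * ((N + 1) * n * (lam (N + n) * b (N + n) ^ d)) := by
        have := NN n hn
        gcongr
      _ = _ := by ring
  · have := hlampos n
    have := hbpos n
    positivity
  · have := hlampos n
    have := hbpos n
    positivity

lemma natFilt_mono {Ω : Type*} {d : ℕ} (X : ℕ → Ω → EuclideanSpace ℝ (Fin d)) : Monotone (natFilt X) := by
  intro m n h
  refine iSup₂_le fun i hi => ?_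
  refine le_iSup₂_of_le i ?_ le_rfl
  rw [Finset.mem_Icc] at hi ⊢
  omega

lemma natFilt_le {Ω : Type*} [mΩ : MeasurableSpace Ω] {d : ℕ} {X : ℕ → Ω → EuclideanSpace ℝ (Fin d)}
    (hX : ∀ n, Measurable (X n)) (n : ℕ) : natFilt X n ≤ mΩ :=
  iSup₂_le fun i _ => (hX i).comap_le

lemma natFilt_meas {Ω : Type*} {d : ℕ} (X : ℕ → Ω → EuclideanSpace ℝ (Fin d)) {n : ℕ} (hn : 1 ≤ n) :
    Measurable[natFilt X n] (X n) := by
  have h : MeasurableSpace.comap (X n) inferInstance ≤ natFilt X n :=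
    le_iSup₂_of_le (f := fun i (_ : i ∈ Finset.Icc 1 n) => MeasurableSpace.comap (X i) inferInstance) n
      (Finset.mem_Icc.2 ⟨hn, le_rfl⟩) le_rfl
  exact (comap_measurable (X n)).mono h le_rfl

theorem midas_L1_convergence
    {Ω : Type*} [MeasurableSpace Ω] (μ : Measure Ω) [IsProbabilityMeasure μ]
    {d : ℕ} (hd : 1 ≤ d) {η : ℝ} (hη : 0 < η) (hη1 : η < 1)
    (f q0 K : EuclideanSpace ℝ (Fin d) → ℝ)
    (γ b lam : ℕ → ℝ)
    (X : ℕ → Ω → EuclideanSpace ℝ (Fin d))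
    (w : ℕ → Ω → ℝ)
    (g q : ℕ → Ω → EuclideanSpace ℝ (Fin d) → ℝ)
    (hf0 : ∀ x, 0 ≤ f x) (hfint1 : (∫ x, f x) = 1)
    (hK0 : ∀ x, 0 ≤ K x) (hKint1 : (∫ x, K x) = 1)
    (hγpos : ∀ n, 0 < γ n) (hbpos : ∀ n, 0 < b n) (hlampos : ∀ n, 0 < lam n)
    (hX : ∀ n, Measurable (X n))
    (hqmeas : ∀ n, Measurable (Function.uncurry (q n)))
    (hg0 : ∀ (ω : Ω) x, g 0 ω x = 0)
    (hw : ∀ n (ω : Ω), w (n+1) ω = f (X (n+1) ω) / q n ω (X (n+1) ω))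
    (hgrec : ∀ n (ω : Ω) x, g (n+1) ω x
      = (1 - γ (n+1)) * g n ω x
        + γ (n+1) * w (n+1) ω ^ η * kb K (b (n+1)) (x - X (n+1) ω))
    (hqrec : ∀ n (ω : Ω) x, q (n+1) ω x
      = (1 - lam (n+1)) * (g (n+1) ω x / (∫ y, g (n+1) ω y)) + lam (n+1) * q0 x)
    (hpolicy : ∀ n (φ : EuclideanSpace ℝ (Fin d) → ℝ), Continuous φ →
      (∃ C, ∀ x, |φ x| ≤ C) →
      (μ[fun ω => φ (X (n+1) ω) | natFilt X n]) =ᵐ[μ] (fun ω => ∫ y, φ y * q n ω y))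
    (hadapt : ∀ n x, Measurable[natFilt X n] fun ω => q n ω x)
    (hfbdd : ∃ C, ∀ x, f x ≤ C) (hfcont : Continuous f)
    (hfInt : Integrable f)
    (hq00 : ∀ x, 0 ≤ q0 x) (hq0bdd : ∃ C, ∀ x, q0 x ≤ C) (hq0cont : Continuous q0)
    (hq0Int : Integrable q0) (hq0int1 : (∫ x, q0 x) = 1)
    (hftail : ∃ r > (0:ℝ), ∃ Cf > (0:ℝ), ∀ t : ℝ, 0 < t →
      (∫ x in {x : EuclideanSpace ℝ (Fin d) | t < ‖x‖}, f x) ≤ Cf * t ^ (-r))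
    (hfq0 : ∃ c > (0:ℝ), ∀ x, c * f x ≤ q0 x)
    (hKbdd : ∃ C, ∀ x, K x ≤ C) (hKlip : ∃ L : NNReal, LipschitzWith L K)
    (hKpos : 0 < K 0)
    (hKtail : ∃ rK > (0:ℝ), ∃ CK > (0:ℝ), ∀ x,
      (1 + ‖x‖ ^ ((d : ℝ) + rK)) * K x ≤ CK)
    (hγanti : Antitone γ) (hγ0 : Tendsto γ atTop (nhds 0))
    (hbanti : Antitone b) (hb0 : Tendsto b atTop (nhds 0))
    (hlamanti : Antitone lam) (hlam0 : Tendsto lam atTop (nhds 0))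
    (hγrate : ∃ Cγ > (0:ℝ), ∃ nγ : ℕ, 1 ≤ nγ ∧
      (∀ n : ℕ, 1 ≤ n → ((n : ℝ))⁻¹ ≤ Cγ * γ n) ∧
      (∀ n : ℕ, nγ ≤ n → γ n - γ (n+1) ≤ γ n * γ (n+1)))
    (hγsq : Summable fun n => γ n ^ 2)
    (hrate1 : 1/2 ≤ η → Tendsto
      (fun n : ℕ => (n : ℝ) * γ n ^ 2 * Real.log n / (lam n * b n ^ d))
      atTop (nhds 0))
    (hrate2 : η < 1/2 → Tendsto
      (fun n : ℕ => (n : ℝ) * γ n ^ 2 * Real.log n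
        / (lam n ^ (2 * (1 - η)) * b n ^ (2 * (d : ℝ) * (1 - η))))
      atTop (nhds 0))
    :
    ∀ᵐ ω ∂μ, Tendsto (fun n : ℕ => ∫ x, |q n ω x - f x|) atTop (nhds 0) := by
  obtain ⟨N, hN, S⟩ := sched_shift hd hη hη1 γ b lam hγpos hbpos hlampos hγ0 hbanti hb0 hlamanti hlam0
    hγrate hrate1 hrate2
  obtain ⟨Cf, hCf⟩ := hfbdd
  obtain ⟨CK, hCK⟩ := hKbdd
  obtain ⟨LK, hLK⟩ := hKlip
  obtain ⟨c, c0, hc⟩ := hfq0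
  have hKi : Integrable K := by
    by_contra h
    rw [integral_undef h] at hKint1
    exact zero_ne_one hKint1
  have T : Targ d f q0 K c Cf CK LK :=
    { f0 := hf0, fint := hfInt, f1 := hfint1, fC := hCf, fc := hfcont, q00 := hq00, q0int := hq0Int
      q01 := hq0int1, q0c := hq0cont, c0 := c0, cf := hc, K0 := hK0, Kint := hKi, K1 := hKint1
      KC := hCK, KL := hLK, Kp := hKpos }
  have gci : ∀ n ω, Continuous (g n ω) ∧ Integrable (g n ω) := by
    intro n ω
    induction n with
    | zero =>
      have : g 0 ω = fun _ => 0 := funext (hg0 ω)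
      rw [this]
      exact ⟨continuous_const, integrable_zero _ _ _⟩
    | succ n ih =>
      have e : g (n + 1) ω = fun x => (1 - γ (n+1)) * g n ω x
        + γ (n+1) * w (n+1) ω ^ η * kb K (b (n+1)) (x - X (n+1) ω) := funext (hgrec n ω)
      rw [e]
      refine ⟨?_, ?_⟩
      · exact (ih.1.const_mul _).add (((T.kb_cont _).comp (by fun_prop)).const_mul _)
      · exact (ih.2.const_mul _).add (((kb_integrable hKi (hbpos _)).comp_sub_right _).const_mul _)
  have P : Proc μ (fun n => natFilt X (N + n)) η (fun n => γ (N + n)) (fun n => b (N + n))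
      (fun n => lam (N + n)) f q0 K (fun n => X (N + n)) (fun n => w (N + n)) (fun n => g (N + n))
      (fun n => q (N + n)) :=
    { Fle := fun n => natFilt_le hX _
      Fmono := fun m n h => natFilt_mono X (by omega)
      XF := fun n => natFilt_meas X (by omega)
      hw := fun n ω => hw (N + n) ω
      hg := fun n ω x => hgrec (N + n) ω x
      hq := fun n ω x => by
        obtain ⟨j, hj⟩ : ∃ j, N + n = j + 1 := ⟨N + n - 1, by omega⟩
        simp only [hj]
        exact hqrec j ω x
      gcont := fun n ω => (gci _ ω).1
      gint := fun n ω => (gci _ ω).2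
      qm := fun n x => hadapt _ x
      pol := fun n φ h1 h2 => hpolicy (N + n) φ h1 h2 }
  have hA : 0 < 2 / c := by positivity
  filter_upwards [P.qnn T, P.q1, P.P1 S T, P.P2 S T, P.hM S T hA, P.hS S T hA] with ω a1 a2 a3 a4 a5 a6
  have J : Traj η (fun n => γ (N + n)) (fun n => b (N + n))
      (fun n => lam (N + n)) f q0 K c (fun n => X (N + n) ω) (fun n => w (N + n) ω) (fun n => g (N + n) ω)
      (fun n => q (N + n) ω) :=
    { hw := fun n => P.hw n ω
      hg := fun n x => P.hg n ω x
      hq := fun n x => P.hq n ω x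
      qnn := a1
      q1 := a2
      gint := fun n => P.gint n ω
      gcont := fun n => P.gcont n ω
      P1 := a3
      P2 := a4
      hM := a5
      hS := a6 }
  have h := J.main S T
  rw [← tendsto_add_atTop_iff_nat N]
  refine h.congr fun n => ?_
  rw [add_comm N n]
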